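/- arXiv:1812.00247 — 4 statements merged into one kernel-verified Lean document; each statement's English description precedes it below -/
import Mathlib

section
/- Let L be an n-dimensional nilpotent Lie algebra over a field with derived subalgebra of dimension m ≥ 1 and nilpotency class c. Then the dimension of the Schur multiplier M(L) satisfies dim M(L) ≤ (1/2)(n−m−1)(n+m) − Σ_{i=2}^{min(n−m,c)} (n−m−i). -/
open Module

/-- The dimension of the Schur multiplier `M(L) = (R ∩ F²)/[R,F]` of a Lie algebra `L`,
computed from a free presentation `π : FreeLieAlgebra K X → L` (with `R = ker π` and
`F² = [F,F]`). -/
noncomputable def lieSchurMultiplierDim (K : Type) [Field K] (X : Type) {L : Type}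
    [LieRing L] [LieAlgebra K L] (π : FreeLieAlgebra K X →ₗ⁅K⁆ L) : ℕ :=
  let F := FreeLieAlgebra K X
  let R : LieIdeal K F := π.ker
  let F2 : LieIdeal K F := LieModule.lowerCentralSeries K F F 1
  Module.finrank K
    (↥((R ⊓ F2 : LieIdeal K F) : Submodule K F) ⧸
      (Submodule.comap ((R ⊓ F2 : LieIdeal K F) : Submodule K F).subtype
        ((⁅R, (⊤ : LieIdeal K F)⁆ : LieIdeal K F) : Submodule K F)))

/-- `L` is nilpotent of nilpotency class exactly `c`: in the paper's notation
`γ_{c+1}(L) = 0` and `γ_k(L) ≠ 0` for `k ≤ c` (Mathlib's `lowerCentralSeries` is indexed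
so that `γ_{k+1}(L) = lowerCentralSeries K L L k`). -/
def lieNilpotencyClass (K : Type) [Field K] (L : Type) [LieRing L] [LieAlgebra K L]
    (c : ℕ) : Prop :=
  LieModule.lowerCentralSeries K L L c = ⊥ ∧
    ∀ k < c, LieModule.lowerCentralSeries K L L k ≠ ⊥

/-- The dimension of the derived subalgebra `L² = [L,L]`. -/
noncomputable def lieDerivedDim (K : Type) [Field K] (L : Type) [LieRing L]
    [LieAlgebra K L] : ℕ :=
  Module.finrank K
    ↥((LieModule.lowerCentralSeries K L L 1 : LieSubmodule K L L) : Submodule K L)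

/-- Rai's upper bound `(1/2)(n−m−1)(n+m) − Σ_{i=2}^{min(n−m,c)} (n−m−i)`. -/
def raiBound (n m c : ℕ) : ℤ :=
  ((n : ℤ) - m - 1) * ((n : ℤ) + m) / 2
    - ∑ i ∈ Finset.Icc 2 (min (n - m) c), ((n : ℤ) - m - (i : ℤ))


namespace RaiBound

section LinAlg
variable {K G H : Type} [Field K] [AddCommGroup G] [Module K G] [AddCommGroup H] [Module K H]

lemma finrank_map₂_le {M : Type} [AddCommGroup M] [Module K M] (f : G →ₗ[K] H →ₗ[K] M)
    (p : Submodule K G) (q : Submodule K H) [FiniteDimensional K p] [FiniteDimensional K q] :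
    FiniteDimensional K (Submodule.map₂ f p q) ∧
      finrank K (Submodule.map₂ f p q) ≤ finrank K p * finrank K q := by
  rw [TensorProduct.map₂_eq_range_lift_comp_mapIncl]
  refine ⟨inferInstance, ?_⟩
  refine (LinearMap.finrank_range_le _).trans ?_
  rw [Module.finrank_tensorProduct]

lemma exists_lift [FiniteDimensional K H] (f : G →ₗ[K] H) (Vg : Submodule K G)
    (V W : Submodule K H) (hV : Vg.map f = V) (hW : W ≤ V) :
    ∃ A : Submodule K G, A ≤ Vg ∧ FiniteDimensional K A ∧
      finrank K A + finrank K W = finrank K V ∧ ∀ x ∈ Vg, ∃ a ∈ A, f x - f a ∈ W := by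
  obtain ⟨C, hdis, hsup⟩ := IsModularLattice.exists_disjoint_and_sup_eq hW
  have hCV : C ≤ V := hsup ▸ le_sup_right
  let g : Vg →ₗ[K] V := f.restrict (p := Vg) (q := V) (fun x hx => hV ▸ ⟨x, hx, rfl⟩)
  have hg : LinearMap.range g = ⊤ := by
    rw [LinearMap.range_eq_top]
    rintro ⟨y, hy⟩
    rw [← hV] at hy
    obtain ⟨x, hx, rfl⟩ := hy
    exact ⟨⟨x, hx⟩, rfl⟩
  obtain ⟨s, hs⟩ := g.exists_rightInverse_of_surjective hg
  have hs' : ∀ v : V, f (s v : G) = v := fun v => by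
    have := LinearMap.congr_fun hs v
    exact congrArg Subtype.val this
  let t : C →ₗ[K] G := Vg.subtype ∘ₗ s ∘ₗ Submodule.inclusion hCV
  have ht : ∀ v : C, f (t v) = v := fun v => hs' _
  have htinj : Function.Injective t := by
    intro a b h
    apply Subtype.ext
    rw [← ht a, ← ht b, h]
  refine ⟨LinearMap.range t, ?_, inferInstance, ?_, ?_⟩
  · rintro _ ⟨c, rfl⟩
    exact (s (Submodule.inclusion hCV c)).2
  · rw [LinearMap.finrank_range_of_inj htinj]
    have := Submodule.finrank_sup_add_finrank_inf_eq W C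
    rw [hdis.eq_bot, finrank_bot, hsup] at this
    omega
  · intro x hx
    have : f x ∈ W ⊔ C := by rw [hsup, ← hV]; exact ⟨x, hx, rfl⟩
    obtain ⟨w, hw, c, hc, e⟩ := Submodule.mem_sup.1 this
    refine ⟨t ⟨c, hc⟩, ⟨_, rfl⟩, ?_⟩
    rw [ht, ← e]
    simpa using hw

end LinAlg

section Lie
variable (K : Type) (G : Type) [Field K] [LieRing G] [LieAlgebra K G]

/-- The bracket as a bilinear map. -/
def brk : G →ₗ[K] G →ₗ[K] G :=
  LinearMap.mk₂ K (fun x y => ⁅x, y⁆) (by simp) (by simp) (by simp) (by simp)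

/-- Lower central series as submodules. -/
def gam (k : ℕ) : Submodule K G := (LieModule.lowerCentralSeries K G G k).toSubmodule

variable {K G}

@[simp] lemma brk_apply (x y : G) : brk K G x y = ⁅x, y⁆ := rfl

lemma gam_succ (k : ℕ) : gam K G (k+1) = Submodule.map₂ (brk K G) (gam K G k) ⊤ := by
  unfold gam
  rw [LieModule.lowerCentralSeries_succ, LieSubmodule.lieIdeal_oper_eq_linear_span']
  apply le_antisymm
  · rw [Submodule.span_le]
    rintro _ ⟨x, -, n, hn, rfl⟩
    rw [← lie_skew]
    exact neg_mem (Submodule.apply_mem_map₂ (brk K G) hn Submodule.mem_top)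
  · rw [Submodule.map₂_le]
    intro n hn x _
    rw [brk_apply, ← lie_skew]
    exact neg_mem (Submodule.subset_span ⟨x, LieSubmodule.mem_top _, n, hn, rfl⟩)

lemma gam_zero : gam K G 0 = ⊤ := by simp [gam]

lemma lie_mem_gam {k : ℕ} {x : G} (hx : x ∈ gam K G k) (y : G) : ⁅x, y⁆ ∈ gam K G (k+1) := by
  rw [gam_succ]
  exact Submodule.apply_mem_map₂ (brk K G) hx Submodule.mem_top

lemma lie_mem_gam' {k : ℕ} {x : G} (hx : x ∈ gam K G k) (y : G) : ⁅y, x⁆ ∈ gam K G (k+1) := by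
  rw [← lie_skew]
  exact neg_mem (lie_mem_gam hx y)

lemma gam_le_succ (k : ℕ) : gam K G (k+1) ≤ gam K G k :=
  LieModule.antitone_lowerCentralSeries K G G (Nat.le_succ k)

lemma lie_gam_one {k : ℕ} {x y : G} (hx : x ∈ gam K G k) (hy : y ∈ gam K G 1) :
    ⁅x, y⁆ ∈ gam K G (k+2) := by
  have : gam K G 1 ≤ (gam K G (k+2)).comap (brk K G x) := by
    rw [gam_succ, Submodule.map₂_le]
    intro a _ b _
    simp only [Submodule.mem_comap, brk_apply]
    rw [leibniz_lie]
    exact add_mem (lie_mem_gam (lie_mem_gam hx _) _) (lie_mem_gam' (lie_mem_gam hx _) _)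
  exact this hy

/-- Left-normed brackets of elements of `B`, with the span of the entries. -/
inductive LN (B : Submodule K G) : ℕ → G → Submodule K G → Prop
  | base (x : G) (hx : x ∈ B) : LN B 0 x (Submodule.span K {x})
  | step (i : ℕ) (w : G) (S : Submodule K G) (x : G) (h : LN B i w S) (hx : x ∈ B) :
      LN B (i+1) ⁅w, x⁆ (S ⊔ Submodule.span K {x})

lemma LN.fin {B S : Submodule K G} {i : ℕ} {w : G} (h : LN B i w S) :
    FiniteDimensional K S ∧ finrank K S ≤ i + 1 := by
  induction h with
  | base x hx =>
    exact ⟨inferInstance, by simpa using finrank_span_le_card (R := K) ({x} : Set G)⟩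
  | step i w S x h hx ih =>
    obtain ⟨h1, h2⟩ := ih
    refine ⟨inferInstance, ?_⟩
    have h3 := Submodule.finrank_add_le_finrank_add_finrank S (Submodule.span K {x})
    have h4 : finrank K (Submodule.span K {x}) ≤ 1 := by
      simpa using finrank_span_le_card (R := K) ({x} : Set G)
    omega

lemma LN.le {B S : Submodule K G} {i : ℕ} {w : G} (h : LN B i w S) : S ≤ B := by
  induction h with
  | base x hx => simpa [Submodule.span_le] using hx
  | step i w S x h hx ih => exact sup_le ih (by simpa [Submodule.span_le] using hx)

lemma LN.mem {B S : Submodule K G} {i : ℕ} {w : G} (h : LN B i w S) : w ∈ gam K G i := by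
  induction h with
  | base x hx => simp [gam_zero]
  | step i w S x h hx ih => exact lie_mem_gam ih x

lemma LN.lie {B S : Submodule K G} {i : ℕ} {w : G} (h : LN B i w S) :
    ∀ (k : ℕ) (z : G), z ∈ gam K G k →
      ⁅w, z⁆ ∈ Submodule.map₂ (brk K G) (gam K G (i+k)) S := by
  induction h with
  | base x hx =>
    intro k z hz
    rw [← lie_skew, zero_add]
    exact neg_mem (Submodule.apply_mem_map₂ (brk K G) hz (Submodule.mem_span_singleton_self x))
  | step i w S x h hx ih =>
    intro k z hz
    have e : ⁅⁅w, x⁆, z⁆ = ⁅w, ⁅x, z⁆⁆ + ⁅⁅w, z⁆, x⁆ := by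
      rw [lie_lie w x z, ← lie_skew x ⁅w, z⁆]; abel
    rw [e]
    have h1 := ih (k+1) ⁅x, z⁆ (lie_mem_gam' hz x)
    have h2 := ih k z hz
    have h3 : ⁅w, z⁆ ∈ gam K G (i+1+k) := by
      rw [show i+1+k = i+k+1 by ring, gam_succ]
      exact Submodule.map₂_le_map₂_right le_top h2
    rw [show i+(k+1) = i+1+k by ring] at h1
    refine add_mem (Submodule.map₂_le_map₂_right le_sup_left h1) ?_
    exact Submodule.apply_mem_map₂ (brk K G) h3
      (Submodule.mem_sup_right (Submodule.mem_span_singleton_self x))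

lemma gam_le_LN (B Z : Submodule K G) (hZ : ∀ z ∈ Z, ∀ g : G, ⁅z, g⁆ = 0)
    (hB : ⊤ ≤ B ⊔ (gam K G 1 ⊔ Z)) (i : ℕ) :
    gam K G i ≤ Submodule.span K {w | ∃ S, LN B i w S} ⊔ (gam K G (i+1) ⊔ Z) := by
  induction i with
  | zero =>
    rw [gam_zero]
    refine hB.trans (sup_le_sup_right ?_ _)
    exact fun x hx => Submodule.subset_span ⟨_, LN.base x hx⟩
  | succ i ih =>
    conv_lhs => rw [gam_succ]
    refine (Submodule.map₂_le_map₂ ih hB).trans ?_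
    rw [Submodule.map₂_le]
    intro v hv u hu
    obtain ⟨s, hs, y, hy, rfl⟩ := Submodule.mem_sup.1 hv
    obtain ⟨y1, hy1, z1, hz1, rfl⟩ := Submodule.mem_sup.1 hy
    rw [map_add, LinearMap.add_apply, map_add, LinearMap.add_apply]
    refine add_mem ?_ (add_mem (Submodule.mem_sup_right (Submodule.mem_sup_left
      (lie_mem_gam hy1 u))) ?_)
    swap
    · rw [brk_apply, hZ z1 hz1]; exact zero_mem _
    clear hv hy
    induction hs using Submodule.span_induction with
    | zero => simp
    | add a b _ _ ha hb => rw [map_add, LinearMap.add_apply]; exact add_mem ha hb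
    | smul t a _ ha => rw [map_smul, LinearMap.smul_apply]; exact Submodule.smul_mem _ _ ha
    | mem w hw =>
      obtain ⟨S, hS⟩ := hw
      obtain ⟨b, hb, y, hy, rfl⟩ := Submodule.mem_sup.1 hu
      obtain ⟨y2, hy2, z2, hz2, rfl⟩ := Submodule.mem_sup.1 hy
      rw [map_add, map_add]
      refine add_mem (Submodule.mem_sup_left (Submodule.subset_span ⟨_, LN.step _ _ _ b hS hb⟩))
        (add_mem (Submodule.mem_sup_right (Submodule.mem_sup_left (lie_gam_one hS.mem hy2))) ?_)
      rw [brk_apply, ← lie_skew, hZ z2 hz2, neg_zero]; exact zero_mem _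

lemma alt_bound (s : Finset G) : ∃ D : Submodule K G, FiniteDimensional K D ∧
    finrank K D ≤ s.card.choose 2 ∧
    Submodule.map₂ (brk K G) (Submodule.span K (s : Set G)) (Submodule.span K (s : Set G)) ≤ D := by
  classical
  induction s using Finset.induction_on with
  | empty => exact ⟨⊥, inferInstance, by simp, by simp⟩
  | insert a s ha ih =>
    obtain ⟨D, h1, h2, h3⟩ := ih
    have hf : FiniteDimensional K (Submodule.span K (s : Set G)) :=
      FiniteDimensional.span_finset K s
    refine ⟨D ⊔ (Submodule.span K (s : Set G)).map (brk K G a), inferInstance, ?_, ?_⟩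
    · have h4 := Submodule.finrank_add_le_finrank_add_finrank D
        ((Submodule.span K (s : Set G)).map (brk K G a))
      have h5 := Submodule.finrank_map_le (brk K G a) (Submodule.span K (s : Set G))
      have h6 : finrank K (Submodule.span K (s : Set G)) ≤ s.card :=
        finrank_span_finset_le_card s
      rw [Finset.card_insert_of_notMem ha, show (s.card + 1).choose 2 = s.card + s.card.choose 2 by
        rw [Nat.choose_succ_succ' s.card 1, Nat.choose_one_right]]
      omega
    · rw [Submodule.map₂_span_span, Submodule.span_le]
      rw [Submodule.map₂_span_span, Submodule.span_le] at h3
      rintro _ ⟨x, hx, y, hy, rfl⟩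
      simp only [Finset.coe_insert, Set.mem_insert_iff] at hx hy
      rcases hx with rfl | hx <;> rcases hy with rfl | hy
      · simp
      · exact Submodule.mem_sup_right ⟨y, Submodule.subset_span hy, rfl⟩
      · change ⁅x, y⁆ ∈ _
        rw [← lie_skew]
        exact neg_mem (Submodule.mem_sup_right ⟨x, Submodule.subset_span hx, rfl⟩)
      · exact Submodule.mem_sup_left (h3 ⟨x, hx, y, hy, rfl⟩)

variable {L : Type} [LieRing L] [LieAlgebra K L]

lemma map_gam (p : G →ₗ⁅K⁆ L) (hp : Function.Surjective p) (k : ℕ) :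
    (gam K G k).map (p : G →ₗ[K] L) = gam K L k := by
  unfold gam
  rw [← LieIdeal.lowerCentralSeries_map_eq k hp]
  exact (LieIdeal.coe_map_of_surjective hp).symm

/-- Bracket containment modulo the next term. -/
lemma map₂_le_of (Z : Submodule K G) (hZ : ∀ z ∈ Z, ∀ g : G, ⁅z, g⁆ = 0)
    (A B : Submodule K G) (i : ℕ) (hA : A ≤ gam K G i) (U : Submodule K G)
    (hU : U ≤ A ⊔ (gam K G (i+1) ⊔ Z)) (V : Submodule K G) (hV : V ≤ B ⊔ (gam K G 1 ⊔ Z)) :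
    Submodule.map₂ (brk K G) U V ≤ Submodule.map₂ (brk K G) A B ⊔ gam K G (i+2) := by
  rw [Submodule.map₂_le]
  intro u hu v hv
  obtain ⟨a, ha, y, hy, rfl⟩ := Submodule.mem_sup.1 (hU hu)
  obtain ⟨y1, hy1, z1, hz1, rfl⟩ := Submodule.mem_sup.1 hy
  obtain ⟨b, hb, y', hy', rfl⟩ := Submodule.mem_sup.1 (hV hv)
  obtain ⟨y2, hy2, z2, hz2, rfl⟩ := Submodule.mem_sup.1 hy'
  have e : ⁅a + (y1 + z1), b + (y2 + z2)⁆ = ⁅a, b⁆ + (⁅a, y2⁆ + ⁅y1, b + (y2 + z2)⁆) := by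
    have h2 : ⁅a, z2⁆ = 0 := by rw [← lie_skew, hZ z2 hz2, neg_zero]
    rw [add_lie, add_lie, hZ z1 hz1, lie_add, lie_add, h2]; abel
  rw [brk_apply, e]
  exact add_mem (Submodule.mem_sup_left (Submodule.apply_mem_map₂ (brk K G) ha hb))
    (Submodule.mem_sup_right (add_mem (lie_gam_one (hA ha) hy2) (lie_mem_gam hy1 _)))

lemma step_bound [FiniteDimensional K L] (p : G →ₗ⁅K⁆ L) (hp : Function.Surjective p)
    (hZ : ∀ z ∈ LinearMap.ker (p : G →ₗ[K] L), ∀ g : G, ⁅z, g⁆ = 0)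
    (B : Submodule K G) [FiniteDimensional K B]
    (hB : ⊤ ≤ B ⊔ (gam K G 1 ⊔ LinearMap.ker (p : G →ₗ[K] L)))
    (i : ℕ) (hi : ¬ gam K L i ≤ gam K L (i+1)) :
    ∃ D : Submodule K G, FiniteDimensional K D ∧
      finrank K D + (finrank K B - (i+1)) + finrank K B * finrank K (gam K L (i+1)) ≤
        finrank K B * finrank K (gam K L i) ∧
      gam K G (i+1) ≤ D ⊔ gam K G (i+2) := by
  set Z := LinearMap.ker (p : G →ₗ[K] L) with hZdef
  have hw : ∃ w S, LN B i w S ∧ p w ∉ gam K L (i+1) := by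
    by_contra! hcon
    apply hi
    rw [← map_gam p hp i]
    refine (Submodule.map_mono (gam_le_LN B Z hZ hB i)).trans ?_
    rw [Submodule.map_sup, Submodule.map_sup, map_gam p hp, Submodule.map_span]
    refine sup_le ?_ (sup_le le_rfl ?_)
    · rw [Submodule.span_le]
      rintro _ ⟨w, ⟨S, hS⟩, rfl⟩
      exact hcon w S hS
    · rintro _ ⟨z, hz, rfl⟩
      have : p z = 0 := hz
      simp [this]
  obtain ⟨w, S, hS, hw⟩ := hw
  obtain ⟨hSf, hSi⟩ := hS.fin
  have hpw : p w ∈ gam K L i := by rw [← map_gam p hp i]; exact ⟨w, hS.mem, rfl⟩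
  have hpw0 : p w ≠ 0 := fun h => hw (h ▸ zero_mem _)
  obtain ⟨A0, hA0, hA0f, hA0d, hA0s⟩ := exists_lift (p : G →ₗ[K] L) (gam K G i) (gam K L i)
    (gam K L (i+1) ⊔ Submodule.span K {p w}) (map_gam p hp i)
    (sup_le (gam_le_succ i) (by simpa [Submodule.span_le] using hpw))
  have hdw : finrank K (gam K L (i+1) ⊔ Submodule.span K {p w} : Submodule K L)
      = finrank K (gam K L (i+1)) + 1 := by
    have h1 := Submodule.finrank_sup_add_finrank_inf_eq (gam K L (i+1)) (Submodule.span K {p w})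
    have h2 : Disjoint (gam K L (i+1)) (Submodule.span K {p w}) :=
      (Submodule.disjoint_span_singleton' hpw0).2 hw
    rw [h2.eq_bot, finrank_bot, finrank_span_singleton hpw0] at h1
    omega
  set A := A0 ⊔ Submodule.span K {w} with hAdef
  have hAg : A ≤ gam K G i := sup_le hA0 (by simpa [Submodule.span_le] using hS.mem)
  have hAd : finrank K A ≤ finrank K A0 + 1 := by
    have h3 := Submodule.finrank_add_le_finrank_add_finrank A0 (Submodule.span K {w})
    have h4 : finrank K (Submodule.span K {w}) ≤ 1 := by
      simpa using finrank_span_le_card (R := K) ({w} : Set G)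
    rw [hAdef]
    omega
  have hAs : gam K G i ≤ A ⊔ (gam K G (i+1) ⊔ Z) := by
    intro x hx
    obtain ⟨a, ha, hax⟩ := hA0s x hx
    obtain ⟨y, hy, q, hq, e⟩ := Submodule.mem_sup.1 hax
    obtain ⟨t, rfl⟩ := Submodule.mem_span_singleton.1 hq
    rw [← map_gam p hp (i+1)] at hy
    obtain ⟨y', hy', rfl⟩ := hy
    refine Submodule.mem_sup.2 ⟨a + t • w, add_mem (Submodule.mem_sup_left ha)
      (Submodule.mem_sup_right (Submodule.smul_mem _ _ (Submodule.mem_span_singleton_self w))),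
      y' + (x - (a + t • w) - y'), ?_, by abel⟩
    refine add_mem (Submodule.mem_sup_left hy') (Submodule.mem_sup_right ?_)
    rw [hZdef, LinearMap.mem_ker]
    simp only [LieHom.coe_toLinearMap, map_sub, map_add, map_smul] at e ⊢
    rw [sub_sub, sub_eq_zero]
    rw [eq_sub_iff_add_eq] at e
    rw [← e]; abel
  obtain ⟨T, hdis, hST⟩ := IsModularLattice.exists_disjoint_and_sup_eq hS.le
  have hTB : T ≤ B := hST ▸ le_sup_right
  have hTf : FiniteDimensional K T := Submodule.finiteDimensional_of_le hTB
  have hdim : finrank K S + finrank K T = finrank K B := by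
    have := Submodule.finrank_sup_add_finrank_inf_eq S T
    rw [hdis.eq_bot, finrank_bot, hST] at this
    omega
  obtain ⟨f1, d1⟩ := finrank_map₂_le (brk K G) A S
  obtain ⟨f2, d2⟩ := finrank_map₂_le (brk K G) A0 T
  refine ⟨Submodule.map₂ (brk K G) A S ⊔ Submodule.map₂ (brk K G) A0 T, inferInstance, ?_, ?_⟩
  · have h3 := Submodule.finrank_add_le_finrank_add_finrank (Submodule.map₂ (brk K G) A S)
      (Submodule.map₂ (brk K G) A0 T)
    rw [hdw] at hA0d
    rw [← hA0d, ← hdim]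
    have h5 : finrank K A * finrank K S ≤ (finrank K A0 + 1) * finrank K S :=
      Nat.mul_le_mul_right _ hAd
    have h6 : finrank K S + finrank K T - (i+1) ≤ finrank K T := by omega
    nlinarith
  · rw [gam_succ]
    refine (map₂_le_of Z hZ A B i hAg _ hAs _ hB).trans (sup_le ?_ le_sup_right)
    rw [← hST, Submodule.map₂_sup_right]
    refine sup_le (le_sup_left.trans le_sup_left) ?_
    conv_lhs => rw [hAdef, Submodule.map₂_sup_left]
    refine sup_le (le_sup_right.trans le_sup_left) ?_
    have h7 : Submodule.map₂ (brk K G) (gam K G i) S ≤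
        Submodule.map₂ (brk K G) A S ⊔ gam K G (i+2) :=
      map₂_le_of Z hZ A S i hAg _ hAs _ le_sup_left
    rw [Submodule.map₂_le]
    intro x hx t ht
    obtain ⟨r, rfl⟩ := Submodule.mem_span_singleton.1 hx
    rw [map_smul, LinearMap.smul_apply]
    refine Submodule.smul_mem _ _ ?_
    have h8 := hS.lie 0 t (by simp [gam_zero])
    exact (h7.trans (sup_le_sup_right le_sup_left _)) h8

lemma gam_strict {c i : ℕ} (hc : lieNilpotencyClass K L c) (hi : i < c) :
    ¬ gam K L i ≤ gam K L (i+1) := by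
  intro h
  have key : ∀ k, gam K L i ≤ gam K L (i+k) := by
    intro k
    induction k with
    | zero => exact le_rfl
    | succ k ih =>
      refine h.trans ?_
      rw [← add_assoc, gam_succ, gam_succ]
      exact Submodule.map₂_le_map₂_left ih
  have := key (c - i)
  rw [Nat.add_sub_cancel' hi.le] at this
  apply hc.2 i hi
  rw [eq_bot_iff, ← hc.1]
  exact this

lemma core [FiniteDimensional K L] (p : G →ₗ⁅K⁆ L) (hp : Function.Surjective p)
    (hZ : ∀ z ∈ LinearMap.ker (p : G →ₗ[K] L), ∀ g : G, ⁅z, g⁆ = 0)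
    (d c : ℕ) (hd : d + finrank K (gam K L 1) = finrank K L) (hc1 : 1 ≤ c)
    (hc : lieNilpotencyClass K L c) :
    FiniteDimensional K (gam K G 1) ∧
    finrank K (gam K G 1) + ∑ k ∈ Finset.range (c-1), (d - (k+2)) ≤
      d.choose 2 + d * finrank K (gam K L 1) := by
  obtain ⟨B, -, hBf, hBd, hBs⟩ := exists_lift (p : G →ₗ[K] L) (gam K G 0) (gam K L 0)
    (gam K L 1) (map_gam p hp 0) (gam_le_succ 0)
  rw [gam_zero, finrank_top] at hBd
  have hBd' : finrank K B = d := by omega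
  have hB : ⊤ ≤ B ⊔ (gam K G 1 ⊔ LinearMap.ker (p : G →ₗ[K] L)) := by
    intro x _
    obtain ⟨a, ha, hax⟩ := hBs x (by simp [gam_zero])
    rw [← map_gam p hp 1] at hax
    obtain ⟨y, hy, e⟩ := hax
    refine Submodule.mem_sup.2 ⟨a, ha, y + (x - a - y), ?_, by abel⟩
    refine add_mem (Submodule.mem_sup_left hy) (Submodule.mem_sup_right ?_)
    rw [LinearMap.mem_ker, map_sub, e, map_sub, sub_self]
  have main : ∀ j, j + 1 ≤ c → ∃ E : Submodule K G, FiniteDimensional K E ∧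
      gam K G 1 ≤ E ⊔ gam K G (j+2) ∧
      finrank K E + ∑ k ∈ Finset.range j, (d - (k+2)) + d * finrank K (gam K L (j+1)) ≤
        d.choose 2 + d * finrank K (gam K L 1) := by
    intro j
    induction j with
    | zero =>
      intro _
      let b := Module.finBasis K B
      classical
      let s : Finset G := Finset.univ.image (fun i => (b i : G))
      have hs : Submodule.span K (s : Set G) = B := by
        have : (s : Set G) = B.subtype '' Set.range b := by
          ext x; simp [s]
        rw [this, Submodule.span_image, b.span_eq, Submodule.map_top, Submodule.range_subtype]
      have hcard : s.card ≤ d := by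
        refine Finset.card_image_le.trans ?_
        simp [hBd']
      obtain ⟨D, h1, h2, h3⟩ := alt_bound (K := K) s
      rw [hs] at h3
      refine ⟨D, h1, ?_, ?_⟩
      · rw [gam_succ]
        refine (map₂_le_of _ hZ B B 0 (by simp [gam_zero]) _ ?_ _ hB).trans
          (sup_le_sup_right h3 _)
        exact le_top.trans hB
      · have := Nat.choose_le_choose 2 hcard
        simp only [Finset.range_zero, Finset.sum_empty, add_zero]
        rw [zero_add]
        omega
    | succ j ih =>
      intro hj
      obtain ⟨E, h1, h2, h3⟩ := ih (by omega)
      obtain ⟨D, g1, g2, g3⟩ := step_bound p hp hZ B hB (j+1) (gam_strict hc (by omega))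
      refine ⟨E ⊔ D, inferInstance, ?_, ?_⟩
      · refine h2.trans (sup_le (le_sup_left.trans le_sup_left) (g3.trans ?_))
        exact sup_le_sup_right le_sup_right _
      · rw [hBd'] at g2
        rw [Finset.sum_range_succ]
        have h5 := Submodule.finrank_add_le_finrank_add_finrank E D
        have e : j + 1 + 1 = j + 2 := rfl
        rw [e] at g2 ⊢
        omega
  obtain ⟨E, h1, h2, h3⟩ := main (c-1) (by omega)
  have hbot : gam K G (c+1) = ⊥ := by
    rw [eq_bot_iff, gam_succ, Submodule.map₂_le]
    intro x hx g _
    rw [brk_apply, hZ x _ g]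
    · exact zero_mem _
    · rw [LinearMap.mem_ker]
      have : (p : G →ₗ[K] L) x ∈ gam K L c := by
        rw [← map_gam p hp c]; exact ⟨x, hx, rfl⟩
      unfold gam at this
      rw [hc.1] at this
      simpa using this
  rw [show c - 1 + 2 = c + 1 by omega, hbot, sup_bot_eq] at h2
  refine ⟨Submodule.finiteDimensional_of_le h2, ?_⟩
  have := Submodule.finrank_mono h2
  omega

end Lie

lemma presentation {K F L : Type} [Field K] [LieRing F] [LieAlgebra K F] [LieRing L]
    [LieAlgebra K L] [FiniteDimensional K L] (π : F →ₗ⁅K⁆ L) (hπ : Function.Surjective π)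
    (d c : ℕ) (hd : d + finrank K (gam K L 1) = finrank K L) (hc1 : 1 ≤ c)
    (hc : lieNilpotencyClass K L c) :
    finrank K (↥((π.ker ⊓ LieModule.lowerCentralSeries K F F 1 : LieIdeal K F) : Submodule K F) ⧸
      (Submodule.comap
        ((π.ker ⊓ LieModule.lowerCentralSeries K F F 1 : LieIdeal K F) : Submodule K F).subtype
        ((⁅π.ker, (⊤ : LieIdeal K F)⁆ : LieIdeal K F) : Submodule K F)))
      + finrank K (gam K L 1) + ∑ k ∈ Finset.range (c-1), (d - (k+2)) ≤
      d.choose 2 + d * finrank K (gam K L 1) := by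
  set I : LieIdeal K F := ⁅π.ker, (⊤ : LieIdeal K F)⁆ with hI
  have hIk : I ≤ π.ker := LieSubmodule.lie_le_left _ _
  let q : F →ₗ⁅K⁆ (F ⧸ I) :=
    { (LieSubmodule.Quotient.mk' I : F →ₗ[K] F ⧸ I) with map_lie' := fun {x y} => rfl }
  have hq : Function.Surjective q := LieSubmodule.Quotient.surjective_mk' I
  have hqk : ∀ x, q x = 0 ↔ x ∈ I := fun x => LieSubmodule.Quotient.mk_eq_zero (N := I)
  let p0 : (F ⧸ I) →ₗ[K] L := Submodule.liftQ I.toSubmodule (π : F →ₗ[K] L) (fun x hx => hIk hx)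
  have hp0 : ∀ x, p0 (q x) = π x := fun x => rfl
  let p : (F ⧸ I) →ₗ⁅K⁆ L :=
    { p0 with
      map_lie' := by
        intro x y
        obtain ⟨x, rfl⟩ := hq x
        obtain ⟨y, rfl⟩ := hq y
        change p0 ⁅q x, q y⁆ = ⁅p0 (q x), p0 (q y)⁆
        rw [← LieHom.map_lie, hp0, hp0, hp0, LieHom.map_lie] }
  have hpq : ∀ x, p (q x) = π x := fun x => rfl
  have hp : Function.Surjective p := fun y => by
    obtain ⟨x, rfl⟩ := hπ y
    exact ⟨q x, hpq x⟩
  have hZ : ∀ z ∈ LinearMap.ker (p : (F ⧸ I) →ₗ[K] L), ∀ g : F ⧸ I, ⁅z, g⁆ = 0 := by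
    intro z hz g
    obtain ⟨x, rfl⟩ := hq z
    obtain ⟨y, rfl⟩ := hq g
    rw [← LieHom.map_lie, hqk]
    have hx : x ∈ π.ker := hz
    exact LieSubmodule.lie_mem_lie hx (LieSubmodule.mem_top y)
  obtain ⟨hfin, hbd⟩ := core p hp hZ d c hd hc1 hc
  let N : Submodule K F :=
    ((π.ker ⊓ LieModule.lowerCentralSeries K F F 1 : LieIdeal K F) : Submodule K F)
  have hqm := map_gam q hq 1
  let r : gam K (F ⧸ I) 1 →ₗ[K] L := (p : (F ⧸ I) →ₗ[K] L) ∘ₗ (gam K (F ⧸ I) 1).subtype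
  have hrr : LinearMap.range r = gam K L 1 := by
    rw [LinearMap.range_comp, Submodule.range_subtype, map_gam p hp 1]
  have hrn := LinearMap.finrank_range_add_finrank_ker r
  rw [hrr] at hrn
  let φ : N →ₗ[K] gam K (F ⧸ I) 1 :=
    LinearMap.codRestrict _ ((q : F →ₗ[K] F ⧸ I) ∘ₗ N.subtype) (by
      rintro ⟨x, hx⟩
      rw [← hqm]
      exact ⟨x, hx.2, rfl⟩)
  let φ' : N →ₗ[K] LinearMap.ker r := LinearMap.codRestrict _ φ (by
      rintro ⟨x, hx⟩
      exact hx.1)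
  have hker : LinearMap.ker φ' = Submodule.comap N.subtype I.toSubmodule := by
    ext ⟨x, hx⟩
    rw [LinearMap.ker_codRestrict, LinearMap.ker_codRestrict]
    exact hqk x
  have hle : finrank K (N ⧸ Submodule.comap N.subtype I.toSubmodule) ≤
      finrank K (LinearMap.ker r) := by
    rw [← hker, (φ'.quotKerEquivRange).finrank_eq]
    exact Submodule.finrank_le _
  change finrank K (N ⧸ Submodule.comap N.subtype I.toSubmodule) + _ + _ ≤ _
  omega

lemma arith (n m c d x : ℕ) (hd : d + m = n) (hc : 2 ≤ c)
    (h : x + m + ∑ k ∈ Finset.range (c-1), (d - (k+2)) ≤ d.choose 2 + d * m) :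
    (x : ℤ) ≤ raiBound n m c := by
  unfold raiBound
  have hnm : n - m = d := by omega
  rw [hnm]
  have e1 : ((n : ℤ) - m - 1) * ((n : ℤ) + m) / 2 = (d.choose 2 : ℤ) + (d - 1) * m := by
    have h2 : (d.choose 2 : ℤ) * 2 = d * (d - 1) := by
      have := Nat.choose_two_right d
      rcases d with _ | d
      · simp
      · have := Nat.add_one_mul_choose_eq d 1
        simp only [Nat.choose_one_right] at this
        push_cast
        have h3 : (((d+1) * d : ℕ) : ℤ) = (((d+1).choose 2 * 2 : ℕ) : ℤ) := by
          exact_mod_cast this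
        push_cast at h3
        linarith
    rw [← hd]
    push_cast
    have : ((d : ℤ) + m - m - 1) * (d + m + m) = 2 * ((d.choose 2 : ℤ) + (d - 1) * m) := by
      linear_combination -h2
    rw [this]
    exact Int.mul_ediv_cancel_left _ (by norm_num)
  have e2 : ∑ i ∈ Finset.Icc 2 (min d c), ((n : ℤ) - m - (i : ℤ)) ≤
      ((∑ k ∈ Finset.range (c-1), (d - (k+2)) : ℕ) : ℤ) := by
    have a1 : ∑ k ∈ Finset.range (c-1), (d - (k+2)) = ∑ i ∈ Finset.Icc 2 c, (d - i) := by
      rw [← Finset.Ico_add_one_right_eq_Icc, Finset.sum_Ico_eq_sum_range]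
      rw [show c + 1 - 2 = c - 1 by omega]
      exact Finset.sum_congr rfl (fun k _ => by rw [add_comm])
    rw [a1]
    have a2 : ∑ i ∈ Finset.Icc 2 (min d c), (d - i) ≤ ∑ i ∈ Finset.Icc 2 c, (d - i) :=
      Finset.sum_le_sum_of_subset (Finset.Icc_subset_Icc_right (min_le_right _ _))
    refine le_trans (le_of_eq ?_) (Int.ofNat_le.2 a2)
    push_cast
    refine Finset.sum_congr rfl (fun i hi => ?_)
    have := (Finset.mem_Icc.1 hi).2
    have := min_le_left d c
    omega
  rw [e1]
  have h' : ((x + m + ∑ k ∈ Finset.range (c-1), (d - (k+2)) : ℕ) : ℤ) ≤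
    ((d.choose 2 + d * m : ℕ) : ℤ) := by exact_mod_cast h
  rw [Nat.cast_add, Nat.cast_add, Nat.cast_add, Nat.cast_mul] at h'
  linarith

end RaiBound

/-- Rai's bound: for an `n`-dimensional nilpotent Lie algebra `L` of
nilpotency class `c` with `dim L² = m ≥ 1`,
`dim M(L) ≤ (1/2)(n−m−1)(n+m) − Σ_{i=2}^{min(n−m,c)} (n−m−i)`. -/
theorem schur_multiplier_rai_bound (K L : Type) [Field K] [LieRing L] [LieAlgebra K L]
    [FiniteDimensional K L] (n m c : ℕ)
    (hn : Module.finrank K L = n) (hm : lieDerivedDim K L = m) (hm1 : 1 ≤ m)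
    (hc : lieNilpotencyClass K L c) :
    ∀ (X : Type) (π : FreeLieAlgebra K X →ₗ⁅K⁆ L), Function.Surjective π →
      (lieSchurMultiplierDim K X π : ℤ) ≤ raiBound n m c := by
  intro X π hπ
  have hm' : finrank K (RaiBound.gam K L 1) = m := hm
  have hmn : m ≤ n := by rw [← hm', ← hn]; exact Submodule.finrank_le _
  have hc2 : 2 ≤ c := by
    by_contra hlt
    have h1 : RaiBound.gam K L 1 ≤ ⊥ := by
      have h2 := LieModule.antitone_lowerCentralSeries K L L (show c ≤ 1 by omega)
      rw [hc.1] at h2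
      exact h2
    rw [le_bot_iff] at h1
    rw [h1, finrank_bot] at hm'
    omega
  have key := RaiBound.presentation π hπ (n - m) c (by omega) (by omega) hc
  rw [hm'] at key
  exact RaiBound.arith n m c (n - m) _ (by omega) hc2 key
end

section
/- Let L be a finite-dimensional Lie algebra and K a central ideal of L. Then dim M(L) + dim(L² ∩ K) ≤ dim M(L/K) + dim M(K) + dim((L/K)^{ab} ⊗ K), where (L/K)^{ab} = (L/K)/(L/K)² and ⊗ is the tensor product of the underlying vector spaces (abelian Lie algebras). -/
open Module TensorProduct

section Helpers

open Submodule

/-- The bracket as a bilinear map. -/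
def brK (K E : Type) [Field K] [LieRing E] [LieAlgebra K E] : E →ₗ[K] E →ₗ[K] E :=
  (LieModule.toEnd K E E : E →ₗ[K] Module.End K E)

theorem brK_apply {K E : Type} [Field K] [LieRing E] [LieAlgebra K E] (x y : E) :
    brK K E x y = ⁅x, y⁆ := rfl

theorem lie_eq_map₂ {K E : Type} [Field K] [LieRing E] [LieAlgebra K E] (I J : LieIdeal K E) :
    ((⁅I, J⁆ : LieIdeal K E) : Submodule K E)
      = map₂ (brK K E) (I : Submodule K E) (J : Submodule K E) := by
  have h := LieSubmodule.lieIdeal_oper_eq_linear_span' J I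
  rw [map₂_eq_span_image2]
  exact h

/-- The derived subspace. -/
def D2 (K E : Type) [Field K] [LieRing E] [LieAlgebra K E] : Submodule K E :=
  map₂ (brK K E) ⊤ ⊤

theorem lcs_one_eq (K E : Type) [Field K] [LieRing E] [LieAlgebra K E] :
    ((LieModule.lowerCentralSeries K E E 1 : LieSubmodule K E E) : Submodule K E) = D2 K E := by
  rw [LieModule.lowerCentralSeries_succ, LieModule.lowerCentralSeries_zero, D2]
  exact lie_eq_map₂ ⊤ ⊤

theorem finrank_quot_comap {K V : Type} [Field K] [AddCommGroup V] [Module K V]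
    (A N : Submodule K V) :
    finrank K (A ⧸ comap A.subtype N) = finrank K (map N.mkQ A) := by
  have e := (N.mkQ ∘ₗ A.subtype).quotKerEquivRange
  rw [LinearMap.range_comp, range_subtype, LinearMap.ker_comp, ker_mkQ] at e
  exact e.finrank_eq

theorem schurDim_eq {K X L : Type} [Field K] [LieRing L] [LieAlgebra K L]
    (π : FreeLieAlgebra K X →ₗ⁅K⁆ L) :
    lieSchurMultiplierDim K X π =
      finrank K (map (map₂ (brK K (FreeLieAlgebra K X))
        (LinearMap.ker (π : FreeLieAlgebra K X →ₗ[K] L)) ⊤).mkQ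
        (LinearMap.ker (π : FreeLieAlgebra K X →ₗ[K] L) ⊓ D2 K (FreeLieAlgebra K X))) := by
  unfold lieSchurMultiplierDim
  rw [finrank_quot_comap, lie_eq_map₂, ← lcs_one_eq]
  rfl

theorem finrank_map_inf_ker {K V W : Type} [Field K] [AddCommGroup V] [Module K V]
    [AddCommGroup W] [Module K W] (P : Submodule K V) [FiniteDimensional K P] (f : V →ₗ[K] W) :
    finrank K (map f P) + finrank K (P ⊓ LinearMap.ker f : Submodule K V) = finrank K P := by
  have h := (f ∘ₗ P.subtype).finrank_range_add_finrank_ker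
  rw [LinearMap.range_comp, range_subtype, LinearMap.ker_comp] at h
  rw [← h, ← finrank_map_subtype_eq P, map_comap_subtype]

theorem fd_map_D2 {K F Q : Type} [Field K] [LieRing F] [LieAlgebra K F] [LieRing Q]
    [LieAlgebra K Q] [FiniteDimensional K Q] (ρ : F →ₗ⁅K⁆ Q) :
    FiniteDimensional K
      (map (map₂ (brK K F) (LinearMap.ker (ρ : F →ₗ[K] Q)) ⊤).mkQ (D2 K F)) := by
  obtain ⟨C, hC⟩ := (LinearMap.ker (ρ : F →ₗ[K] Q)).exists_isCompl
  set R := LinearMap.ker (ρ : F →ₗ[K] Q) with hR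
  have hCf : FiniteDimensional K C := by
    refine FiniteDimensional.of_injective ((ρ : F →ₗ[K] Q) ∘ₗ C.subtype) ?_
    rw [← LinearMap.ker_eq_bot, LinearMap.ker_comp, ← disjoint_iff_comap_eq_bot]
    exact hC.disjoint.symm
  have hCfg : C.FG := (Submodule.fg_iff_finiteDimensional C).2 hCf
  have hfg : (map (map₂ (brK K F) R ⊤).mkQ (map₂ (brK K F) C C)).FG :=
    (hCfg.map₂ _ hCfg).map _
  have hfd : FiniteDimensional K (map (map₂ (brK K F) R ⊤).mkQ (map₂ (brK K F) C C)) :=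
    (Submodule.fg_iff_finiteDimensional _).1 hfg
  have hle : D2 K F ≤ map₂ (brK K F) C C ⊔ map₂ (brK K F) R ⊤ := by
    rw [D2, map₂_le]
    intro x _ y _
    obtain ⟨r, hr, c, hc, rfl⟩ := mem_sup.1 (hC.sup_eq_top ▸ mem_top : x ∈ R ⊔ C)
    obtain ⟨r', hr', c', hc', rfl⟩ := mem_sup.1 (hC.sup_eq_top ▸ mem_top : y ∈ R ⊔ C)
    have e : brK K F (r + c) (r' + c')
        = brK K F c c' + (brK K F r (r' + c') + - brK K F r' c) := by
      simp only [brK_apply, lie_add, add_lie, lie_skew]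
      abel
    rw [e]
    exact add_mem (mem_sup_left (apply_mem_map₂ _ hc hc')) (mem_sup_right
      (add_mem (apply_mem_map₂ _ hr mem_top) (neg_mem (apply_mem_map₂ _ hr' mem_top))))
  refine Submodule.finiteDimensional_of_le (S₂ := map (map₂ (brK K F) R ⊤).mkQ
    (map₂ (brK K F) C C)) ?_
  refine (map_mono hle).trans ?_
  rw [Submodule.map_sup, mkQ_map_self, sup_bot_eq]

/-- The key comparison: a central-extension type quotient is a quotient of the multiplier. -/
theorem finrank_le_schurDim {K Y E Q V : Type} [Field K] [LieRing E] [LieAlgebra K E]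
    [LieRing Q] [LieAlgebra K Q] [FiniteDimensional K Q] [AddCommGroup V] [Module K V]
    (ρ : FreeLieAlgebra K Y →ₗ⁅K⁆ Q) (hρ : Function.Surjective ρ)
    (σ : E →ₗ⁅K⁆ Q) (hσ : Function.Surjective σ) (g : E →ₗ[K] V)
    (hg : ∀ a e : E, σ a = 0 → g ⁅a, e⁆ = 0) :
    FiniteDimensional K (map g (LinearMap.ker (σ : E →ₗ[K] Q) ⊓ D2 K E)) ∧
    finrank K (map g (LinearMap.ker (σ : E →ₗ[K] Q) ⊓ D2 K E))
      ≤ lieSchurMultiplierDim K Y ρ := by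
  rw [schurDim_eq]
  set F := FreeLieAlgebra K Y
  set R := LinearMap.ker (ρ : F →ₗ[K] Q) with hR
  set N := map₂ (brK K F) R ⊤ with hN
  have hfd1 : FiniteDimensional K (map N.mkQ (D2 K F)) := fd_map_D2 ρ
  have hfd2 : FiniteDimensional K (map N.mkQ (R ⊓ D2 K F)) :=
    Submodule.finiteDimensional_of_le (map_mono inf_le_right)
  let φ : F →ₗ⁅K⁆ E := FreeLieAlgebra.lift K
    (fun y => Function.surjInv hσ (ρ (FreeLieAlgebra.of K y)))
  have hφ' : σ.comp φ = ρ := by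
    apply FreeLieAlgebra.hom_ext
    intro y
    simp only [LieHom.comp_apply, φ, FreeLieAlgebra.lift_of_apply]
    exact Function.surjInv_eq hσ _
  have hφ : ∀ x, σ (φ x) = ρ x := fun x => by rw [← hφ']; rfl
  have hker : N ≤ LinearMap.ker (g ∘ₗ (φ : F →ₗ[K] E)) := by
    rw [hN, map₂_le]
    intro r hr y _
    have hr' : ρ r = 0 := hr
    simp only [LinearMap.mem_ker, LinearMap.comp_apply, brK_apply]
    change g (φ ⁅r, y⁆) = 0
    rw [LieHom.map_lie]
    exact hg _ _ (by rw [hφ, hr'])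
  let h : (F ⧸ N) →ₗ[K] V := N.liftQ (g ∘ₗ (φ : F →ₗ[K] E)) hker
  -- brackets in `E` are brackets of lifts, up to the kernel of `g`, compatibly with `σ`
  have hD : D2 K E ≤ map (φ : F →ₗ[K] E) (D2 K F) ⊔
      (LinearMap.ker g ⊓ LinearMap.ker (σ : E →ₗ[K] Q)) := by
    rw [D2, map₂_le]
    intro x _ y _
    obtain ⟨a, ha⟩ := hρ (σ x)
    obtain ⟨b, hb⟩ := hρ (σ y)
    have h1 : σ (x - φ a) = 0 := by rw [map_sub, hφ, ha, sub_self]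
    have h2 : σ (y - φ b) = 0 := by rw [map_sub, hφ, hb, sub_self]
    have e : brK K E x y = φ ⁅a, b⁆ + (⁅x - φ a, y⁆ + - ⁅y - φ b, φ a⁆) := by
      simp only [brK_apply, LieHom.map_lie, sub_lie]
      rw [← lie_skew (φ a) y, ← lie_skew (φ a) (φ b)]
      abel
    rw [e]
    refine add_mem (mem_sup_left ⟨⁅a, b⁆, apply_mem_map₂ (brK K F) mem_top mem_top, rfl⟩)
      (mem_sup_right ⟨?_, ?_⟩)
    · refine add_mem ?_ (neg_mem ?_)
      · exact hg _ _ h1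
      · exact hg _ _ h2
    · refine add_mem ?_ (neg_mem ?_)
      · change σ ⁅x - φ a, y⁆ = 0
        rw [LieHom.map_lie, h1, zero_lie]
      · change σ ⁅y - φ b, φ a⁆ = 0
        rw [LieHom.map_lie, h2, zero_lie]
  have hle : map g (LinearMap.ker (σ : E →ₗ[K] Q) ⊓ D2 K E)
      ≤ map h (map N.mkQ (R ⊓ D2 K F)) := by
    rintro _ ⟨x, ⟨hx1, hx2⟩, rfl⟩
    obtain ⟨_, ⟨d, hd, rfl⟩, z, ⟨hz1, hz2⟩, rfl⟩ := mem_sup.1 (hD hx2)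
    have hz1' : g z = 0 := hz1
    have hz2' : σ z = 0 := hz2
    have hx1' : σ (φ d + z) = 0 := hx1
    refine ⟨N.mkQ d, ⟨d, ⟨?_, hd⟩, rfl⟩, ?_⟩
    · change ρ d = 0
      rw [← hφ, ← hx1', map_add, hz2', add_zero]
    · rw [map_add, hz1', add_zero]
      rfl
  have hfd3 : FiniteDimensional K (map g (LinearMap.ker (σ : E →ₗ[K] Q) ⊓ D2 K E)) :=
    Submodule.finiteDimensional_of_le hle
  exact ⟨hfd3, (Submodule.finrank_mono hle).trans (finrank_map_le _ _)⟩

theorem liftQ_map_mkQ {K V W : Type} [Field K] [AddCommGroup V] [Module K V]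
    [AddCommGroup W] [Module K W] (N A : Submodule K V) (f : V →ₗ[K] W)
    (h : N ≤ LinearMap.ker f) : map (N.liftQ f h) (map N.mkQ A) = map f A := by
  rw [← Submodule.map_comp, liftQ_mkQ]

theorem map_mkQ_inf_ker {K V W : Type} [Field K] [AddCommGroup V] [Module K V]
    [AddCommGroup W] [Module K W] (N A : Submodule K V) (f : V →ₗ[K] W)
    (h : N ≤ LinearMap.ker f) :
    map N.mkQ A ⊓ LinearMap.ker (N.liftQ f h) = map N.mkQ (A ⊓ LinearMap.ker f) := by
  ext x
  constructor
  · rintro ⟨⟨a, ha, rfl⟩, hx⟩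
    exact ⟨a, ⟨ha, by simpa using hx⟩, rfl⟩
  · rintro ⟨a, ⟨ha, hx⟩, rfl⟩
    exact ⟨⟨a, ha, rfl⟩, by simpa using hx⟩

/-- The quotient map as a homomorphism of Lie algebras. -/
def quotHom {K L : Type} [Field K] [LieRing L] [LieAlgebra K L] (I : LieIdeal K L) :
    L →ₗ⁅K⁆ (L ⧸ I) :=
  { (LieSubmodule.Quotient.mk' I : L →ₗ[K] (L ⧸ I)) with
    map_lie' := fun {x y} => LieSubmodule.Quotient.mk_bracket (I := I) x y }

theorem quotHom_eq_zero {K L : Type} [Field K] [LieRing L] [LieAlgebra K L] (I : LieIdeal K L)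
    (x : L) : quotHom I x = 0 ↔ x ∈ I := LieSubmodule.Quotient.mk_eq_zero I

theorem quotHom_surj {K L : Type} [Field K] [LieRing L] [LieAlgebra K L] (I : LieIdeal K L) :
    Function.Surjective (quotHom I) := LieSubmodule.Quotient.surjective_mk' I

theorem map_D2 {K E L : Type} [Field K] [LieRing E] [LieAlgebra K E] [LieRing L]
    [LieAlgebra K L] (π : E →ₗ⁅K⁆ L) (hπ : Function.Surjective π) :
    map (π : E →ₗ[K] L) (D2 K E) = D2 K L := by
  apply le_antisymm
  · rw [map_le_iff_le_comap, D2, map₂_le]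
    intro x _ y _
    change π ⁅x, y⁆ ∈ D2 K L
    rw [LieHom.map_lie]
    exact apply_mem_map₂ (brK K L) mem_top mem_top
  · rw [D2, map₂_le]
    intro x _ y _
    obtain ⟨a, rfl⟩ := hπ x
    obtain ⟨b, rfl⟩ := hπ y
    exact ⟨⁅a, b⁆, apply_mem_map₂ (brK K E) mem_top mem_top, LieHom.map_lie π a b⟩

/-- The part `[S,F]/([S,S]+[R,F])` is spanned by the image of a tensor product. -/
theorem exists_tensor {K E L : Type} [Field K] [LieRing E] [LieAlgebra K E] [LieRing L]
    [LieAlgebra K L] (π : E →ₗ⁅K⁆ L) (hπ : Function.Surjective π) (I : LieIdeal K L)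
    (S : Submodule K E) (hS : ∀ x, x ∈ S ↔ π x ∈ I)
    (hSR : ∀ x ∈ S, ∀ y, π ⁅x, y⁆ = 0) :
    ∃ T : (((L ⧸ I) ⧸ D2 K (L ⧸ I)) ⊗[K] ↥I) →ₗ[K] E,
      map₂ (brK K E) S ⊤ ≤ (map₂ (brK K E) S S ⊔
        map₂ (brK K E) (LinearMap.ker (π : E →ₗ[K] L)) ⊤) ⊔ LinearMap.range T := by
  let q : E →ₗ[K] ((L ⧸ I) ⧸ D2 K (L ⧸ I)) :=
    (D2 K (L ⧸ I)).mkQ ∘ₗ (quotHom I : L →ₗ[K] (L ⧸ I)) ∘ₗ (π : E →ₗ[K] L)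
  have hq : Function.Surjective q :=
    (mkQ_surjective _).comp ((quotHom_surj I).comp hπ)
  obtain ⟨t, ht⟩ := Module.projective_lifting_property q LinearMap.id hq
  obtain ⟨s, hs⟩ := Module.projective_lifting_property (π : E →ₗ[K] L)
    (I : Submodule K L).subtype hπ
  have ht' : ∀ a, q (t a) = a := fun a => LinearMap.congr_fun ht a
  have hs' : ∀ i : I, π (s i) = i := fun i => LinearMap.congr_fun hs i
  refine ⟨TensorProduct.lift ((brK K E).flip.compl₁₂ t s), ?_⟩
  rw [map₂_le]
  intro x hx y _
  set R := LinearMap.ker (π : E →ₗ[K] L) with hR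
  set i : I := ⟨π x, (hS x).1 hx⟩ with hi
  have hsiS : s i ∈ S := by rw [hS, hs']; exact i.2
  have hxr : x - s i ∈ R := by
    change π (x - s i) = 0
    rw [map_sub, hs', sub_self]
  -- `y - t (q y)` lies in `F² + S`
  have hy : y - t (q y) ∈ D2 K E ⊔ S := by
    have h0 : q (y - t (q y)) = 0 := by rw [map_sub, ht', sub_self]
    have h1 : quotHom I (π (y - t (q y))) ∈ D2 K (L ⧸ I) :=
      (Submodule.Quotient.mk_eq_zero _).1 h0
    have h3 : ∀ w, w ∈ D2 K (L ⧸ I) → ∃ d ∈ D2 K E, quotHom I (π d) = w := by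
      intro w hw
      rw [← map_D2 (quotHom I) (quotHom_surj I), ← map_D2 π hπ] at hw
      obtain ⟨_, ⟨d, hd, rfl⟩, hd2⟩ := hw
      exact ⟨d, hd, hd2⟩
    obtain ⟨d, hd, hd2⟩ := h3 _ h1
    have h2 : (y - t (q y)) - d ∈ S := by
      rw [hS, ← quotHom_eq_zero, map_sub, map_sub]
      exact sub_eq_zero.2 hd2.symm
    have := add_mem (mem_sup_left hd : d ∈ D2 K E ⊔ S) (mem_sup_right h2 : _ ∈ D2 K E ⊔ S)
    simpa using this
  obtain ⟨d, hd, z, hz, hdz⟩ := mem_sup.1 hy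
  have hsd : ⁅s i, d⁆ ∈ map₂ (brK K E) R ⊤ := by
    have : D2 K E ≤ comap (brK K E (s i)) (map₂ (brK K E) R ⊤) := by
      rw [D2, map₂_le]
      intro u _ v _
      change ⁅s i, ⁅u, v⁆⁆ ∈ map₂ (brK K E) R ⊤
      rw [leibniz_lie, ← lie_skew u]
      exact add_mem (apply_mem_map₂ (brK K E) (hSR _ hsiS u) mem_top)
        (neg_mem (apply_mem_map₂ (brK K E) (hSR _ hsiS v) mem_top))
    exact this hd
  have hyy : y = t (q y) + (d + z) := by rw [hdz]; abel
  have e : brK K E x y = (⁅s i, z⁆ + (⁅x - s i, y⁆ + ⁅s i, d⁆)) + ⁅s i, t (q y)⁆ := by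
    rw [brK_apply, sub_lie]
    have : ⁅s i, y⁆ = ⁅s i, t (q y)⁆ + (⁅s i, d⁆ + ⁅s i, z⁆) := by
      conv_lhs => rw [hyy]
      rw [lie_add, lie_add]
    rw [this]
    abel
  rw [e]
  refine add_mem (mem_sup_left (add_mem (mem_sup_left ?_) (mem_sup_right (add_mem ?_ hsd))))
    (mem_sup_right ⟨q y ⊗ₜ i, ?_⟩)
  · exact apply_mem_map₂ (brK K E) hsiS hz
  · exact apply_mem_map₂ (brK K E) hxr mem_top
  · rw [TensorProduct.lift.tmul]
    rfl

end Helpers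

/-- for a central ideal `I` of a finite-dimensional Lie algebra `L`,
`dim M(L) + dim(L² ∩ I) ≤ dim M(L/I) + dim M(I) + dim((L/I)^{ab} ⊗ I)`. -/
theorem schur_multiplier_central_ideal_bound (K L : Type) [Field K] [LieRing L]
    [LieAlgebra K L] [FiniteDimensional K L]
    (I : LieIdeal K L) (hc : I ≤ LieAlgebra.center K L) :
    ∀ (X Y Z : Type) (π : FreeLieAlgebra K X →ₗ⁅K⁆ L)
      (ρ : FreeLieAlgebra K Y →ₗ⁅K⁆ (L ⧸ I)) (τ : FreeLieAlgebra K Z →ₗ⁅K⁆ ↥I),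
      Function.Surjective π → Function.Surjective ρ → Function.Surjective τ →
      lieSchurMultiplierDim K X π
          + Module.finrank K
            ↥(((LieModule.lowerCentralSeries K L L 1 : LieSubmodule K L L) : Submodule K L)
                ⊓ (I : Submodule K L)) ≤
        lieSchurMultiplierDim K Y ρ + lieSchurMultiplierDim K Z τ
          + Module.finrank K
            (((L ⧸ I) ⧸ ((LieModule.lowerCentralSeries K (L ⧸ I) (L ⧸ I) 1 :
                LieSubmodule K (L ⧸ I) (L ⧸ I)) : Submodule K (L ⧸ I)))
              ⊗[K] ↥I) := by
  intro X Y Z π ρ τ hπ hρ hτ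
  rw [lcs_one_eq, lcs_one_eq, schurDim_eq π]
  set F := FreeLieAlgebra K X
  set R := LinearMap.ker (π : F →ₗ[K] L) with hR
  set N := Submodule.map₂ (brK K F) R ⊤ with hN
  let SI : LieIdeal K F := I.comap π
  let S : Submodule K F := SI.toSubmodule
  have hS : ∀ x, x ∈ S ↔ π x ∈ I := fun x => LieIdeal.mem_comap
  have hSR : ∀ x ∈ S, ∀ y, π ⁅x, y⁆ = 0 := by
    intro x hx y
    rw [LieHom.map_lie, ← lie_skew, (LieModule.mem_maxTrivSubmodule K L L _).1
      (hc ((hS x).1 hx)) (π y), neg_zero]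
  have hRS : R ≤ S := by
    intro x hx
    have hx' : π x = 0 := hx
    rw [hS, hx']
    exact I.zero_mem
  set SF := Submodule.map₂ (brK K F) S ⊤ with hSF
  set SS := Submodule.map₂ (brK K F) S S with hSS
  have hSFR : SF ≤ R := by
    rw [hSF, Submodule.map₂_le]
    intro x hx y _
    exact hSR x hx y
  have hNSF : N ≤ SF := Submodule.map₂_le_map₂_left hRS
  have hSFD : SF ≤ D2 K F := Submodule.map₂_le_map₂_left le_top
  have hfd1 : FiniteDimensional K (Submodule.map N.mkQ (D2 K F)) := fd_map_D2 π
  have hfd : ∀ A : Submodule K F, A ≤ D2 K F → FiniteDimensional K (Submodule.map N.mkQ A) :=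
    fun A hA => Submodule.finiteDimensional_of_le (Submodule.map_mono hA)
  have hP := hfd (S ⊓ D2 K F) inf_le_right
  have hSSD := hfd SS (Submodule.map₂_le_map₂ le_top le_top)
  -- first count
  have c1 := finrank_map_inf_ker (Submodule.map N.mkQ (S ⊓ D2 K F))
    (N.liftQ (π : F →ₗ[K] L) (hNSF.trans hSFR))
  rw [liftQ_map_mkQ, map_mkQ_inf_ker] at c1
  have e1 : S ⊓ D2 K F ⊓ LinearMap.ker (π : F →ₗ[K] L) = R ⊓ D2 K F := by
    rw [inf_right_comm, inf_eq_right.2 hRS]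
  have e2 : Submodule.map (π : F →ₗ[K] L) (S ⊓ D2 K F) = D2 K L ⊓ (I : Submodule K L) := by
    rw [← map_D2 π hπ]
    ext x
    constructor
    · rintro ⟨a, ⟨ha, hd⟩, rfl⟩
      exact ⟨⟨a, hd, rfl⟩, (hS a).1 ha⟩
    · rintro ⟨⟨a, hd, rfl⟩, hi⟩
      exact ⟨a, ⟨(hS a).2 hi, hd⟩, rfl⟩
  rw [e1, e2] at c1
  -- second count
  have hker : N ≤ LinearMap.ker SF.mkQ := by rw [Submodule.ker_mkQ]; exact hNSF
  have c2 := finrank_map_inf_ker (Submodule.map N.mkQ (S ⊓ D2 K F)) (N.liftQ SF.mkQ hker)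
  rw [liftQ_map_mkQ, map_mkQ_inf_ker, Submodule.ker_mkQ] at c2
  have e3 : S ⊓ D2 K F ⊓ SF = SF :=
    inf_eq_right.2 (le_inf (hSFR.trans hRS) hSFD)
  rw [e3] at c2
  -- multiplier of the quotient
  have c3 := (finrank_le_schurDim ρ hρ ((quotHom I).comp π)
    ((quotHom_surj I).comp hπ) SF.mkQ (by
      intro a e ha
      have ha' : a ∈ S := (hS a).2 ((quotHom_eq_zero I (π a)).1 ha)
      exact (Submodule.Quotient.mk_eq_zero SF).2
        (Submodule.apply_mem_map₂ (brK K F) ha' Submodule.mem_top))).2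
  have e4 : LinearMap.ker (((quotHom I).comp π : F →ₗ⁅K⁆ (L ⧸ I)) : F →ₗ[K] (L ⧸ I)) = S := by
    ext a
    rw [hS, ← quotHom_eq_zero]
    rfl
  rw [e4] at c3
  change Module.finrank K (Submodule.map SF.mkQ (S ⊓ D2 K F)) ≤ _ at c3
  -- multiplier of the ideal
  let σ : SI →ₗ⁅K⁆ I :=
    { toFun := fun x => ⟨π x, (hS x).1 x.2⟩
      map_add' := fun x y => Subtype.ext (map_add π (x : F) (y : F))
      map_smul' := fun c x => Subtype.ext (map_smul π c (x : F))
      map_lie' := fun {x y} => Subtype.ext (LieHom.map_lie π (x : F) (y : F)) }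
  have hσ : Function.Surjective σ := by
    rintro ⟨i, hi⟩
    obtain ⟨a, rfl⟩ := hπ i
    exact ⟨⟨a, (hS a).2 hi⟩, rfl⟩
  have c4 := (finrank_le_schurDim τ hτ σ hσ (N.mkQ ∘ₗ S.subtype) (by
      intro a e ha
      have ha' : (a : F) ∈ R := congrArg Subtype.val ha
      exact (Submodule.Quotient.mk_eq_zero N).2
        (Submodule.apply_mem_map₂ (brK K F) ha' Submodule.mem_top)))
  obtain ⟨c4f, c4⟩ := c4
  have e5 : Submodule.map N.mkQ SS ≤ Submodule.map (N.mkQ ∘ₗ S.subtype)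
      (LinearMap.ker (σ : SI →ₗ[K] I) ⊓ D2 K SI) := by
    rw [Submodule.map_comp]
    apply Submodule.map_mono
    rw [hSS, Submodule.map₂_le]
    intro x hx y hy
    refine ⟨⁅(⟨x, hx⟩ : SI), (⟨y, hy⟩ : SI)⁆, ⟨?_, ?_⟩, rfl⟩
    · exact Subtype.ext (hSR x hx y)
    · exact Submodule.apply_mem_map₂ (brK K SI) Submodule.mem_top Submodule.mem_top
  have c5 := (Submodule.finrank_mono e5).trans c4
  -- the tensor product
  obtain ⟨T, hT⟩ := exists_tensor π hπ I S hS hSR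
  have e6 : Submodule.map N.mkQ SF ≤
      Submodule.map N.mkQ SS ⊔ LinearMap.range (N.mkQ ∘ₗ T) := by
    refine (Submodule.map_mono hT).trans ?_
    rw [Submodule.map_sup, Submodule.map_sup, Submodule.mkQ_map_self, sup_bot_eq,
      LinearMap.range_comp]
  have hLI : FiniteDimensional K (L ⧸ I) :=
    Module.Finite.of_surjective (quotHom I : L →ₗ[K] (L ⧸ I)) (quotHom_surj I)
  have c6 := (Submodule.finrank_mono e6).trans
    (Submodule.finrank_add_le_finrank_add_finrank _ _)
  have c7 := LinearMap.finrank_range_le (N.mkQ ∘ₗ T)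
  have c8 : Module.finrank K (Submodule.map N.mkQ (R ⊓ D2 K F))
      + Module.finrank K ↥(D2 K L ⊓ (I : Submodule K L)) ≤
      lieSchurMultiplierDim K Y ρ + lieSchurMultiplierDim K Z τ
        + Module.finrank K (((L ⧸ I) ⧸ D2 K (L ⧸ I)) ⊗[K] ↥I) := by
    omega
  exact c8
end

section
/- Let L be an n-dimensional nilpotent Lie algebra of nilpotency class two with dim L² = m. Then dim M(L) = (1/2)(n+m−2)(n−m−1) + 1 if and only if L is isomorphic to one of: H(1) ⊕ A(n−3), L_{5,8}, or L_{6,26}. -/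
open Module

/-- `H(1) ⊕ A(k)`: the direct sum of the 3-dimensional Heisenberg Lie algebra `H(1)` and
the abelian Lie algebra `A(k)` of dimension `k`, given by the presentation with
generators `a₀, a₁, a₂, b₁, …, b_k`, relations `⁅a₀,a₁⁆ = a₂` and all other brackets of
generators trivial. -/
noncomputable def heisenbergPlusAbelian (K : Type) [Field K] (k : ℕ) : Type :=
  let F := FreeLieAlgebra K (Fin 3 ⊕ Fin k)
  let x : Fin 3 ⊕ Fin k → F := FreeLieAlgebra.of K
  F ⧸ LieSubmodule.lieSpan K F
    (insert (⁅x (.inl 0), x (.inl 1)⁆ - x (.inl 2))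
      {z | ∃ i j : Fin 3 ⊕ Fin k,
        ¬(i = .inl 0 ∧ j = .inl 1) ∧ ¬(i = .inl 1 ∧ j = .inl 0) ∧ z = ⁅x i, x j⁆})

noncomputable instance (K : Type) [Field K] (k : ℕ) :
    LieRing (heisenbergPlusAbelian K k) := by
  unfold heisenbergPlusAbelian; infer_instance

noncomputable instance (K : Type) [Field K] (k : ℕ) :
    LieAlgebra K (heisenbergPlusAbelian K k) := by
  unfold heisenbergPlusAbelian; infer_instance

/-- `L_{5,8} = ⟨x₁,…,x₅ : [x₁,x₂] = x₄, [x₁,x₃] = x₅⟩`, all other brackets of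
generators trivial. -/
noncomputable def lieL58 (K : Type) [Field K] : Type :=
  let F := FreeLieAlgebra K (Fin 5)
  let x : Fin 5 → F := FreeLieAlgebra.of K
  F ⧸ LieSubmodule.lieSpan K F
    {⁅x 0, x 1⁆ - x 3, ⁅x 0, x 2⁆ - x 4, ⁅x 0, x 3⁆, ⁅x 0, x 4⁆, ⁅x 1, x 2⁆,
     ⁅x 1, x 3⁆, ⁅x 1, x 4⁆, ⁅x 2, x 3⁆, ⁅x 2, x 4⁆, ⁅x 3, x 4⁆}

noncomputable instance (K : Type) [Field K] : LieRing (lieL58 K) := by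
  unfold lieL58; infer_instance
noncomputable instance (K : Type) [Field K] : LieAlgebra K (lieL58 K) := by
  unfold lieL58; infer_instance

/-- `L_{6,26} = ⟨x₁,…,x₆ : [x₁,x₂] = x₄, [x₁,x₃] = x₅, [x₂,x₃] = x₆⟩`, all other
brackets of generators trivial. -/
noncomputable def lieL626 (K : Type) [Field K] : Type :=
  let F := FreeLieAlgebra K (Fin 6)
  let x : Fin 6 → F := FreeLieAlgebra.of K
  F ⧸ LieSubmodule.lieSpan K F
    {⁅x 0, x 1⁆ - x 3, ⁅x 0, x 2⁆ - x 4, ⁅x 1, x 2⁆ - x 5,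
     ⁅x 0, x 3⁆, ⁅x 0, x 4⁆, ⁅x 0, x 5⁆, ⁅x 1, x 3⁆, ⁅x 1, x 4⁆, ⁅x 1, x 5⁆,
     ⁅x 2, x 3⁆, ⁅x 2, x 4⁆, ⁅x 2, x 5⁆, ⁅x 3, x 4⁆, ⁅x 3, x 5⁆, ⁅x 4, x 5⁆}

noncomputable instance (K : Type) [Field K] : LieRing (lieL626 K) := by
  unfold lieL626; infer_instance
noncomputable instance (K : Type) [Field K] : LieAlgebra K (lieL626 K) := by
  unfold lieL626; infer_instance



set_option linter.unusedSectionVars false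
set_option linter.unusedVariables false

section SchurLinear
variable {K V W : Type} [Field K] [AddCommGroup V] [Module K V] [AddCommGroup W] [Module K W]

/-- The Jacobi sum of a pairing `β` against the bracket `br`. -/
def cyc (br : V →ₗ[K] V →ₗ[K] W) (β : V →ₗ[K] W →ₗ[K] K) (a b c : V) : K :=
  β a (br b c) + β b (br c a) + β c (br a b)

/-- Pairings with vanishing Jacobi sum. -/
def Bsub (br : V →ₗ[K] V →ₗ[K] W) : Submodule K (V →ₗ[K] W →ₗ[K] K) where
  carrier := {β | ∀ a b c, cyc br β a b c = 0}
  zero_mem' := by intro a b c; simp [cyc]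
  add_mem' := by
    intro x y hx hy a b c
    have h1 := hx a b c
    have h2 := hy a b c
    simp only [cyc, LinearMap.add_apply] at *
    linear_combination h1 + h2
  smul_mem' := by
    intro t x hx a b c
    have h1 := hx a b c
    simp only [cyc, LinearMap.smul_apply, smul_eq_mul] at *
    linear_combination t * h1

/-- The Jacobi sum with two entries fixed. -/
def Tvw (br : V →ₗ[K] V →ₗ[K] W) (v w : V) : (V →ₗ[K] W →ₗ[K] K) →ₗ[K] (V →ₗ[K] K) where
  toFun β := (β v).comp (br w) - (β w).comp (br v) + (LinearMap.flip β) (br v w)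
  map_add' x y := by ext c; simp; ring
  map_smul' t x := by ext c; simp; ring

theorem br_swap {br : V →ₗ[K] V →ₗ[K] W} (halt : ∀ a, br a a = 0) (a b : V) :
    br a b = - br b a := by
  have h := halt (a + b)
  simp only [map_add, LinearMap.add_apply, halt, zero_add, add_zero] at h
  exact eq_neg_of_add_eq_zero_right h

theorem Tvw_apply {br : V →ₗ[K] V →ₗ[K] W} (halt : ∀ a, br a a = 0) (v w c : V)
    (β : V →ₗ[K] W →ₗ[K] K) : Tvw br v w β c = cyc br β v w c := by
  simp only [Tvw, cyc, LinearMap.coe_mk, AddHom.coe_mk, LinearMap.add_apply, LinearMap.sub_apply,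
    LinearMap.comp_apply, LinearMap.flip_apply]
  rw [br_swap halt c v, map_neg]; ring

theorem Bsub_le_ker {br : V →ₗ[K] V →ₗ[K] W} (halt : ∀ a, br a a = 0) (v w : V) :
    Bsub br ≤ LinearMap.ker (Tvw br v w) := by
  intro β hβ
  rw [LinearMap.mem_ker]
  ext c
  rw [Tvw_apply halt]
  exact hβ v w c

theorem exists_functional {z : W} (hz : z ≠ 0) : ∃ f : W →ₗ[K] K, f z = 1 := by
  obtain ⟨f, hf⟩ := Module.Projective.exists_dual_ne_zero K hz
  exact ⟨(f z)⁻¹ • f, by simp [hf]⟩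

theorem exists_functional_sub (p : Submodule K W) {z : W} (hz : z ∉ p) :
    ∃ f : W →ₗ[K] K, f z = 1 ∧ ∀ y ∈ p, f y = 0 := by
  obtain ⟨f, hf, hp⟩ := Submodule.exists_le_ker_of_notMem hz
  refine ⟨(f z)⁻¹ • f, by simp [hf], fun y hy => ?_⟩
  have := hp hy
  rw [LinearMap.mem_ker] at this
  simp [this]

theorem range_Tvw {br : V →ₗ[K] V →ₗ[K] W} (halt : ∀ a, br a a = 0) {v w : V}
    (h : br v w ≠ 0) :
    LinearMap.range (Tvw br v w) = (Submodule.span K {v, w}).dualAnnihilator := by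
  apply le_antisymm
  · rintro _ ⟨β, rfl⟩
    rw [Submodule.mem_dualAnnihilator]
    intro x hx
    have : Submodule.span K {v, w} ≤ LinearMap.ker (Tvw br v w β) := by
      rw [Submodule.span_le]
      rintro y (rfl | rfl)
      · simp only [SetLike.mem_coe, LinearMap.mem_ker]
        rw [Tvw_apply halt, cyc, halt, br_swap halt w]; simp
      · simp only [SetLike.mem_coe, LinearMap.mem_ker]
        rw [Tvw_apply halt, cyc, halt, br_swap halt y]; simp
    exact this hx
  · intro g hg
    rw [Submodule.mem_dualAnnihilator] at hg
    obtain ⟨f, hf⟩ := exists_functional (K := K) h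
    have hv : g v = 0 := hg v (Submodule.subset_span (by simp))
    have hw : g w = 0 := hg w (Submodule.subset_span (by simp))
    refine ⟨g.smulRight f, ?_⟩
    ext c
    rw [Tvw_apply halt]
    simp [cyc, hv, hw, hf]

theorem indep_vw {br : V →ₗ[K] V →ₗ[K] W} (halt : ∀ a, br a a = 0) {v w : V}
    (h : br v w ≠ 0) : LinearIndependent K ![v, w] := by
  rw [LinearIndependent.pair_iff]
  intro s t hst
  constructor
  · by_contra hs
    have := congrArg (fun x => br x w) hst
    simp [halt, hs, h] at this
  · by_contra hs
    have := congrArg (fun x => br v x) hst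
    simp [halt, hs, h] at this

theorem finrank_span_vw {br : V →ₗ[K] V →ₗ[K] W} (halt : ∀ a, br a a = 0) {v w : V}
    (h : br v w ≠ 0) : finrank K (Submodule.span K {v, w}) = 2 := by
  have := finrank_span_eq_card (indep_vw halt h)
  rw [Matrix.range_cons, Matrix.range_cons, Matrix.range_empty, Set.union_empty,
    Set.singleton_union] at this
  simpa using this

variable [FiniteDimensional K V] [FiniteDimensional K W]

theorem finrank_ker_Tvw {br : V →ₗ[K] V →ₗ[K] W} (halt : ∀ a, br a a = 0) {v w : V}
    (h : br v w ≠ 0) :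
    finrank K (LinearMap.ker (Tvw br v w)) + finrank K V = finrank K V * finrank K W + 2 := by
  have h1 := LinearMap.finrank_range_add_finrank_ker (K := K) (V := V →ₗ[K] W →ₗ[K] K)
    (V₂ := V →ₗ[K] K) (Tvw br v w)
  have h2 : 2 + finrank K (LinearMap.range (Tvw br v w)) = finrank K V := by
    rw [← Subspace.finrank_add_finrank_dualAnnihilator_eq (Submodule.span K {v, w}),
      finrank_span_vw halt h, range_Tvw halt h]
  have h3 : finrank K (V →ₗ[K] W →ₗ[K] K) = finrank K V * finrank K W := by
    rw [finrank_linearMap, finrank_linearMap, finrank_self, mul_one]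
  omega

theorem finrank_Bsub_iff {br : V →ₗ[K] V →ₗ[K] W} (halt : ∀ a, br a a = 0) {v w : V}
    (h : br v w ≠ 0) :
    finrank K (Bsub br) + finrank K V = finrank K V * finrank K W + 2 ↔
      ∀ β, (∀ c, cyc br β v w c = 0) → ∀ a b c, cyc br β a b c = 0 := by
  have h1 := finrank_ker_Tvw halt h
  have hle := Bsub_le_ker halt v w
  constructor
  · intro he β hβ
    have h2 : finrank K (Bsub br) = finrank K (LinearMap.ker (Tvw br v w)) := by omega
    have : Bsub br = LinearMap.ker (Tvw br v w) :=
      Submodule.eq_of_le_of_finrank_eq (K := K) (V := V →ₗ[K] W →ₗ[K] K) hle h2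
    have hm : β ∈ Bsub br := by
      rw [this, LinearMap.mem_ker]; ext c; rw [Tvw_apply halt]; exact hβ c
    exact hm
  · intro he
    have : Bsub br = LinearMap.ker (Tvw br v w) := by
      refine le_antisymm hle fun β hβ => ?_
      apply he
      intro c
      rw [LinearMap.mem_ker] at hβ
      rw [← Tvw_apply halt, hβ]; rfl
    rw [this]; exact h1

/-- The case of at most three generators. -/
theorem cyc_of_three {br : V →ₗ[K] V →ₗ[K] W} (halt : ∀ a, br a a = 0) {v w u : V}
    (hs : ∀ x : V, ∃ r s t : K, x = r • v + s • w + t • u)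
    (β : V →ₗ[K] W →ₗ[K] K) (hβ : ∀ c, cyc br β v w c = 0) (a b c : V) :
    cyc br β a b c = 0 := by
  obtain ⟨a0, a1, a2, rfl⟩ := hs a
  obtain ⟨b0, b1, b2, rfl⟩ := hs b
  obtain ⟨c0, c1, c2, rfl⟩ := hs c
  have h := hβ u
  simp only [cyc, map_add, map_smul, LinearMap.add_apply, LinearMap.smul_apply, halt,
    br_swap halt w v, br_swap halt u v, br_swap halt u w, smul_eq_mul, smul_zero, map_neg,
    map_zero] at *
  linear_combination (a0 * (b1 * c2 - b2 * c1) - a1 * (b0 * c2 - b2 * c0)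
    + a2 * (b0 * c1 - b1 * c0)) * h

theorem exists_third {v w : V} (hd : finrank K V ≤ 3)
    (h2 : finrank K (Submodule.span K {v, w}) = 2) :
    ∃ u, ∀ x : V, ∃ r s t : K, x = r • v + s • w + t • u := by
  by_cases htop : Submodule.span K {v, w} = ⊤
  · refine ⟨0, fun x => ?_⟩
    have hx : x ∈ Submodule.span K {v, w} := by rw [htop]; trivial
    obtain ⟨r, s, hrs⟩ := Submodule.mem_span_pair.1 hx
    exact ⟨r, s, 0, by simp [hrs]⟩
  · obtain ⟨u, -, hu⟩ := SetLike.exists_of_lt (lt_top_iff_ne_top.2 htop)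
    have hlt : Submodule.span K {v, w} < Submodule.span K {u, v, w} := by
      refine lt_of_le_of_ne (Submodule.span_mono (by simp)) fun he => hu ?_
      rw [he]; exact Submodule.subset_span (by simp)
    have h3 := Submodule.finrank_lt_finrank_of_lt hlt
    have htop' : Submodule.span K {u, v, w} = ⊤ :=
      Submodule.eq_top_of_finrank_eq (le_antisymm (Submodule.finrank_le _) (by omega))
    refine ⟨u, fun x => ?_⟩
    have hx : x ∈ Submodule.span K {u, v, w} := by rw [htop']; trivial
    obtain ⟨t, r, s, hrs⟩ := Submodule.mem_span_triple.1 hx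
    exact ⟨r, s, t, by rw [← hrs]; abel⟩

/-- The Heisenberg case. -/
theorem cyc_of_heis {br : V →ₗ[K] V →ₗ[K] W} (halt : ∀ a, br a a = 0) {v w : V}
    (hs : ∀ x : V, ∃ (r s : K) (y : V), x = r • v + s • w + y ∧ ∀ t, br y t = 0)
    (β : V →ₗ[K] W →ₗ[K] K) (hβ : ∀ c, cyc br β v w c = 0) (a b c : V) :
    cyc br β a b c = 0 := by
  obtain ⟨a0, a1, a2, rfl, ha⟩ := hs a
  obtain ⟨b0, b1, b2, rfl, hb⟩ := hs b
  obtain ⟨c0, c1, c2, rfl, hc⟩ := hs c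
  have ha' : ∀ t, br t a2 = 0 := fun t => by rw [br_swap halt, ha, neg_zero]
  have hb' : ∀ t, br t b2 = 0 := fun t => by rw [br_swap halt, hb, neg_zero]
  have hc' : ∀ t, br t c2 = 0 := fun t => by rw [br_swap halt, hc, neg_zero]
  have h1 := hβ a2
  have h2 := hβ b2
  have h3 := hβ c2
  simp only [cyc, map_add, map_smul, LinearMap.add_apply, LinearMap.smul_apply, halt,
    br_swap halt w v, smul_eq_mul, smul_zero, map_neg, ha, hb, hc, ha', hb', hc',
    map_zero, add_zero, zero_add] at *
  linear_combination (b0 * c1 - b1 * c0) * h1 + (c0 * a1 - c1 * a0) * h2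
    + (a0 * b1 - a1 * b0) * h3

/-- With at least four generators, extremality forces brackets with `v` to be proportional. -/
theorem prop_step {br : V →ₗ[K] V →ₗ[K] W} (halt : ∀ a, br a a = 0) (hd : 4 ≤ finrank K V)
    {v w : V} (h : br v w ≠ 0)
    (hB : ∀ β, (∀ c, cyc br β v w c = 0) → ∀ a b c, cyc br β a b c = 0) (b : V) :
    br v b ∈ Submodule.span K {br v w} := by
  by_contra hb
  obtain ⟨f, hf1, hf0⟩ := exists_functional_sub (K := K) _ hb
  have hlt : Submodule.span K {v, w, b} ≠ ⊤ := by
    intro he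
    have h3 : finrank K (Submodule.span K {v, w, b}) ≤ 3 := by
      classical
      have := finrank_span_finset_le_card (R := K) ({v, w, b} : Finset V)
      have h4 : ({v, w, b} : Finset V).card ≤ 3 := Finset.card_le_three
      simp only [Finset.coe_insert, Finset.coe_singleton] at this
      exact this.trans h4
    rw [he, finrank_top] at h3
    omega
  obtain ⟨c, -, hc⟩ := SetLike.exists_of_lt (lt_top_iff_ne_top.2 hlt)
  obtain ⟨g, hg1, hg0⟩ := exists_functional_sub (K := K) _ hc
  have gv : g v = 0 := hg0 v (Submodule.subset_span (by simp))
  have gw : g w = 0 := hg0 w (Submodule.subset_span (by simp))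
  have gb : g b = 0 := hg0 b (Submodule.subset_span (by simp))
  have fz : f (br v w) = 0 := hf0 _ (Submodule.mem_span_singleton_self _)
  have := hB (g.smulRight f) (fun c => by simp [cyc, gv, gw, fz]) v b c
  simp [cyc, gv, gb, hg1, hf1] at this

theorem one_dim {br : V →ₗ[K] V →ₗ[K] W} (halt : ∀ a, br a a = 0) (hd : 4 ≤ finrank K V)
    (hB : ∀ v w, br v w ≠ 0 → ∀ β, (∀ c, cyc br β v w c = 0) → ∀ a b c, cyc br β a b c = 0)
    {v w : V} (h : br v w ≠ 0) (b c : V) :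
    br b c ∈ Submodule.span K {br v w} := by
  have key : ∀ {v w : V}, br v w ≠ 0 → ∀ b, br w b ∈ Submodule.span K {br v w} := by
    intro v w h b
    have h' : br w v ≠ 0 := by rw [br_swap halt]; simpa using h
    have := prop_step halt hd h' (hB w v h') b
    rw [br_swap halt w v] at this
    rw [← Set.neg_singleton, Submodule.span_neg] at this
    exact this
  by_cases hb : br v b = 0
  · have h2 : br v (w + b) ≠ 0 := by simpa [hb] using h
    have h3 := key h2 c
    have h4 := key h c
    simp only [map_add, LinearMap.add_apply, hb, add_zero] at h3
    simpa using Submodule.sub_mem _ h3 h4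
  · have h3 := key hb c
    have h4 := prop_step halt hd h (hB v w h) b
    exact (Submodule.span_le.2 (Set.singleton_subset_iff.2 h4)) h3

/-- Structure in the one-dimensional case. -/
theorem heis_structure {br : V →ₗ[K] V →ₗ[K] W} (halt : ∀ a, br a a = 0)
    {v w : V} (h : br v w ≠ 0) (h1 : ∀ b c, br b c ∈ Submodule.span K {br v w})
    (hB : ∀ β, (∀ c, cyc br β v w c = 0) → ∀ a b c, cyc br β a b c = 0) (b c : V)
    (hvb : br v b = 0) (hwb : br w b = 0) (hvc : br v c = 0) (hwc : br w c = 0) :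
    br b c = 0 := by
  obtain ⟨f, hf⟩ := exists_functional (K := K) h
  have hom : ∀ b c, br b c = f (br b c) • br v w := by
    intro b c
    obtain ⟨t, ht⟩ := Submodule.mem_span_singleton.1 (h1 b c)
    rw [← ht, map_smul, hf]; simp
  have := hB ((-(f.comp (br w))).smulRight f) (fun c => by
    simp [cyc, hf, halt, br_swap halt w v]) v b c
  simp [cyc, hf, hwb, hwc, br_swap halt w v] at this
  rw [hom, this, zero_smul]

end SchurLinear

section SchurHopf
variable {K L : Type} [Field K] [LieRing L] [LieAlgebra K L]

variable (K L) in
/-- Scalar valued 2-cocycles. -/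
def Z2 : Submodule K (L →ₗ[K] L →ₗ[K] K) where
  carrier := {σ | (∀ x, σ x x = 0) ∧
    ∀ x y z, σ x ⁅y, z⁆ + σ y ⁅z, x⁆ + σ z ⁅x, y⁆ = 0}
  zero_mem' := by simp
  add_mem' := by
    rintro a b ⟨ha, ha'⟩ ⟨hb, hb'⟩
    refine ⟨fun x => by simp [ha, hb], fun x y z => ?_⟩
    simp only [LinearMap.add_apply]
    linear_combination ha' x y z + hb' x y z
  smul_mem' := by
    rintro t a ⟨ha, ha'⟩
    refine ⟨fun x => by simp [ha], fun x y z => ?_⟩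
    simp only [LinearMap.smul_apply, smul_eq_mul]
    linear_combination t * ha' x y z

/-- The central extension defined by a cocycle. -/
def CExt (_ : Z2 K L) : Type := L × K

instance (σ : Z2 K L) : AddCommGroup (CExt σ) := inferInstanceAs (AddCommGroup (L × K))
instance (σ : Z2 K L) : Module K (CExt σ) := inferInstanceAs (Module K (L × K))

/-- First component. -/
def CExt.p (σ : Z2 K L) : CExt σ →ₗ[K] L := LinearMap.fst K L K
/-- Second component. -/
def CExt.q (σ : Z2 K L) : CExt σ →ₗ[K] K := LinearMap.snd K L K

theorem CExt.ext' {σ : Z2 K L} {x y : CExt σ} (h1 : CExt.p σ x = CExt.p σ y)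
    (h2 : CExt.q σ x = CExt.q σ y) : x = y := Prod.ext h1 h2

instance (σ : Z2 K L) : Bracket (CExt σ) (CExt σ) :=
  ⟨fun x y => (⁅CExt.p σ x, CExt.p σ y⁆, σ.1 (CExt.p σ x) (CExt.p σ y))⟩

theorem CExt.p_lie (σ : Z2 K L) (x y : CExt σ) :
    CExt.p σ ⁅x, y⁆ = ⁅CExt.p σ x, CExt.p σ y⁆ := rfl
theorem CExt.q_lie (σ : Z2 K L) (x y : CExt σ) :
    CExt.q σ ⁅x, y⁆ = σ.1 (CExt.p σ x) (CExt.p σ y) := rfl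

theorem Z2.swap (σ : Z2 K L) (x y : L) : σ.1 x y = - σ.1 y x := br_swap_aux x y
where
  br_swap_aux (x y : L) : σ.1 x y = - σ.1 y x := by
    have h := σ.2.1 (x + y)
    simp only [map_add, LinearMap.add_apply, σ.2.1, zero_add, add_zero] at h
    exact eq_neg_of_add_eq_zero_right h

instance (σ : Z2 K L) : LieRing (CExt σ) where
  add_lie x y z := by
    apply CExt.ext' <;> simp [CExt.p_lie, CExt.q_lie]
  lie_add x y z := by
    apply CExt.ext' <;> simp [CExt.p_lie, CExt.q_lie]
  lie_self x := by
    apply CExt.ext' <;> simp [CExt.p_lie, CExt.q_lie, σ.2.1]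
  leibniz_lie x y z := by
    apply CExt.ext'
    · simp [CExt.p_lie]
    · simp only [CExt.p_lie, CExt.q_lie, map_add]
      have h := σ.2.2 (CExt.p σ x) (CExt.p σ y) (CExt.p σ z)
      rw [Z2.swap σ ⁅_, _⁆, ← lie_skew (CExt.p σ x) (CExt.p σ z), map_neg]
      linear_combination h

instance (σ : Z2 K L) : LieAlgebra K (CExt σ) where
  lie_smul t x y := by
    apply CExt.ext' <;> simp [CExt.p_lie, CExt.q_lie]

theorem lcs_one_eq_span (F : Type) [LieRing F] [LieAlgebra K F] :
    (LieModule.lowerCentralSeries K F F 1).toSubmodule =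
      Submodule.span K {z | ∃ a b : F, ⁅a, b⁆ = z} := by
  rw [LieModule.lowerCentralSeries_succ, LieModule.lowerCentralSeries_zero,
    LieSubmodule.lieIdeal_oper_eq_linear_span']
  congr 1
  ext z
  simp

theorem exists_lift {X : Type} (π : FreeLieAlgebra K X →ₗ⁅K⁆ L) (σ : Z2 K L) :
    ∃ φ : FreeLieAlgebra K X →ₗ[K] K, ∀ a b, φ ⁅a, b⁆ = σ.1 (π a) (π b) := by
  let f : X → CExt σ := fun x => ((π (FreeLieAlgebra.of K x), (0 : K)) : L × K)
  let Φ : FreeLieAlgebra K X →ₗ⁅K⁆ CExt σ := FreeLieAlgebra.lift K f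
  let P : CExt σ →ₗ⁅K⁆ L := { CExt.p σ with map_lie' := fun {x y} => CExt.p_lie σ x y }
  have hP : P.comp Φ = π := by
    apply FreeLieAlgebra.hom_ext
    intro x
    simp only [LieHom.comp_apply, Φ, FreeLieAlgebra.lift_of_apply]
    rfl
  have hp : ∀ a, CExt.p σ (Φ a) = π a := fun a => LieHom.congr_fun hP a
  refine ⟨(CExt.q σ).comp (Φ : FreeLieAlgebra K X →ₗ[K] CExt σ), fun a b => ?_⟩
  simp only [LinearMap.comp_apply, LieHom.coe_toLinearMap, LieHom.map_lie, CExt.q_lie, hp]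

theorem finrank_quot_eq_Z2 {X : Type} (π : FreeLieAlgebra K X →ₗ⁅K⁆ L)
    (hπ : Function.Surjective π) (D S : Submodule K (FreeLieAlgebra K X))
    (hD : D = Submodule.span K {z | ∃ a b : FreeLieAlgebra K X, ⁅a, b⁆ = z})
    (hS : S = Submodule.span K {z | ∃ r : FreeLieAlgebra K X, π r = 0 ∧ ∃ a : FreeLieAlgebra K X, ⁅r, a⁆ = z}) :
    Nonempty (Dual K (D ⧸ S.comap D.subtype) ≃ₗ[K] Z2 K L) := by
  have hmem : ∀ a b, ⁅a, b⁆ ∈ D := fun a b => by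
    rw [hD]; exact Submodule.subset_span ⟨a, b, rfl⟩
  obtain ⟨s, hs⟩ := LinearMap.exists_rightInverse_of_surjective
    (π : FreeLieAlgebra K X →ₗ[K] L) (LinearMap.range_eq_top.2 hπ)
  have hs' : ∀ x, π (s x) = x := fun x => LinearMap.congr_fun hs x
  set T := S.comap D.subtype with hT
  let m : FreeLieAlgebra K X → FreeLieAlgebra K X → D ⧸ T := fun a b => T.mkQ ⟨⁅a, b⁆, hmem a b⟩
  have m0 : ∀ r a, π r = 0 → m r a = 0 := by
    intro r a hr
    simp only [m, Submodule.mkQ_apply, Submodule.Quotient.mk_eq_zero, hT, Submodule.mem_comap]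
    rw [hS]; exact Submodule.subset_span ⟨r, hr, a, rfl⟩
  have mal : ∀ a b c, m (a + b) c = m a c + m b c := by
    intro a b c
    simp only [m, ← map_add]; congr 1; ext; simp
  have mar : ∀ a b c, m a (b + c) = m a b + m a c := by
    intro a b c
    simp only [m, ← map_add]; congr 1; ext; simp
  have msl : ∀ (t : K) a b, m (t • a) b = t • m a b := by
    intro a b c
    simp only [m, ← map_smul]; congr 1; ext; simp
  have msr : ∀ (t : K) a b, m a (t • b) = t • m a b := by
    intro a b c
    simp only [m, ← map_smul]; congr 1; ext; simp
  have mself : ∀ a, m a a = 0 := by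
    intro a; simp [m]; exact T.zero_mem
  have msw : ∀ a b, m a b = - m b a := by
    intro a b
    have h := mself (a + b)
    rw [mal, mar, mar, mself, mself, zero_add, add_zero] at h
    exact eq_neg_of_add_eq_zero_left h
  have m0' : ∀ r a, π r = 0 → m a r = 0 := by
    intro r a hr; rw [msw, m0 r a hr, neg_zero]
  have mpi : ∀ a a' b b', π a = π a' → π b = π b' → m a b = m a' b' := by
    intro a a' b b' ha hb
    have h1 : m a b = m a' b := by
      have : a = a' + (a - a') := by abel
      rw [this, mal, m0 (a - a') b (by simp [ha]), add_zero]
    have h2 : m a' b = m a' b' := by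
      have : b = b' + (b - b') := by abel
      rw [this, mar, m0' (b - b') a' (by simp [hb]), add_zero]
    rw [h1, h2]
  have mjac : ∀ a b c, m a ⁅b, c⁆ + m b ⁅c, a⁆ + m c ⁅a, b⁆ = 0 := by
    intro a b c
    simp only [m, ← map_add]
    have : (⟨⁅a, ⁅b, c⁆⁆, hmem _ _⟩ + ⟨⁅b, ⁅c, a⁆⁆, hmem _ _⟩ + ⟨⁅c, ⁅a, b⁆⁆, hmem _ _⟩ : D) = 0 := by
      ext; simpa using lie_jacobi a b c
    rw [this, map_zero]
  let Φ : Dual K (D ⧸ T) →ₗ[K] Z2 K L :=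
    { toFun := fun f => ⟨LinearMap.mk₂ K (fun x y => f (m (s x) (s y)))
          (fun a b c => by simp [mal]) (fun t a b => by simp [msl])
          (fun a b c => by simp [mar]) (fun t a b => by simp [msr]), by
            refine ⟨fun x => by simp [mself], fun x y z => ?_⟩
            simp only [LinearMap.mk₂_apply]
            rw [mpi (s x) (s x) (s ⁅y, z⁆) ⁅s y, s z⁆ rfl (by simp [hs']),
              mpi (s y) (s y) (s ⁅z, x⁆) ⁅s z, s x⁆ rfl (by simp [hs']),
              mpi (s z) (s z) (s ⁅x, y⁆) ⁅s x, s y⁆ rfl (by simp [hs']),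
              ← map_add, ← map_add, mjac, map_zero]⟩
      map_add' := fun f g => by ext x y; simp
      map_smul' := fun t f => by ext x y; simp }
  have hΦ : ∀ f x y, (Φ f).1 x y = f (m (s x) (s y)) := fun f x y => rfl
  refine ⟨LinearEquiv.ofBijective Φ ⟨?_, ?_⟩⟩
  · rw [injective_iff_map_eq_zero]
    intro f hf
    have h0 : ∀ a b, f (m a b) = 0 := by
      intro a b
      rw [mpi a (s (π a)) b (s (π b)) (by simp [hs']) (by simp [hs']), ← hΦ, hf]
      rfl
    ext ⟨z, hz⟩
    simp only [LinearMap.comp_apply, LinearMap.zero_apply]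
    have hz' := hz
    rw [hD] at hz'
    induction hz' using Submodule.span_induction with
    | mem x hx => obtain ⟨a, b, rfl⟩ := hx; exact h0 a b
    | zero =>
      have : (⟨0, hz⟩ : D) = 0 := rfl
      rw [this, map_zero, map_zero]
    | add x y hx hy ihx ihy =>
      rw [← hD] at hx hy
      have : (⟨x + y, hz⟩ : D) = ⟨x, hx⟩ + ⟨y, hy⟩ := rfl
      rw [this, map_add, map_add, ihx hx, ihy hy, add_zero]
    | smul t x hx ih =>
      rw [← hD] at hx
      have : (⟨t • x, hz⟩ : D) = t • ⟨x, hx⟩ := rfl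
      rw [this, map_smul, map_smul, ih hx, smul_zero]
  · intro σ
    obtain ⟨φ, hφ⟩ := exists_lift π σ
    have hker : T ≤ LinearMap.ker (φ.comp D.subtype) := by
      rintro ⟨z, hzD⟩ hz
      have hz2 : z ∈ S := hz
      have hle : S ≤ LinearMap.ker φ := by
        rw [hS, Submodule.span_le]
        rintro _ ⟨r, hr, a, rfl⟩
        simp [hφ, hr]
      exact hle hz2
    refine ⟨T.liftQ (φ.comp D.subtype) hker, ?_⟩
    ext x y
    rw [hΦ]
    simp only [m, Submodule.mkQ_apply, Submodule.liftQ_apply, LinearMap.comp_apply,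
      Submodule.subtype_apply, hφ, hs']

theorem schurDim_add [FiniteDimensional K L] {X : Type} (π : FreeLieAlgebra K X →ₗ⁅K⁆ L)
    (hπ : Function.Surjective π) :
    lieSchurMultiplierDim K X π + lieDerivedDim K L = finrank K (Z2 K L) := by
  set D : Submodule K (FreeLieAlgebra K X) :=
    (LieModule.lowerCentralSeries K (FreeLieAlgebra K X) (FreeLieAlgebra K X) 1).toSubmodule with hDdef
  set S : Submodule K (FreeLieAlgebra K X) :=
    (⁅π.ker, (⊤ : LieIdeal K (FreeLieAlgebra K X))⁆ :
      LieIdeal K (FreeLieAlgebra K X)).toSubmodule with hSdef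
  have hD : D = Submodule.span K {z | ∃ a b : FreeLieAlgebra K X, ⁅a, b⁆ = z} := lcs_one_eq_span _
  have hS : S = Submodule.span K {z | ∃ r : FreeLieAlgebra K X, π r = 0 ∧ ∃ a : FreeLieAlgebra K X, ⁅r, a⁆ = z} := by
    rw [hSdef, LieSubmodule.lieIdeal_oper_eq_linear_span']
    congr 1
    ext z
    simp
  obtain ⟨e⟩ := finrank_quot_eq_Z2 π hπ D S hD hS
  set T := S.comap D.subtype with hT
  have hfin : Module.Finite K (D ⧸ T) := by
    rw [← Module.finite_dual_iff]
    exact Module.Finite.equiv e.symm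
  rw [← e.finrank_eq, Subspace.dual_finrank_eq]
  let R : Submodule K (FreeLieAlgebra K X) := LinearMap.ker (π : FreeLieAlgebra K X →ₗ[K] L)
  have hTR : T ≤ LinearMap.ker ((π : FreeLieAlgebra K X →ₗ[K] L).comp D.subtype) := by
    rintro ⟨z, hzD⟩ hz
    have hz2 : z ∈ S := hz
    have hle : S ≤ R := by
      rw [hS, Submodule.span_le]
      rintro _ ⟨r, hr, a, rfl⟩
      simp [R, hr]
    exact hle hz2
  let ρ : (D ⧸ T) →ₗ[K] L := T.liftQ _ hTR
  have hrange : LinearMap.range ρ =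
      (LieModule.lowerCentralSeries K L L 1).toSubmodule := by
    rw [lcs_one_eq_span, Submodule.range_liftQ, LinearMap.range_comp, Submodule.range_subtype, hD,
      Submodule.map_span]
    congr 1
    ext z
    constructor
    · rintro ⟨_, ⟨a, b, rfl⟩, rfl⟩
      exact ⟨π a, π b, by simp⟩
    · rintro ⟨a, b, rfl⟩
      obtain ⟨a, rfl⟩ := hπ a
      obtain ⟨b, rfl⟩ := hπ b
      exact ⟨_, ⟨a, b, rfl⟩, by simp⟩
  have h1 := LinearMap.finrank_range_add_finrank_ker ρ
  rw [hrange] at h1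
  rw [← h1, add_comm]
  unfold lieDerivedDim
  congr 1
  let RD : Submodule K (FreeLieAlgebra K X) :=
    (π.ker ⊓ LieModule.lowerCentralSeries K (FreeLieAlgebra K X) (FreeLieAlgebra K X) 1 :
      LieIdeal K (FreeLieAlgebra K X)).toSubmodule
  have hRD : RD ≤ D := fun x hx => hx.2
  let g : RD →ₗ[K] D ⧸ T := T.mkQ.comp (Submodule.inclusion hRD)
  have hg1 : LinearMap.ker g = S.comap RD.subtype := by
    ext x
    simp only [g, LinearMap.mem_ker, LinearMap.comp_apply, Submodule.mkQ_apply,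
      Submodule.Quotient.mk_eq_zero]
    rfl
  have hg2 : LinearMap.range g = LinearMap.ker ρ := by
    ext x
    obtain ⟨⟨z, hz⟩, rfl⟩ := T.mkQ_surjective x
    have hρ : ρ (T.mkQ ⟨z, hz⟩) = π z := rfl
    rw [LinearMap.mem_ker, hρ]
    constructor
    · rintro ⟨y, hy⟩
      rw [← hρ, ← hy]
      have : π y.1 = 0 := y.2.1
      exact this
    · intro h
      exact ⟨⟨z, ⟨h, hz⟩⟩, rfl⟩
  have e2 := (LinearMap.quotKerEquivRange g).finrank_eq
  rw [hg2] at e2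
  rw [← e2, hg1]
  rfl

end SchurHopf

section SchurAlt
variable {K V W L : Type} [Field K] [AddCommGroup V] [Module K V] [AddCommGroup W] [Module K W]
  [LieRing L] [LieAlgebra K L]

variable (K V) in
/-- Alternating bilinear forms. -/
def AltB : Submodule K (V →ₗ[K] V →ₗ[K] K) where
  carrier := {σ | ∀ x, σ x x = 0}
  zero_mem' := by simp
  add_mem' := by
    intro a b ha hb x
    have h1 := ha x
    have h2 := hb x
    simp [h1, h2]
  smul_mem' := by
    intro t a ha x
    have h1 := ha x
    simp [h1]

theorem upd0 (a c x : V) : Function.update ![a, c] 0 x = ![x, c] := by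
  ext i; fin_cases i <;> rfl
theorem upd1 (a c x : V) : Function.update ![a, c] 1 x = ![a, x] := by
  ext i; fin_cases i <;> rfl

/-- Alternating bilinear forms as alternating maps. -/
def altEquiv : (V [⋀^Fin 2]→ₗ[K] K) ≃ₗ[K] AltB K V where
  toFun f := ⟨LinearMap.mk₂ K (fun x y => f ![x, y])
    (fun a b c => by simpa only [upd0] using f.map_update_add ![a, c] 0 a b)
    (fun t a c => by simpa only [upd0] using f.map_update_smul ![a, c] 0 t a)
    (fun a b c => by simpa only [upd1] using f.map_update_add ![a, b] 1 b c)
    (fun t a c => by simpa only [upd1] using f.map_update_smul ![a, c] 1 t c),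
    fun x => f.map_eq_zero_of_eq ![x, x] (i := 0) (j := 1) rfl (by decide)⟩
  map_add' f g := by ext x y; simp
  map_smul' t f := by ext x y; simp
  invFun σ :=
    { toFun := fun v => σ.1 (v 0) (v 1)
      map_update_add' := by
        intro _ v i x y
        fin_cases i <;> simp [Function.update]
      map_update_smul' := by
        intro _ v i x y
        fin_cases i <;> simp [Function.update]
      map_eq_zero_of_eq' := by
        intro v i j hij hne
        have h : v 0 = v 1 := by
          fin_cases i <;> fin_cases j <;> first | exact absurd rfl hne | exact hij | exact hij.symm
        rw [h]; exact σ.2 _ }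
  left_inv f := by
    ext v
    simp only [AlternatingMap.coe_mk, MultilinearMap.coe_mk, LinearMap.mk₂_apply]
    congr 1
    ext i
    fin_cases i <;> rfl
  right_inv σ := by
    ext x y
    simp

theorem finrank_AltB [FiniteDimensional K V] :
    finrank K (AltB K V) = (finrank K V).choose 2 := by
  rw [← (altEquiv (K := K) (V := V)).finrank_eq,
    (exteriorPower.alternatingMapLinearEquiv (R := K) (M := V) (N := K) (n := 2)).finrank_eq,
    ← exteriorPower.finrank_eq (R := K) (M := V)]
  exact Subspace.dual_finrank_eq

theorem Z2_equiv (e : L ≃ₗ[K] V × W) {br : V →ₗ[K] V →ₗ[K] W} (halt : ∀ a, br a a = 0)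
    (hbr : ∀ x y, e ⁅x, y⁆ = (0, br (e x).1 (e y).1))
    (hspan : Submodule.span K {z | ∃ a b, br a b = z} = ⊤) :
    Nonempty (Z2 K L ≃ₗ[K] AltB K V × Bsub br) := by
  have hbr' : ∀ x y, ⁅x, y⁆ = e.symm (0, br (e x).1 (e y).1) := fun x y => by
    rw [← hbr, LinearEquiv.symm_apply_apply]
  have hW : ∀ (σ : Z2 K L) (x : L) (hx : (e x).1 = 0) (w : W), σ.1 x (e.symm (0, w)) = 0 := by
    intro σ x hx w
    have hw : w ∈ Submodule.span K {z | ∃ a b, br a b = z} := by rw [hspan]; trivial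
    induction hw using Submodule.span_induction with
    | mem w hw =>
      obtain ⟨a, b, rfl⟩ := hw
      have h := σ.2.2 x (e.symm (a, 0)) (e.symm (b, 0))
      simp only [hbr', LinearEquiv.apply_symm_apply, hx, map_zero, LinearMap.zero_apply,
        add_zero, Prod.mk_zero_zero] at h
      exact h
    | zero => rw [Prod.mk_zero_zero, map_zero, map_zero]
    | add a b _ _ iha ihb =>
      have : ((0, a + b) : V × W) = (0, a) + (0, b) := by simp
      rw [this, map_add, map_add, iha, ihb, add_zero]
    | smul t a _ iha =>
      have : ((0, t • a) : V × W) = t • (0, a) := by simp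
      rw [this, map_smul, map_smul, iha, smul_zero]
  let i1 : V →ₗ[K] L := (e.symm : V × W →ₗ[K] L).comp (LinearMap.inl K V W)
  let i2 : W →ₗ[K] L := (e.symm : V × W →ₗ[K] L).comp (LinearMap.inr K V W)
  let p : L →ₗ[K] V := (LinearMap.fst K V W).comp (e : L →ₗ[K] V × W)
  let q : L →ₗ[K] W := (LinearMap.snd K V W).comp (e : L →ₗ[K] V × W)
  have hp1 : ∀ v, p (i1 v) = v := fun v => by simp [p, i1]
  have hp2 : ∀ v, p (i2 v) = 0 := fun v => by simp [p, i2]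
  have hq1 : ∀ v, q (i1 v) = 0 := fun v => by simp [q, i1]
  have hq2 : ∀ v, q (i2 v) = v := fun v => by simp [q, i2]
  have hlie : ∀ x y, ⁅x, y⁆ = i2 (br (p x) (p y)) := fun x y => by rw [hbr']; rfl
  have hdec : ∀ x, x = i1 (p x) + i2 (q x) := fun x => by
    apply e.injective; simp [i1, i2, p, q]
  have hW' : ∀ (σ : Z2 K L) (w w' : W), σ.1 (i2 w) (i2 w') = 0 := fun σ w w' =>
    hW σ _ (hp2 w) w'
  refine ⟨LinearEquiv.mk
    { toFun := fun σ => (⟨σ.1.compl₁₂ i1 i1, fun x => σ.2.1 _⟩,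
        ⟨σ.1.compl₁₂ i1 i2, fun a b c => by
          have h := σ.2.2 (i1 a) (i1 b) (i1 c)
          simp only [hlie, hp1] at h
          exact h⟩)
      map_add' := fun x y => rfl
      map_smul' := fun t x => rfl }
    (fun ab => ⟨ab.1.1.compl₁₂ p p + ab.2.1.compl₁₂ p q - (ab.2.1.compl₁₂ p q).flip, by
      refine ⟨fun x => ?_, fun x y z => ?_⟩
      · have h := ab.1.2 (p x)
        simp [h]
      · have h := ab.2.2 (p x) (p y) (p z)
        simp only [cyc] at h
        simp only [LinearMap.sub_apply, LinearMap.add_apply, LinearMap.compl₁₂_apply,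
          LinearMap.flip_apply, hlie, hp2, hq2, map_zero, LinearMap.zero_apply]
        linear_combination h⟩) ?_ ?_⟩
  · intro σ
    ext x y
    simp only [LinearMap.coe_mk, AddHom.coe_mk, LinearMap.sub_apply, LinearMap.add_apply,
      LinearMap.compl₁₂_apply, LinearMap.flip_apply]
    conv_rhs => rw [hdec x, hdec y]
    simp only [map_add, LinearMap.add_apply, hW']
    rw [Z2.swap σ (i2 (q x))]
    ring
  · rintro ⟨α, β⟩
    ext x y <;>
    simp [hp1, hp2, hq1, hq2]

theorem finrank_prod_sub {G H : Type} [AddCommGroup G] [Module K G] [AddCommGroup H] [Module K H]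
    [FiniteDimensional K G] [FiniteDimensional K H] (A : Submodule K G) (B : Submodule K H) :
    finrank K (A × B) = finrank K A + finrank K B := Module.finrank_prod

theorem finrank_Z2 [FiniteDimensional K V] [FiniteDimensional K W]
    (e : L ≃ₗ[K] V × W) {br : V →ₗ[K] V →ₗ[K] W} (halt : ∀ a, br a a = 0)
    (hbr : ∀ x y, e ⁅x, y⁆ = (0, br (e x).1 (e y).1))
    (hspan : Submodule.span K {z | ∃ a b, br a b = z} = ⊤) :
    finrank K (Z2 K L) = (finrank K V).choose 2 + finrank K (Bsub br) := by
  obtain ⟨E⟩ := Z2_equiv e halt hbr hspan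
  rw [E.finrank_eq, ← finrank_AltB (K := K) (V := V)]
  exact finrank_prod_sub (G := V →ₗ[K] V →ₗ[K] K) (H := V →ₗ[K] W →ₗ[K] K) (AltB K V) (Bsub br)

end SchurAlt

section SchurPres
variable {K : Type} [Field K]

theorem span_of_generators {X L : Type} [LieRing L] [LieAlgebra K L]
    (φ : FreeLieAlgebra K X →ₗ⁅K⁆ L) (hφ : Function.Surjective φ)
    (h : ∀ i j, ⁅φ (FreeLieAlgebra.of K i), φ (FreeLieAlgebra.of K j)⁆ ∈
      Submodule.span K (Set.range fun i => φ (FreeLieAlgebra.of K i))) :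
    Submodule.span K (Set.range fun i => φ (FreeLieAlgebra.of K i)) = ⊤ := by
  set S := Submodule.span K (Set.range fun i => φ (FreeLieAlgebra.of K i)) with hS
  have hcl : ∀ a ∈ S, ∀ b ∈ S, ⁅a, b⁆ ∈ S := by
    intro a ha b hb
    induction ha using Submodule.span_induction with
    | mem x hx =>
      obtain ⟨i, rfl⟩ := hx
      induction hb using Submodule.span_induction with
      | mem y hy => obtain ⟨j, rfl⟩ := hy; exact h i j
      | zero => simp
      | add y z _ _ hy hz => rw [lie_add]; exact S.add_mem hy hz
      | smul t y _ hy => rw [lie_smul]; exact S.smul_mem t hy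
    | zero => simp
    | add y z _ _ hy hz => rw [add_lie]; exact S.add_mem hy hz
    | smul t y _ hy => rw [smul_lie]; exact S.smul_mem t hy
  let A : LieSubalgebra K L := { S with lie_mem' := fun {a b} ha hb => hcl a ha b hb }
  let ψ : FreeLieAlgebra K X →ₗ⁅K⁆ A := FreeLieAlgebra.lift K fun i =>
    (⟨φ (FreeLieAlgebra.of K i), Submodule.subset_span ⟨i, rfl⟩⟩ : A)
  have hψ : A.incl.comp ψ = φ := by
    apply FreeLieAlgebra.hom_ext
    intro i
    simp only [LieHom.comp_apply, ψ, FreeLieAlgebra.lift_of_apply]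
    rfl
  rw [eq_top_iff]
  intro z _
  obtain ⟨a, rfl⟩ := hφ z
  rw [← hψ]
  exact (ψ a).2

theorem pres_iso {X L : Type} [Fintype X] [LieRing L] [LieAlgebra K L] [FiniteDimensional K L]
    (s : Set (FreeLieAlgebra K X)) (x : X → L)
    (hrel : ∀ z ∈ s, FreeLieAlgebra.lift K x z = 0)
    (hx : Submodule.span K (Set.range x) = ⊤) (hcard : Fintype.card X ≤ finrank K L)
    (hcl : ∀ i j : X, (LieSubmodule.Quotient.mk ⁅FreeLieAlgebra.of K i, FreeLieAlgebra.of K j⁆ :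
        FreeLieAlgebra K X ⧸ LieSubmodule.lieSpan K (FreeLieAlgebra K X) s) ∈
      Submodule.span K (Set.range fun i => (LieSubmodule.Quotient.mk (FreeLieAlgebra.of K i) :
        FreeLieAlgebra K X ⧸ LieSubmodule.lieSpan K (FreeLieAlgebra K X) s))) :
    Nonempty (L ≃ₗ⁅K⁆ (FreeLieAlgebra K X ⧸ LieSubmodule.lieSpan K (FreeLieAlgebra K X) s)) := by
  set I : LieIdeal K (FreeLieAlgebra K X) := LieSubmodule.lieSpan K (FreeLieAlgebra K X) s with hI
  let mk : FreeLieAlgebra K X →ₗ⁅K⁆ FreeLieAlgebra K X ⧸ I :=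
    { I.toSubmodule.mkQ with map_lie' := fun {a b} => LieSubmodule.Quotient.mk_bracket I a b }
  have hmk : Function.Surjective mk := Submodule.mkQ_surjective _
  have hspan := span_of_generators mk hmk (fun i j => by
    rw [← LieHom.map_lie]; exact hcl i j)
  have hle : I ≤ (FreeLieAlgebra.lift K x).ker := by
    rw [hI, LieSubmodule.lieSpan_le]
    intro z hz
    exact (LieHom.mem_ker).2 (hrel z hz)
  let f : (FreeLieAlgebra K X ⧸ I) →ₗ[K] L :=
    I.toSubmodule.liftQ (FreeLieAlgebra.lift K x : FreeLieAlgebra K X →ₗ[K] L)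
      (fun z hz => (LieHom.mem_ker).1 (hle hz))
  have hf : ∀ a, f (mk a) = FreeLieAlgebra.lift K x a := fun a => rfl
  let g : (FreeLieAlgebra K X ⧸ I) →ₗ⁅K⁆ L :=
    { f with
      map_lie' := fun {a b} => by
        obtain ⟨a, rfl⟩ := hmk a
        obtain ⟨b, rfl⟩ := hmk b
        change f ⁅mk a, mk b⁆ = ⁅f (mk a), f (mk b)⁆
        rw [← LieHom.map_lie, hf, hf, hf, LieHom.map_lie] }
  have hsurj : Function.Surjective f := by
    rw [← LinearMap.range_eq_top, eq_top_iff, ← hx, Submodule.span_le]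
    rintro _ ⟨i, rfl⟩
    exact ⟨mk (FreeLieAlgebra.of K i), by rw [hf, FreeLieAlgebra.lift_of_apply]⟩
  haveI : FiniteDimensional K (FreeLieAlgebra K X ⧸ I) := by
    refine ⟨?_⟩
    rw [← hspan]
    exact Submodule.fg_span (Set.finite_range _)
  have hdim : finrank K (FreeLieAlgebra K X ⧸ I) ≤ Fintype.card X := by
    have := finrank_range_le_card (R := K) (fun i => mk (FreeLieAlgebra.of K i))
    rw [Set.finrank, hspan, finrank_top] at this
    exact this
  have hle2 := LinearMap.finrank_le_finrank_of_surjective hsurj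
  have hinj : Function.Injective f :=
    (LinearMap.injective_iff_surjective_of_finrank_eq_finrank (by omega)).2 hsurj
  exact ⟨(LieEquiv.ofBijective g ⟨hinj, hsurj⟩).symm⟩

theorem pres_elems {X L : Type} [LieRing L] [LieAlgebra K L]
    (s : Set (FreeLieAlgebra K X))
    (E : L ≃ₗ⁅K⁆ (FreeLieAlgebra K X ⧸ LieSubmodule.lieSpan K (FreeLieAlgebra K X) s)) :
    ∃ φ : FreeLieAlgebra K X →ₗ⁅K⁆ L, Function.Surjective φ ∧ ∀ z ∈ s, φ z = 0 := by
  set I : LieIdeal K (FreeLieAlgebra K X) := LieSubmodule.lieSpan K (FreeLieAlgebra K X) s with hI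
  let mk : FreeLieAlgebra K X →ₗ⁅K⁆ FreeLieAlgebra K X ⧸ I :=
    { I.toSubmodule.mkQ with map_lie' := fun {a b} => LieSubmodule.Quotient.mk_bracket I a b }
  have hmk : Function.Surjective mk := Submodule.mkQ_surjective _
  refine ⟨E.symm.toLieHom.comp mk, E.symm.surjective.comp hmk, fun z hz => ?_⟩
  have : mk z = 0 := (Submodule.Quotient.mk_eq_zero _).2 (LieSubmodule.subset_lieSpan hz)
  simp [this]

end SchurPres

section SchurDecomp
variable {K L : Type} [Field K] [LieRing L] [LieAlgebra K L]

theorem exists_decomp [FiniteDimensional K L] (hc : lieNilpotencyClass K L 2) :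
    ∃ (V W : Submodule K L) (e : L ≃ₗ[K] V × W) (br : V →ₗ[K] V →ₗ[K] W),
      (∀ a, br a a = 0) ∧ (∀ x y, e ⁅x, y⁆ = (0, br (e x).1 (e y).1)) ∧
      Submodule.span K {z | ∃ a b, br a b = z} = ⊤ ∧ finrank K W = lieDerivedDim K L ∧
      (∃ v w, br v w ≠ 0) ∧ (∀ v w : V, ((br v w : W) : L) = ⁅(v : L), (w : L)⁆) ∧
      (∀ v : V, e (v : L) = (v, 0)) ∧ (∀ w : W, e (w : L) = (0, w)) := by
  obtain ⟨h2, h1⟩ := hc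
  let W : Submodule K L := (LieModule.lowerCentralSeries K L L 1).toSubmodule
  obtain ⟨V, hV⟩ := Submodule.exists_isCompl W
  have hmem : ∀ x y : L, ⁅x, y⁆ ∈ W := fun x y => by
    change _ ∈ (LieModule.lowerCentralSeries K L L 1).toSubmodule
    rw [lcs_one_eq_span]; exact Submodule.subset_span ⟨x, y, rfl⟩
  have hcen : ∀ x : L, ∀ w ∈ W, ⁅x, w⁆ = 0 := fun x w hw => by
    have : ⁅x, w⁆ ∈ LieModule.lowerCentralSeries K L L 2 := by
      rw [LieModule.lowerCentralSeries_succ]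
      exact LieSubmodule.lie_mem_lie (LieSubmodule.mem_top x) hw
    rw [h2] at this
    simpa using this
  have hcen' : ∀ x : L, ∀ w ∈ W, ⁅w, x⁆ = 0 := fun x w hw => by
    rw [← lie_skew, hcen x w hw, neg_zero]
  let br : V →ₗ[K] V →ₗ[K] W := LinearMap.mk₂ K (fun a b => ⟨⁅(a : L), (b : L)⁆, hmem _ _⟩)
    (fun a b c => by ext; simp) (fun a b c => by ext; simp)
    (fun a b c => by ext; simp) (fun a b c => by ext; simp)
  have hbrv : ∀ v w : V, ((br v w : W) : L) = ⁅(v : L), (w : L)⁆ := fun v w => rfl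
  let e : L ≃ₗ[K] V × W := (Submodule.prodEquivOfIsCompl V W hV.symm).symm
  have he : ∀ x, x = ((e x).1 : L) + ((e x).2 : L) := fun x => by
    conv_lhs => rw [← e.symm_apply_apply x]
    simp [e]
  have heV : ∀ v : V, e (v : L) = (v, 0) := fun v => by simp [e]
  have heW : ∀ w : W, e (w : L) = (0, w) := fun v => by simp [e]
  have hdec : ∀ x y, ⁅x, y⁆ = ((br (e x).1 (e y).1 : W) : L) := fun x y => by
    rw [hbrv]
    conv_lhs => rw [he x, he y]
    rw [add_lie, lie_add, hcen _ _ (e y).2.2, hcen' _ _ (e x).2.2, add_zero, add_zero]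
  have hspan : Submodule.span K {z | ∃ a b, br a b = z} = ⊤ := by
    apply Submodule.map_injective_of_injective W.subtype_injective
    rw [Submodule.map_span, Submodule.map_top, Submodule.range_subtype]
    change _ = (LieModule.lowerCentralSeries K L L 1).toSubmodule
    rw [lcs_one_eq_span]
    congr 1
    ext z
    constructor
    · rintro ⟨_, ⟨a, b, rfl⟩, rfl⟩
      exact ⟨a, b, rfl⟩
    · rintro ⟨a, b, rfl⟩
      exact ⟨_, ⟨(e a).1, (e b).1, rfl⟩, (hdec a b).symm⟩
  refine ⟨V, W, e, br, fun a => by ext; simp [br], fun x y => ?_, hspan, rfl, ?_, hbrv, heV, heW⟩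
  · rw [hdec, heW]
  · by_contra hcon
    push Not at hcon
    apply h1 1 (by norm_num)
    have hW0 : W = ⊥ := by
      change (LieModule.lowerCentralSeries K L L 1).toSubmodule = ⊥
      rw [lcs_one_eq_span, Submodule.span_eq_bot]
      rintro _ ⟨a, b, rfl⟩
      rw [hdec, hcon]; rfl
    rw [← LieSubmodule.toSubmodule_eq_bot]
    exact hW0

theorem formula_iff [FiniteDimensional K L] {V W : Type} [AddCommGroup V] [Module K V]
    [AddCommGroup W] [Module K W] [FiniteDimensional K V] [FiniteDimensional K W]
    (n m : ℕ) (hn : finrank K L = n) (hm : lieDerivedDim K L = m) (hWm : finrank K W = m)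
    (e : L ≃ₗ[K] V × W) {br : V →ₗ[K] V →ₗ[K] W} (halt : ∀ a, br a a = 0)
    (hbr : ∀ x y, e ⁅x, y⁆ = (0, br (e x).1 (e y).1))
    (hspan : Submodule.span K {z | ∃ a b, br a b = z} = ⊤) :
    (∀ (X : Type) (π : FreeLieAlgebra K X →ₗ⁅K⁆ L), Function.Surjective π →
        (lieSchurMultiplierDim K X π : ℤ) = ((n : ℤ) + m - 2) * ((n : ℤ) - m - 1) / 2 + 1) ↔
      finrank K (Bsub br) + finrank K V = finrank K V * finrank K W + 2 := by
  have hd : n = finrank K V + m := by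
    rw [← hn, e.finrank_eq, Module.finrank_prod, hWm]
  have hZ := finrank_Z2 e halt hbr hspan
  rw [hWm]
  generalize finrank K V = d at *
  generalize finrank K (Bsub br) = b at *
  have hch : (2 : ℤ) * (d.choose 2 : ℤ) = d * (d - 1) := by
    have := Nat.triangle_succ
    rcases d with _ | d
    · simp
    · have h := Nat.choose_two_right (d + 1)
      have h2 : 2 ∣ (d + 1) * (d + 1 - 1) := by
        simpa [mul_comm] using (Nat.even_mul_succ_self d).two_dvd
      obtain ⟨k, hk⟩ := h2
      rw [hk, Nat.mul_div_cancel_left _ (by norm_num)] at h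
      rw [h]
      simp only [Nat.add_sub_cancel] at hk
      push_cast
      have : (((d + 1) * d : ℕ) : ℤ) = ((2 * k : ℕ) : ℤ) := by rw [hk]
      push_cast at this
      linarith
  have hdiv : ((n : ℤ) + m - 2) * ((n : ℤ) - m - 1) / 2 =
      d.choose 2 + ((m : ℤ) - 1) * (d - 1) := by
    have : ((n : ℤ) + m - 2) * ((n : ℤ) - m - 1) =
        2 * (d.choose 2 + ((m : ℤ) - 1) * (d - 1)) := by
      rw [hd]; push_cast
      linear_combination -hch
    rw [this, Int.mul_ediv_cancel_left _ (by norm_num)]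
  have key : ∀ (X : Type) (π : FreeLieAlgebra K X →ₗ⁅K⁆ L), Function.Surjective π →
      ((lieSchurMultiplierDim K X π : ℤ) =
        ((n : ℤ) + m - 2) * ((n : ℤ) - m - 1) / 2 + 1 ↔ b + d = d * m + 2) := by
    intro X π hπ
    have h := schurDim_add π hπ
    rw [hZ, hm] at h
    rw [hdiv]
    zify at h ⊢
    constructor <;> intro h' <;> linarith
  constructor
  · intro h
    have hsurj : Function.Surjective (FreeLieAlgebra.lift K (fun x : L => x)) := fun x =>
      ⟨FreeLieAlgebra.of K x, by rw [FreeLieAlgebra.lift_of_apply]⟩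
    exact (key L _ hsurj).1 (h L _ hsurj)
  · intro h X π hπ
    exact (key X π hπ).2 h

end SchurDecomp

section SchurFinal
variable {K : Type} [Field K]

theorem pres_iso' {X L : Type} [Fintype X] [LieRing L] [LieAlgebra K L] [FiniteDimensional K L]
    (s : Set (FreeLieAlgebra K X)) (x : X → L)
    (hrel : ∀ z ∈ s, FreeLieAlgebra.lift K x z = 0)
    (hx : Submodule.span K (Set.range x) = ⊤) (hcard : Fintype.card X ≤ finrank K L)
    (P : X → X → Prop) (hP : ∀ i j, P i j ∨ P j i ∨ i = j)
    (hPs : ∀ i j : X, P i j → (⁅FreeLieAlgebra.of K i, FreeLieAlgebra.of K j⁆ ∈ s ∨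
      ∃ k : X, ⁅FreeLieAlgebra.of K i, FreeLieAlgebra.of K j⁆ - FreeLieAlgebra.of K k ∈ s)) :
    Nonempty (L ≃ₗ⁅K⁆ (FreeLieAlgebra K X ⧸ LieSubmodule.lieSpan K (FreeLieAlgebra K X) s)) := by
  refine pres_iso s x hrel hx hcard ?_
  set I : LieIdeal K (FreeLieAlgebra K X) := LieSubmodule.lieSpan K (FreeLieAlgebra K X) s with hI
  have h1 : ∀ i j : X, P i j →
      (LieSubmodule.Quotient.mk ⁅FreeLieAlgebra.of K i, FreeLieAlgebra.of K j⁆ :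
        FreeLieAlgebra K X ⧸ I) ∈
      Submodule.span K (Set.range fun i => (LieSubmodule.Quotient.mk (FreeLieAlgebra.of K i) :
        FreeLieAlgebra K X ⧸ I)) := by
    intro i j hij
    rcases hPs i j hij with h | ⟨k, h⟩
    · have : (LieSubmodule.Quotient.mk ⁅FreeLieAlgebra.of K i, FreeLieAlgebra.of K j⁆ :
        FreeLieAlgebra K X ⧸ I) = 0 :=
        (Submodule.Quotient.mk_eq_zero _).2 (LieSubmodule.subset_lieSpan h)
      rw [this]; exact Submodule.zero_mem _
    · have : (LieSubmodule.Quotient.mk ⁅FreeLieAlgebra.of K i, FreeLieAlgebra.of K j⁆ :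
        FreeLieAlgebra K X ⧸ I) = LieSubmodule.Quotient.mk (FreeLieAlgebra.of K k) :=
        (Submodule.Quotient.eq _).2 (LieSubmodule.subset_lieSpan h)
      rw [this]; exact Submodule.subset_span ⟨k, rfl⟩
  intro i j
  rcases hP i j with h | h | h
  · exact h1 i j h
  · have := Submodule.neg_mem _ (h1 j i h)
    rw [← lie_skew]
    exact this
  · subst h
    rw [lie_self]
    exact Submodule.zero_mem _

theorem pres_elems' {X L : Type} [LieRing L] [LieAlgebra K L]
    (s : Set (FreeLieAlgebra K X))
    (E : L ≃ₗ⁅K⁆ (FreeLieAlgebra K X ⧸ LieSubmodule.lieSpan K (FreeLieAlgebra K X) s))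
    (P : X → X → Prop) (hP : ∀ i j, P i j ∨ P j i ∨ i = j)
    (hPs : ∀ i j : X, P i j → (⁅FreeLieAlgebra.of K i, FreeLieAlgebra.of K j⁆ ∈ s ∨
      ∃ k : X, ⁅FreeLieAlgebra.of K i, FreeLieAlgebra.of K j⁆ - FreeLieAlgebra.of K k ∈ s)) :
    ∃ φ : FreeLieAlgebra K X →ₗ⁅K⁆ L, (∀ z ∈ s, φ z = 0) ∧
      Submodule.span K (Set.range fun i => φ (FreeLieAlgebra.of K i)) = ⊤ := by
  obtain ⟨φ, hφ, hz⟩ := pres_elems s E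
  refine ⟨φ, hz, span_of_generators φ hφ ?_⟩
  have h1 : ∀ i j : X, P i j →
      ⁅φ (FreeLieAlgebra.of K i), φ (FreeLieAlgebra.of K j)⁆ ∈
      Submodule.span K (Set.range fun i => φ (FreeLieAlgebra.of K i)) := by
    intro i j hij
    rw [← LieHom.map_lie]
    rcases hPs i j hij with h | ⟨k, h⟩
    · rw [hz _ h]; exact Submodule.zero_mem _
    · have := hz _ h
      rw [map_sub, sub_eq_zero] at this
      rw [this]; exact Submodule.subset_span ⟨k, rfl⟩
  intro i j
  rcases hP i j with h | h | h
  · exact h1 i j h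
  · have := Submodule.neg_mem _ (h1 j i h)
    rw [← lie_skew]
    exact this
  · subst h
    rw [lie_self]
    exact Submodule.zero_mem _

/-- Relations of `L_{5,8}`. -/
def rel58 (K : Type) [Field K] : Set (FreeLieAlgebra K (Fin 5)) :=
  let x : Fin 5 → FreeLieAlgebra K (Fin 5) := FreeLieAlgebra.of K
  {⁅x 0, x 1⁆ - x 3, ⁅x 0, x 2⁆ - x 4, ⁅x 0, x 3⁆, ⁅x 0, x 4⁆, ⁅x 1, x 2⁆,
     ⁅x 1, x 3⁆, ⁅x 1, x 4⁆, ⁅x 2, x 3⁆, ⁅x 2, x 4⁆, ⁅x 3, x 4⁆}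

/-- Relations of `L_{6,26}`. -/
def rel626 (K : Type) [Field K] : Set (FreeLieAlgebra K (Fin 6)) :=
  let x : Fin 6 → FreeLieAlgebra K (Fin 6) := FreeLieAlgebra.of K
  {⁅x 0, x 1⁆ - x 3, ⁅x 0, x 2⁆ - x 4, ⁅x 1, x 2⁆ - x 5,
     ⁅x 0, x 3⁆, ⁅x 0, x 4⁆, ⁅x 0, x 5⁆, ⁅x 1, x 3⁆, ⁅x 1, x 4⁆, ⁅x 1, x 5⁆,
     ⁅x 2, x 3⁆, ⁅x 2, x 4⁆, ⁅x 2, x 5⁆, ⁅x 3, x 4⁆, ⁅x 3, x 5⁆, ⁅x 4, x 5⁆}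

/-- Relations of `H(1) ⊕ A(k)`. -/
def relH (K : Type) [Field K] (k : ℕ) : Set (FreeLieAlgebra K (Fin 3 ⊕ Fin k)) :=
  let x : Fin 3 ⊕ Fin k → FreeLieAlgebra K (Fin 3 ⊕ Fin k) := FreeLieAlgebra.of K
  (insert (⁅x (.inl 0), x (.inl 1)⁆ - x (.inl 2))
      {z | ∃ i j : Fin 3 ⊕ Fin k,
        ¬(i = .inl 0 ∧ j = .inl 1) ∧ ¬(i = .inl 1 ∧ j = .inl 0) ∧ z = ⁅x i, x j⁆})

/-- Unfolding of the presentation. -/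
noncomputable def iso58 : lieL58 K ≃ₗ⁅K⁆ (FreeLieAlgebra K (Fin 5) ⧸
    LieSubmodule.lieSpan K (FreeLieAlgebra K (Fin 5)) (rel58 K)) :=
  LieEquiv.refl (R := K) (L₁ := FreeLieAlgebra K (Fin 5) ⧸
    LieSubmodule.lieSpan K (FreeLieAlgebra K (Fin 5)) (rel58 K))

/-- Unfolding of the presentation. -/
noncomputable def iso626 : lieL626 K ≃ₗ⁅K⁆ (FreeLieAlgebra K (Fin 6) ⧸
    LieSubmodule.lieSpan K (FreeLieAlgebra K (Fin 6)) (rel626 K)) :=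
  LieEquiv.refl (R := K) (L₁ := FreeLieAlgebra K (Fin 6) ⧸
    LieSubmodule.lieSpan K (FreeLieAlgebra K (Fin 6)) (rel626 K))

/-- Unfolding of the presentation. -/
noncomputable def isoH (k : ℕ) : heisenbergPlusAbelian K k ≃ₗ⁅K⁆
    (FreeLieAlgebra K (Fin 3 ⊕ Fin k) ⧸
    LieSubmodule.lieSpan K (FreeLieAlgebra K (Fin 3 ⊕ Fin k)) (relH K k)) :=
  LieEquiv.refl (R := K) (L₁ := FreeLieAlgebra K (Fin 3 ⊕ Fin k) ⧸
    LieSubmodule.lieSpan K (FreeLieAlgebra K (Fin 3 ⊕ Fin k)) (relH K k))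

theorem tri_lt {k : ℕ} (i j : Fin k) : i < j ∨ j < i ∨ i = j := by
  rcases lt_trichotomy i j with h | h | h <;> simp [h]

theorem rel58_P (i j : Fin 5) (h : i < j) :
    (⁅FreeLieAlgebra.of K i, FreeLieAlgebra.of K j⁆ ∈ rel58 K ∨
      ∃ k : Fin 5, ⁅FreeLieAlgebra.of K i, FreeLieAlgebra.of K j⁆ - FreeLieAlgebra.of K k
        ∈ rel58 K) := by
  by_cases h1 : i = 0 ∧ j = 1
  · obtain ⟨rfl, rfl⟩ := h1
    exact Or.inr ⟨3, by simp only [rel58, Set.mem_insert_iff, true_or]⟩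
  by_cases h2 : i = 0 ∧ j = 2
  · obtain ⟨rfl, rfl⟩ := h2
    exact Or.inr ⟨4, by simp only [rel58, Set.mem_insert_iff, true_or, or_true]⟩
  left
  fin_cases i <;> fin_cases j <;> first
    | (exfalso; revert h; decide)
    | (exfalso; revert h1; decide)
    | (exfalso; revert h2; decide)
    | (simp [rel58]; done)

theorem rel626_P (i j : Fin 6) (h : i < j) :
    (⁅FreeLieAlgebra.of K i, FreeLieAlgebra.of K j⁆ ∈ rel626 K ∨
      ∃ k : Fin 6, ⁅FreeLieAlgebra.of K i, FreeLieAlgebra.of K j⁆ - FreeLieAlgebra.of K k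
        ∈ rel626 K) := by
  by_cases h1 : i = 0 ∧ j = 1
  · obtain ⟨rfl, rfl⟩ := h1
    exact Or.inr ⟨3, by simp only [rel626, Set.mem_insert_iff, true_or]⟩
  by_cases h2 : i = 0 ∧ j = 2
  · obtain ⟨rfl, rfl⟩ := h2
    exact Or.inr ⟨4, by simp only [rel626, Set.mem_insert_iff, true_or, or_true]⟩
  by_cases h3 : i = 1 ∧ j = 2
  · obtain ⟨rfl, rfl⟩ := h3
    exact Or.inr ⟨5, by simp only [rel626, Set.mem_insert_iff, true_or, or_true]⟩
  left
  fin_cases i <;> fin_cases j <;> first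
    | (exfalso; revert h; decide)
    | (exfalso; revert h1; decide)
    | (exfalso; revert h2; decide)
    | (exfalso; revert h3; decide)
    | (simp [rel626]; done)

theorem relH_tri {k : ℕ} (i j : Fin 3 ⊕ Fin k) :
    ¬(i = .inl 1 ∧ j = .inl 0) ∨ ¬(j = .inl 1 ∧ i = .inl 0) ∨ i = j := by
  by_cases h : i = .inl 1 ∧ j = .inl 0
  · obtain ⟨rfl, rfl⟩ := h
    right; left; simp
  · exact Or.inl h

theorem relH_P {k : ℕ} (i j : Fin 3 ⊕ Fin k) (h : ¬(i = .inl 1 ∧ j = .inl 0)) :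
    (⁅FreeLieAlgebra.of K i, FreeLieAlgebra.of K j⁆ ∈ relH K k ∨
      ∃ l, ⁅FreeLieAlgebra.of K i, FreeLieAlgebra.of K j⁆ - FreeLieAlgebra.of K l
        ∈ relH K k) := by
  by_cases h1 : i = .inl 0 ∧ j = .inl 1
  · obtain ⟨rfl, rfl⟩ := h1
    exact Or.inr ⟨.inl 2, Set.mem_insert _ _⟩
  · exact Or.inl (Set.mem_insert_of_mem _ ⟨i, j, h1, h, rfl⟩)

variable {L V W : Type} [LieRing L] [LieAlgebra K L] [AddCommGroup V] [Module K V]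
  [AddCommGroup W] [Module K W] [FiniteDimensional K V] [FiniteDimensional K W]

theorem bwd_three (e : L ≃ₗ[K] V × W) {br : V →ₗ[K] V →ₗ[K] W} (halt : ∀ a, br a a = 0)
    (hne : ∃ v w, br v w ≠ 0)
    (a b c : V) (hs : (⊤ : Submodule K V) ≤ Submodule.span K {a, b, c}) :
    finrank K (Bsub br) + finrank K V = finrank K V * finrank K W + 2 := by
  have hd : finrank K V ≤ 3 := by
    classical
    have := finrank_span_finset_le_card (R := K) ({a, b, c} : Finset V)
    have h4 : ({a, b, c} : Finset V).card ≤ 3 := Finset.card_le_three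
    simp only [Finset.coe_insert, Finset.coe_singleton] at this
    rw [Set.finrank, top_le_iff.1 hs, finrank_top] at this
    exact this.trans h4
  obtain ⟨v, w, h⟩ := hne
  obtain ⟨u, hu⟩ := exists_third hd (finrank_span_vw halt h)
  exact (finrank_Bsub_iff halt h).2 fun β hβ => cyc_of_three halt hu β hβ

theorem span_fst (e : L ≃ₗ[K] V × W) {X : Type} (x : X → L)
    (hx : Submodule.span K (Set.range x) = ⊤) :
    Submodule.span K (Set.range fun i => (e (x i)).1) = ⊤ := by
  have h := congrArg (Submodule.map ((LinearMap.fst K V W).comp (e : L →ₗ[K] V × W))) hx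
  rw [Submodule.map_span, ← Set.range_comp, Submodule.map_top, LinearMap.range_eq_top.2] at h
  · exact h
  · intro v
    exact ⟨e.symm (v, 0), by simp⟩

theorem bwd58 (e : L ≃ₗ[K] V × W) {br : V →ₗ[K] V →ₗ[K] W} (halt : ∀ a, br a a = 0)
    (hbr : ∀ x y, e ⁅x, y⁆ = (0, br (e x).1 (e y).1)) (hne : ∃ v w, br v w ≠ 0)
    (E : L ≃ₗ⁅K⁆ lieL58 K) :
    finrank K (Bsub br) + finrank K V = finrank K V * finrank K W + 2 := by
  obtain ⟨φ, hz, hs⟩ := pres_elems' (rel58 K) (E.trans iso58) (· < ·) tri_lt rel58_P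
  have h3 := hz (⁅FreeLieAlgebra.of K (0 : Fin 5), FreeLieAlgebra.of K (1 : Fin 5)⁆ - FreeLieAlgebra.of K (3 : Fin 5))
    (by simp only [rel58, Set.mem_insert_iff, true_or, or_true])
  have h4 := hz (⁅FreeLieAlgebra.of K (0 : Fin 5), FreeLieAlgebra.of K (2 : Fin 5)⁆ - FreeLieAlgebra.of K (4 : Fin 5))
    (by simp only [rel58, Set.mem_insert_iff, true_or, or_true])
  rw [map_sub, LieHom.map_lie, sub_eq_zero] at h3 h4
  have hV := span_fst e _ hs
  refine bwd_three e halt hne (e (φ (FreeLieAlgebra.of K (0 : Fin 5)))).1 (e (φ (FreeLieAlgebra.of K (1 : Fin 5)))).1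
    (e (φ (FreeLieAlgebra.of K (2 : Fin 5)))).1 ?_
  rw [← hV, Submodule.span_le]
  rintro _ ⟨i, rfl⟩
  fin_cases i
  · exact Submodule.subset_span (by simp)
  · exact Submodule.subset_span (by simp)
  · exact Submodule.subset_span (by simp)
  · change (e (φ (FreeLieAlgebra.of K (3 : Fin 5)))).1 ∈ _
    rw [← h3, hbr]; exact Submodule.zero_mem _
  · change (e (φ (FreeLieAlgebra.of K (4 : Fin 5)))).1 ∈ _
    rw [← h4, hbr]; exact Submodule.zero_mem _

theorem bwd626 (e : L ≃ₗ[K] V × W) {br : V →ₗ[K] V →ₗ[K] W} (halt : ∀ a, br a a = 0)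
    (hbr : ∀ x y, e ⁅x, y⁆ = (0, br (e x).1 (e y).1)) (hne : ∃ v w, br v w ≠ 0)
    (E : L ≃ₗ⁅K⁆ lieL626 K) :
    finrank K (Bsub br) + finrank K V = finrank K V * finrank K W + 2 := by
  obtain ⟨φ, hz, hs⟩ := pres_elems' (rel626 K) (E.trans iso626) (· < ·) tri_lt rel626_P
  have h3 := hz (⁅FreeLieAlgebra.of K (0 : Fin 6), FreeLieAlgebra.of K (1 : Fin 6)⁆ - FreeLieAlgebra.of K (3 : Fin 6))
    (by simp only [rel626, Set.mem_insert_iff, true_or, or_true])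
  have h4 := hz (⁅FreeLieAlgebra.of K (0 : Fin 6), FreeLieAlgebra.of K (2 : Fin 6)⁆ - FreeLieAlgebra.of K (4 : Fin 6))
    (by simp only [rel626, Set.mem_insert_iff, true_or, or_true])
  have h5 := hz (⁅FreeLieAlgebra.of K (1 : Fin 6), FreeLieAlgebra.of K (2 : Fin 6)⁆ - FreeLieAlgebra.of K (5 : Fin 6))
    (by simp only [rel626, Set.mem_insert_iff, true_or, or_true])
  rw [map_sub, LieHom.map_lie, sub_eq_zero] at h3 h4 h5
  have hV := span_fst e _ hs
  refine bwd_three e halt hne (e (φ (FreeLieAlgebra.of K (0 : Fin 6)))).1 (e (φ (FreeLieAlgebra.of K (1 : Fin 6)))).1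
    (e (φ (FreeLieAlgebra.of K (2 : Fin 6)))).1 ?_
  rw [← hV, Submodule.span_le]
  rintro _ ⟨i, rfl⟩
  fin_cases i
  · exact Submodule.subset_span (by simp)
  · exact Submodule.subset_span (by simp)
  · exact Submodule.subset_span (by simp)
  · change (e (φ (FreeLieAlgebra.of K (3 : Fin 6)))).1 ∈ _
    rw [← h3, hbr]; exact Submodule.zero_mem _
  · change (e (φ (FreeLieAlgebra.of K (4 : Fin 6)))).1 ∈ _
    rw [← h4, hbr]; exact Submodule.zero_mem _
  · change (e (φ (FreeLieAlgebra.of K (5 : Fin 6)))).1 ∈ _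
    rw [← h5, hbr]; exact Submodule.zero_mem _

theorem bwdH (k : ℕ) (e : L ≃ₗ[K] V × W) {br : V →ₗ[K] V →ₗ[K] W} (halt : ∀ a, br a a = 0)
    (hbr : ∀ x y, e ⁅x, y⁆ = (0, br (e x).1 (e y).1)) (hne : ∃ v w, br v w ≠ 0)
    (E : L ≃ₗ⁅K⁆ heisenbergPlusAbelian K k) :
    finrank K (Bsub br) + finrank K V = finrank K V * finrank K W + 2 := by
  obtain ⟨φ, hz, hs⟩ := pres_elems' (relH K k) (E.trans (isoH k)) _ relH_tri relH_P
  have hV := span_fst e _ hs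
  set y : Fin 3 ⊕ Fin k → V := fun i => (e (φ (FreeLieAlgebra.of K i))).1 with hy
  have h0 : ∀ i, i ≠ .inl 0 → i ≠ .inl 1 → ∀ t, br (y i) t = 0 := by
    intro i hi0 hi1 t
    have ht : t ∈ Submodule.span K (Set.range y) := by rw [hV]; trivial
    induction ht using Submodule.span_induction with
    | mem t ht =>
      obtain ⟨j, rfl⟩ := ht
      have h := hz ⁅FreeLieAlgebra.of K i, FreeLieAlgebra.of K j⁆
        (Set.mem_insert_of_mem _ ⟨i, j, by simp [hi0], by simp [hi1], rfl⟩)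
      rw [LieHom.map_lie] at h
      have h2 := congrArg (fun z => (e z).2) h
      simpa [hbr] using h2
    | zero => simp
    | add a b _ _ ha hb => rw [map_add, ha, hb, add_zero]
    | smul r a _ ha => rw [map_smul, ha, smul_zero]
  have hdec : ∀ x : V, ∃ (r s : K) (z : V), x = r • y (.inl 0) + s • y (.inl 1) + z ∧
      ∀ t, br z t = 0 := by
    intro x
    have hx : x ∈ Submodule.span K (Set.range y) := by rw [hV]; trivial
    induction hx using Submodule.span_induction with
    | mem t ht =>
      obtain ⟨j, rfl⟩ := ht
      by_cases hj0 : j = .inl 0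
      · exact ⟨1, 0, 0, by simp [hj0], by simp⟩
      by_cases hj1 : j = .inl 1
      · exact ⟨0, 1, 0, by simp [hj1], by simp⟩
      exact ⟨0, 0, y j, by simp, h0 j hj0 hj1⟩
    | zero => exact ⟨0, 0, 0, by simp, by simp⟩
    | add a b _ _ ha hb =>
      obtain ⟨r, s, z, rfl, hz⟩ := ha
      obtain ⟨r', s', z', rfl, hz'⟩ := hb
      exact ⟨r + r', s + s', z + z', by module, fun t => by simp [hz, hz']⟩
    | smul q a _ ha =>
      obtain ⟨r, s, z, rfl, hz⟩ := ha
      exact ⟨q * r, q * s, q • z, by module, fun t => by simp [hz]⟩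
  have hvw : br (y (.inl 0)) (y (.inl 1)) ≠ 0 := by
    intro hzero
    obtain ⟨v, w, h⟩ := hne
    apply h
    obtain ⟨r, s, z, rfl, hz⟩ := hdec v
    obtain ⟨r', s', z', rfl, hz'⟩ := hdec w
    have hz2 : ∀ t, br t z' = 0 := fun t => by rw [br_swap halt, hz', neg_zero]
    have hzero' : br (y (.inl 1)) (y (.inl 0)) = 0 := by rw [br_swap halt, hzero, neg_zero]
    simp [hz, hz2, halt, hzero, hzero']
  exact (finrank_Bsub_iff halt hvw).2 fun β hβ => cyc_of_heis halt hdec β hβ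

end SchurFinal

section SchurForward
variable {K : Type} [Field K]
variable {L V W : Type} [LieRing L] [LieAlgebra K L] [AddCommGroup V] [Module K V]
  [AddCommGroup W] [Module K W] [FiniteDimensional K V] [FiniteDimensional K W]

theorem span_top_of (e : L ≃ₗ[K] V × W) {br : V →ₗ[K] V →ₗ[K] W}
    (hspan : Submodule.span K {z | ∃ a b, br a b = z} = ⊤) (S : Submodule K L)
    (hV : ∀ a : V, e.symm (a, 0) ∈ S) (hW : ∀ a b : V, e.symm (0, br a b) ∈ S) : S = ⊤ := by
  rw [eq_top_iff]
  rintro x -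
  have h2 : ∀ w : W, e.symm (0, w) ∈ S := by
    intro w
    have hw : w ∈ Submodule.span K {z | ∃ a b, br a b = z} := by rw [hspan]; trivial
    have hle : Submodule.span K {z | ∃ a b, br a b = z} ≤
        S.comap ((e.symm : V × W →ₗ[K] L).comp (LinearMap.inr K V W)) := by
      rw [Submodule.span_le]
      rintro _ ⟨a, b, rfl⟩
      exact hW a b
    exact hle hw
  have h3 : x = e.symm ((e x).1, 0) + e.symm (0, (e x).2) := by
    rw [← map_add]; simp
  rw [h3]
  exact S.add_mem (hV _) (h2 _)

theorem br_symm (e : L ≃ₗ[K] V × W) {br : V →ₗ[K] V →ₗ[K] W}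
    (hbr : ∀ x y, e ⁅x, y⁆ = (0, br (e x).1 (e y).1)) (a b : V × W) :
    ⁅e.symm a, e.symm b⁆ = e.symm (0, br a.1 b.1) := by
  apply e.injective
  simp [hbr]

theorem symm_comb (e : L ≃ₗ[K] V × W) (S : Submodule K L) {v w u : V}
    (hv : e.symm (v, 0) ∈ S) (hw : e.symm (w, 0) ∈ S) (hu : e.symm (u, 0) ∈ S)
    (r s t : K) : e.symm (r • v + s • w + t • u, 0) ∈ S := by
  have : e.symm (r • v + s • w + t • u, 0)
      = r • e.symm (v, 0) + s • e.symm (w, 0) + t • e.symm (u, 0) := by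
    rw [← map_smul, ← map_smul, ← map_smul, ← map_add, ← map_add]; simp
  rw [this]
  exact S.add_mem (S.add_mem (S.smul_mem _ hv) (S.smul_mem _ hw)) (S.smul_mem _ hu)

theorem symm_comb2 (e : L ≃ₗ[K] V × W) (S : Submodule K L) {v w u : W}
    (hv : e.symm (0, v) ∈ S) (hw : e.symm (0, w) ∈ S) (hu : e.symm (0, u) ∈ S)
    (r s t : K) : e.symm (0, r • v + s • w + t • u) ∈ S := by
  have : e.symm (0, r • v + s • w + t • u)
      = r • e.symm (0, v) + s • e.symm (0, w) + t • e.symm (0, u) := by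
    rw [← map_smul, ← map_smul, ← map_smul, ← map_add, ← map_add]; simp
  rw [this]
  exact S.add_mem (S.add_mem (S.smul_mem _ hv) (S.smul_mem _ hw)) (S.smul_mem _ hu)

theorem br_three {br : V →ₗ[K] V →ₗ[K] W} (halt : ∀ a, br a a = 0) {v w u : V}
    (h3 : ∀ x, ∃ r s t : K, x = r • v + s • w + t • u) (a b : V) :
    ∃ r s t : K, br a b = r • br v w + s • br v u + t • br w u := by
  obtain ⟨r, s, t, rfl⟩ := h3 a
  obtain ⟨r', s', t', rfl⟩ := h3 b
  refine ⟨r * s' - s * r', r * t' - t * r', s * t' - t * s', ?_⟩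
  simp only [map_add, map_smul, LinearMap.add_apply, LinearMap.smul_apply, halt,
    br_swap halt w v, br_swap halt u v, br_swap halt u w]
  module

theorem fwd626 [FiniteDimensional K L] (e : L ≃ₗ[K] V × W) {br : V →ₗ[K] V →ₗ[K] W}
    (halt : ∀ a, br a a = 0)
    (hbr : ∀ x y, e ⁅x, y⁆ = (0, br (e x).1 (e y).1))
    (hspan : Submodule.span K {z | ∃ a b, br a b = z} = ⊤) {v w u : V}
    (h3 : ∀ x, ∃ r s t : K, x = r • v + s • w + t • u) (hL : 6 ≤ finrank K L) :
    Nonempty (L ≃ₗ⁅K⁆ lieL626 K) := by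
  have hb := br_symm e hbr
  let x : Fin 6 → L := ![e.symm (v, 0), e.symm (w, 0), e.symm (u, 0), e.symm (0, br v w),
    e.symm (0, br v u), e.symm (0, br w u)]
  have hz0 : e.symm ((0 : V), (0 : W)) = 0 := e.symm.map_zero
  obtain ⟨E⟩ := pres_iso' (rel626 K) x (by
      intro z hz
      simp only [rel626, Set.mem_insert_iff, Set.mem_singleton_iff] at hz
      rcases hz with rfl | rfl | rfl | rfl | rfl | rfl | rfl | rfl | rfl | rfl | rfl | rfl | rfl |
        rfl | rfl <;> simp [x, hb, FreeLieAlgebra.lift_of_apply, hz0])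
    (by
      have hm : ∀ i, x i ∈ Submodule.span K (Set.range x) := fun i => Submodule.subset_span ⟨i, rfl⟩
      refine span_top_of e hspan _ ?_ ?_
      · intro a
        obtain ⟨r, s, t, rfl⟩ := h3 a
        exact symm_comb e _ (hm 0) (hm 1) (hm 2) r s t
      · intro a b
        obtain ⟨r, s, t, h⟩ := br_three halt h3 a b
        rw [h]
        exact symm_comb2 e _ (hm 3) (hm 4) (hm 5) r s t)
    (by simpa using hL) (· < ·) tri_lt rel626_P
  exact ⟨E.trans iso626.symm⟩

theorem fwd58 [FiniteDimensional K L] (e : L ≃ₗ[K] V × W) {br : V →ₗ[K] V →ₗ[K] W}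
    (halt : ∀ a, br a a = 0)
    (hbr : ∀ x y, e ⁅x, y⁆ = (0, br (e x).1 (e y).1))
    (hspan : Submodule.span K {z | ∃ a b, br a b = z} = ⊤) {v w u : V}
    (h3 : ∀ x, ∃ r s t : K, x = r • v + s • w + t • u) (hwu : br w u = 0)
    (hL : 5 ≤ finrank K L) :
    Nonempty (L ≃ₗ⁅K⁆ lieL58 K) := by
  have hb := br_symm e hbr
  let x : Fin 5 → L := ![e.symm (v, 0), e.symm (w, 0), e.symm (u, 0), e.symm (0, br v w),
    e.symm (0, br v u)]
  have hz0 : e.symm ((0 : V), (0 : W)) = 0 := e.symm.map_zero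
  obtain ⟨E⟩ := pres_iso' (rel58 K) x (by
      intro z hz
      simp only [rel58, Set.mem_insert_iff, Set.mem_singleton_iff] at hz
      rcases hz with rfl | rfl | rfl | rfl | rfl | rfl | rfl | rfl | rfl | rfl
        <;> simp [x, hb, FreeLieAlgebra.lift_of_apply, hz0, hwu])
    (by
      have hm : ∀ i, x i ∈ Submodule.span K (Set.range x) := fun i => Submodule.subset_span ⟨i, rfl⟩
      refine span_top_of e hspan _ ?_ ?_
      · intro a
        obtain ⟨r, s, t, rfl⟩ := h3 a
        exact symm_comb e _ (hm 0) (hm 1) (hm 2) r s t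
      · intro a b
        obtain ⟨r, s, t, h⟩ := br_three halt h3 a b
        rw [h, hwu]
        exact symm_comb2 e _ (hm 3) (hm 4) (by simp [hz0]) r s t)
    (by simpa using hL) (· < ·) tri_lt rel58_P
  exact ⟨E.trans iso58.symm⟩

end SchurForward

section SchurForwardTwo
variable {K : Type} [Field K]
variable {L V W : Type} [LieRing L] [LieAlgebra K L] [AddCommGroup V] [Module K V]
  [AddCommGroup W] [Module K W] [FiniteDimensional K V] [FiniteDimensional K W]

/-- A two dimensional subspace on which the bracket vanishes, when `dim W ≤ 2`. -/
theorem exists_commuting {br : V →ₗ[K] V →ₗ[K] W} (halt : ∀ a, br a a = 0) {v w u : V}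
    (hli : ∀ p q r : K, p • v + q • w + r • u = 0 → p = 0 ∧ q = 0 ∧ r = 0)
    (hW : finrank K W ≤ 2) :
    ∃ a b : V, LinearIndependent K ![a, b] ∧ br a b = 0 := by
  have hdep : ¬ LinearIndependent K ![br v w, br v u, br w u] := by
    intro h
    have := h.fintype_card_le_finrank
    simp at this
    omega
  rw [Fintype.not_linearIndependent_iff] at hdep
  obtain ⟨g, hg, i, hi⟩ := hdep
  rw [Fin.sum_univ_three] at hg
  simp only [Matrix.cons_val_zero, Matrix.cons_val_one, Matrix.cons_val] at hg
  by_cases h2 : g 2 = 0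
  · refine ⟨v, g 0 • w + g 1 • u, ?_, ?_⟩
    · rw [LinearIndependent.pair_iff]
      intro s t hst
      have := hli s (t * g 0) (t * g 1) (by rw [← hst]; module)
      obtain ⟨h1, h3, h4⟩ := this
      refine ⟨h1, ?_⟩
      by_contra ht
      simp only [mul_eq_zero, ht, false_or] at h3 h4
      apply hi
      fin_cases i
      · exact h3
      · exact h4
      · exact h2
    · rw [h2, zero_smul, add_zero] at hg
      rw [map_add, map_smul, map_smul, hg]
  · refine ⟨g 2 • w + g 1 • v, g 2 • u - g 0 • v, ?_, ?_⟩
    · rw [LinearIndependent.pair_iff]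
      intro s t hst
      have := hli (s * g 1 - t * g 0) (s * g 2) (t * g 2) (by rw [← hst]; module)
      obtain ⟨-, h3, h4⟩ := this
      simp only [mul_eq_zero, h2, or_false] at h3 h4
      exact ⟨h3, h4⟩
    · have : br (g 2 • w + g 1 • v) (g 2 • u - g 0 • v) =
          g 2 • (g 0 • br v w + g 1 • br v u + g 2 • br w u) := by
        simp only [map_add, map_sub, map_smul, LinearMap.add_apply, LinearMap.smul_apply, halt,
          br_swap halt w v]
        module
      rw [this, hg, smul_zero]

theorem finrank_pair {a b : V} (h : LinearIndependent K ![a, b]) :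
    finrank K (Submodule.span K {a, b}) = 2 := by
  have := finrank_span_eq_card h
  rw [Matrix.range_cons, Matrix.range_cons, Matrix.range_empty, Set.union_empty,
    Set.singleton_union] at this
  simpa using this

theorem indep_three {v w u : V} (h3 : ∀ x, ∃ r s t : K, x = r • v + s • w + t • u)
    (hd : finrank K V = 3) :
    ∀ p q r : K, p • v + q • w + r • u = 0 → p = 0 ∧ q = 0 ∧ r = 0 := by
  have h : LinearIndependent K ![v, w, u] := by
    refine linearIndependent_of_top_le_span_of_card_eq_finrank ?_ (by simp [hd])
    rintro x -
    obtain ⟨r, s, t, rfl⟩ := h3 x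
    have hm : ∀ i, ![v, w, u] i ∈ Submodule.span K (Set.range ![v, w, u]) :=
      fun i => Submodule.subset_span ⟨i, rfl⟩
    exact Submodule.add_mem _ (Submodule.add_mem _ (Submodule.smul_mem _ _ (hm 0))
      (Submodule.smul_mem _ _ (hm 1))) (Submodule.smul_mem _ _ (hm 2))
  rw [Fintype.linearIndependent_iff] at h
  intro p q r hpqr
  have := h ![p, q, r] (by simpa [Fin.sum_univ_three] using hpqr)
  exact ⟨this 0, this 1, this 2⟩

theorem fwdH [FiniteDimensional K L] (e : L ≃ₗ[K] V × W) {br : V →ₗ[K] V →ₗ[K] W}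
    (halt : ∀ a, br a a = 0)
    (hbr : ∀ x y, e ⁅x, y⁆ = (0, br (e x).1 (e y).1))
    (hspan : Submodule.span K {z | ∃ a b, br a b = z} = ⊤) {v w : V} (h : br v w ≠ 0)
    (h1 : ∀ b c, br b c ∈ Submodule.span K {br v w})
    (hB : ∀ β, (∀ c, cyc br β v w c = 0) → ∀ a b c, cyc br β a b c = 0)
    {k : ℕ} (hk : finrank K V = k + 2) (hL : finrank K L = k + 3) :
    Nonempty (L ≃ₗ⁅K⁆ heisenbergPlusAbelian K k) := by
  have hb := br_symm e hbr
  have hz0 : e.symm ((0 : V), (0 : W)) = 0 := e.symm.map_zero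
  obtain ⟨f, hf⟩ := exists_functional (K := K) h
  have hom : ∀ b c, br b c = f (br b c) • br v w := by
    intro b c
    obtain ⟨t, ht⟩ := Submodule.mem_span_singleton.1 (h1 b c)
    rw [← ht, map_smul, hf, smul_eq_mul, mul_one]
  let T : V →ₗ[K] K × K := (f.comp (br v)).prod (f.comp (br w))
  have hT : LinearMap.range T = ⊤ := by
    rw [LinearMap.range_eq_top]
    rintro ⟨p, q⟩
    refine ⟨p • w - q • v, ?_⟩
    simp [T, halt, br_swap halt w v, hf]
  have hC : finrank K (LinearMap.ker T) = k := by
    have := LinearMap.finrank_range_add_finrank_ker T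
    rw [hT, finrank_top, finrank_prod, finrank_self] at this
    omega
  have hker : ∀ c ∈ LinearMap.ker T, br v c = 0 ∧ br w c = 0 := by
    intro c hc
    rw [LinearMap.mem_ker] at hc
    have e1 : f (br v c) = 0 := congrArg Prod.fst hc
    have e2 : f (br w c) = 0 := congrArg Prod.snd hc
    rw [hom v c, hom w c, e1, e2]
    simp
  let b := finBasisOfFinrankEq K (LinearMap.ker T) hC
  have hvb : ∀ j, br v (b j) = 0 := fun j => (hker _ (b j).2).1
  have hwb : ∀ j, br w (b j) = 0 := fun j => (hker _ (b j).2).2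
  have hbv : ∀ j, br (b j) v = 0 := fun j => by rw [br_swap halt, hvb, neg_zero]
  have hbw : ∀ j, br (b j) w = 0 := fun j => by rw [br_swap halt, hwb, neg_zero]
  have hbb : ∀ i j, br (b i) (b j) = 0 := fun i j =>
    heis_structure halt h h1 hB _ _ (hvb i) (hwb i) (hvb j) (hwb j)
  let x : Fin 3 ⊕ Fin k → L := Sum.elim ![e.symm (v, 0), e.symm (w, 0), e.symm (0, br v w)]
    (fun j => e.symm ((b j : V), 0))
  obtain ⟨E⟩ := pres_iso' (relH K k) x (by
      rintro z (rfl | ⟨i, j, hi, hj, rfl⟩)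
      · simp [x, hb, FreeLieAlgebra.lift_of_apply]
      · rw [LieHom.map_lie, FreeLieAlgebra.lift_of_apply, FreeLieAlgebra.lift_of_apply]
        rcases i with i | i <;> rcases j with j | j
        · fin_cases i <;> fin_cases j <;> first
            | (exfalso; revert hi; simp; done)
            | (exfalso; revert hj; simp; done)
            | (simp [x, hb, hz0, halt]; done)
        · fin_cases i <;> simp [x, hb, hz0, hvb, hwb]
        · fin_cases j <;> simp [x, hb, hz0, hbv, hbw]
        · simp [x, hb, hz0, hbb])
    (by
      have hm : ∀ i, x i ∈ Submodule.span K (Set.range x) := fun i => Submodule.subset_span ⟨i, rfl⟩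
      have hc : ∀ c ∈ LinearMap.ker T, e.symm (c, 0) ∈ Submodule.span K (Set.range x) := by
        intro c hc
        have hle : (⊤ : Submodule K (LinearMap.ker T)) ≤
            (Submodule.span K (Set.range x)).comap ((e.symm : V × W →ₗ[K] L).comp
              ((LinearMap.inl K V W).comp (LinearMap.ker T).subtype)) := by
          rw [← b.span_eq, Submodule.span_le]
          rintro _ ⟨j, rfl⟩
          exact hm (.inr j)
        exact hle (x := ⟨c, hc⟩) trivial
      refine span_top_of e hspan _ ?_ ?_
      · intro a
        have ha : a = (-f (br w a)) • v + f (br v a) • w +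
            (1 : K) • (a - ((-f (br w a)) • v + f (br v a) • w)) := by module
        rw [ha]
        refine symm_comb e _ (hm (.inl 0)) (hm (.inl 1)) (hc _ ?_) _ _ _
        rw [LinearMap.mem_ker]
        ext
        · simp [T, halt, hf]
        · simp [T, halt, br_swap halt w v, hf]
      · intro a c
        rw [hom a c]
        have := symm_comb2 e _ (hm (.inl 2)) (hm (.inl 2)) (hm (.inl 2)) (f (br a c)) 0 0
        simpa using this)
    (by simp; omega) _ relH_tri relH_P
  exact ⟨E.trans (isoH k).symm⟩

theorem forward [FiniteDimensional K L] (n : ℕ) (hn : finrank K L = n)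
    (e : L ≃ₗ[K] V × W) {br : V →ₗ[K] V →ₗ[K] W}
    (halt : ∀ a, br a a = 0)
    (hbr : ∀ x y, e ⁅x, y⁆ = (0, br (e x).1 (e y).1))
    (hspan : Submodule.span K {z | ∃ a b, br a b = z} = ⊤)
    (hne : ∃ v w, br v w ≠ 0)
    (hfin : finrank K (Bsub br) + finrank K V = finrank K V * finrank K W + 2) :
    Nonempty (L ≃ₗ⁅K⁆ heisenbergPlusAbelian K (n - 3)) ∨
      Nonempty (L ≃ₗ⁅K⁆ lieL58 K) ∨ Nonempty (L ≃ₗ⁅K⁆ lieL626 K) := by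
  have hB : ∀ v w, br v w ≠ 0 → ∀ β, (∀ c, cyc br β v w c = 0) → ∀ a b c, cyc br β a b c = 0 :=
    fun v w h => (finrank_Bsub_iff halt h).1 hfin
  obtain ⟨v, w, h⟩ := hne
  have hd : finrank K V + finrank K W = n := by
    rw [← hn, e.finrank_eq, finrank_prod]
  have h2 : 2 ≤ finrank K V := by
    rw [← finrank_span_vw halt h]; exact Submodule.finrank_le _
  by_cases h1 : ∀ b c, br b c ∈ Submodule.span K {br v w}
  · left
    have hW : finrank K W = 1 := by
      have : Submodule.span K {br v w} = ⊤ := by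
        rw [eq_top_iff, ← hspan, Submodule.span_le]
        rintro _ ⟨a, b, rfl⟩
        exact h1 a b
      rw [← finrank_top K W, ← this, finrank_span_singleton h]
    exact fwdH e halt hbr hspan h h1 (hB v w h) (by omega) (by omega)
  · right
    have hd3 : finrank K V ≤ 3 := by
      by_contra hd4
      exact h1 (one_dim halt (by omega) hB h)
    obtain ⟨u, h3⟩ := exists_third hd3 (finrank_span_vw halt h)
    have hV : finrank K V = 3 := by
      by_contra hV
      have htop : Submodule.span K {v, w} = ⊤ :=
        Submodule.eq_top_of_finrank_eq (by rw [finrank_span_vw halt h]; omega)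
      apply h1
      intro b c
      have hb : b ∈ Submodule.span K {v, w} := by rw [htop]; trivial
      have hc : c ∈ Submodule.span K {v, w} := by rw [htop]; trivial
      obtain ⟨r, s, rfl⟩ := Submodule.mem_span_pair.1 hb
      obtain ⟨r', s', rfl⟩ := Submodule.mem_span_pair.1 hc
      rw [Submodule.mem_span_singleton]
      refine ⟨r * s' - s * r', ?_⟩
      simp only [map_add, map_smul, LinearMap.add_apply, LinearMap.smul_apply, halt,
        br_swap halt w v]
      module
    have hW1 : 2 ≤ finrank K W := by
      by_contra hW
      apply h1
      have hs : Submodule.span K {br v w} = ⊤ := by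
        refine Submodule.eq_top_of_finrank_eq ?_
        have := Submodule.finrank_le (Submodule.span K {br v w})
        rw [finrank_span_singleton h] at this ⊢
        omega
      intro b c
      rw [hs]; trivial
    by_cases hW : finrank K W ≤ 2
    · left
      obtain ⟨a, b, hab, h0⟩ := exists_commuting halt (indep_three h3 hV) hW
      obtain ⟨c, hc⟩ := exists_third hd3 (finrank_pair hab)
      refine fwd58 (v := c) (w := a) (u := b) e halt hbr hspan ?_ h0 (by omega)
      intro x
      obtain ⟨r, s, t, hx⟩ := hc x
      exact ⟨t, r, s, by rw [hx]; abel⟩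
    · right
      exact fwd626 e halt hbr hspan h3 (by omega)

end SchurForwardTwo


/-- an `n`-dimensional nilpotent Lie algebra of class two with
`dim L² = m` satisfies `dim M(L) = (1/2)(n+m−2)(n−m−1) + 1` iff `L` is isomorphic to
`H(1) ⊕ A(n−3)`, `L_{5,8}` or `L_{6,26}`. -/
theorem schur_multiplier_max_class_two (K L : Type) [Field K] [LieRing L]
    [LieAlgebra K L] [FiniteDimensional K L] (n m : ℕ)
    (hn : Module.finrank K L = n) (hm : lieDerivedDim K L = m)
    (hc : lieNilpotencyClass K L 2) :
    (∀ (X : Type) (π : FreeLieAlgebra K X →ₗ⁅K⁆ L), Function.Surjective π →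
        (lieSchurMultiplierDim K X π : ℤ) = ((n : ℤ) + m - 2) * ((n : ℤ) - m - 1) / 2 + 1)
      ↔ (Nonempty (L ≃ₗ⁅K⁆ heisenbergPlusAbelian K (n - 3)) ∨
          Nonempty (L ≃ₗ⁅K⁆ lieL58 K) ∨ Nonempty (L ≃ₗ⁅K⁆ lieL626 K)) := by
  obtain ⟨V, W, e, br, halt, hbr, hspan, hW, hne, -, -, -⟩ := exists_decomp hc
  rw [formula_iff n m hn hm (hW.trans hm) e halt hbr hspan]
  constructor
  · exact fun h => forward n hn e halt hbr hspan hne h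
  · rintro (⟨⟨E⟩⟩ | ⟨⟨E⟩⟩ | ⟨⟨E⟩⟩)
    · exact bwdH _ e halt hbr hne E
    · exact bwd58 e halt hbr hne E
    · exact bwd626 e halt hbr hne E
end

section
/- Let L be an n-dimensional nilpotent Lie algebra of nilpotency class c ≥ 3 with dim L² = m such that dim M(L) = (1/2)(n−m−1)(n+m) − Σ_{i=2}^{min(n−m,c)} (n−m−i). If I is a one-dimensional ideal contained in Z(L) ∩ L², then dim M(L/I) = (1/2)(n−m−1)(n+m−2) − Σ_{i=2}^{min(n−m,c')} (n−m−i), where c' = cl(L/I); that is, dim M(L/I) attains the corresponding bound for L/I (which has dimension n−1 and derived subalgebra of dimension m−1). -/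
open Module

namespace RaiAux
open LieModule

section rel
variable {K V : Type} [Field K] [AddCommGroup V] [Module K V]

/-- relative rank of `B` over `A` -/
noncomputable def rk (A B : Submodule K V) : Cardinal :=
  Module.rank K (↥B ⧸ Submodule.comap B.subtype A)

theorem rk_add {A B C : Submodule K V} (hAB : A ≤ B) (hBC : B ≤ C) :
    rk A C = rk A B + rk B C := by
  unfold rk
  let N : Submodule K ↥C := Submodule.comap C.subtype A
  let P : Submodule K ↥C := Submodule.comap C.subtype B
  let g : (↥C ⧸ N) →ₗ[K] (↥C ⧸ P) := Submodule.factor (Submodule.comap_mono hAB)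
  have hg : Function.Surjective g := Submodule.factor_surjective _
  let f : (↥B ⧸ Submodule.comap B.subtype A) →ₗ[K] (↥C ⧸ N) :=
    Submodule.mapQ _ _ (Submodule.inclusion hBC) (by intro x hx; exact hx)
  have hf : Function.Injective f := by
    rw [← LinearMap.ker_eq_bot, LinearMap.ker_eq_bot']
    intro m hm
    induction m using Submodule.Quotient.induction_on with
    | H x =>
      change Submodule.Quotient.mk (Submodule.inclusion hBC x) = (0 : ↥C ⧸ N) at hm
      rw [Submodule.Quotient.mk_eq_zero] at hm
      rw [Submodule.Quotient.mk_eq_zero]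
      exact hm
  have hr : LinearMap.range f = LinearMap.ker g := by
    ext y
    induction y using Submodule.Quotient.induction_on with
    | H y =>
      constructor
      · rintro ⟨x, hx⟩
        induction x using Submodule.Quotient.induction_on with
        | H x =>
          rw [← hx]
          change Submodule.Quotient.mk (Submodule.inclusion hBC x) = (0 : ↥C ⧸ P)
          rw [Submodule.Quotient.mk_eq_zero]
          exact x.2
      · intro h
        change Submodule.Quotient.mk y = (0 : ↥C ⧸ P) at h
        rw [Submodule.Quotient.mk_eq_zero] at h
        exact ⟨Submodule.Quotient.mk ⟨y.1, h⟩, rfl⟩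
  have h1 := LinearMap.rank_range_add_rank_ker g
  rw [← hr, rank_range_of_surjective g hg,
    ← (LinearEquiv.ofInjective f hf).rank_eq] at h1
  rw [add_comm]
  exact h1.symm

theorem rk_le_of_span {A B : Submodule K V} {ι : Type} [Fintype ι] (v : ι → V)
    (h : B ≤ A ⊔ Submodule.span K (Set.range v)) : rk A B ≤ (Fintype.card ι : Cardinal) := by
  unfold rk
  let f : (↥B ⧸ Submodule.comap B.subtype A) →ₗ[K] (V ⧸ A) :=
    Submodule.mapQ _ _ B.subtype le_rfl
  have hf : Function.Injective f := by
    rw [← LinearMap.ker_eq_bot, LinearMap.ker_eq_bot']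
    intro m hm
    induction m using Submodule.Quotient.induction_on with
    | H x =>
      rw [Submodule.mapQ_apply, Submodule.Quotient.mk_eq_zero] at hm
      rw [Submodule.Quotient.mk_eq_zero]
      exact hm
  rw [(LinearEquiv.ofInjective f hf).rank_eq]
  have hle : LinearMap.range f ≤ Submodule.span K (Set.range (fun i => A.mkQ (v i))) := by
    rintro _ ⟨x, rfl⟩
    induction x using Submodule.Quotient.induction_on with
    | H x =>
      rw [Submodule.mapQ_apply]
      obtain ⟨a, ha, b, hb, hab⟩ := Submodule.mem_sup.1 (h x.2)
      have : (Submodule.Quotient.mk (B.subtype x) : V ⧸ A) = A.mkQ b := by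
        change A.mkQ x.1 = _
        rw [← hab, map_add]
        have : A.mkQ a = 0 := by simpa using ha
        rw [this, zero_add]
      rw [this]
      have h2 := Submodule.mem_map_of_mem (f := A.mkQ) hb
      rw [Submodule.map_span, ← Set.range_comp] at h2
      exact h2
  refine (Submodule.rank_mono hle).trans ((rank_span_le _).trans ?_)
  refine Cardinal.mk_range_le.trans ?_
  simp

theorem rk_eq_one {A B : Submodule K V} (s : V) (hsB : s ∈ B) (hsA : s ∉ A)
    (h : B ≤ A ⊔ Submodule.span K {s}) : rk A B = 1 := by
  apply le_antisymm
  · have := rk_le_of_span (A := A) (B := B) (ι := Unit) (fun _ => s) (by simpa using h)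
    simpa using this
  · unfold rk
    rw [Cardinal.one_le_iff_ne_zero, ← pos_iff_ne_zero, rank_pos_iff_exists_ne_zero]
    refine ⟨Submodule.Quotient.mk ⟨s, hsB⟩, ?_⟩
    rw [Ne, Submodule.Quotient.mk_eq_zero]
    exact hsA

end rel

section good
variable {K F : Type} [Field K] [LieRing F] [LieAlgebra K F]

/-- span of brackets of elements of a term of the lower central series with given elements -/
def brSpan (K : Type) {F : Type} [Field K] [LieRing F] [LieAlgebra K F] (j : ℕ) {k : ℕ}
    (x : Fin k → F) : Submodule K F :=
  Submodule.span K {z | ∃ i, ∃ w ∈ lowerCentralSeries K F F j, ⁅w, x i⁆ = z}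

theorem lie_mem_lcs {j : ℕ} {w : F} (hw : w ∈ lowerCentralSeries K F F j) (x : F) :
    ⁅x, w⁆ ∈ lowerCentralSeries K F F (j + 1) := by
  rw [lowerCentralSeries_succ]
  exact LieSubmodule.lie_mem_lie (LieSubmodule.mem_top x) hw

theorem lie_mem_lcs' {j : ℕ} {w : F} (hw : w ∈ lowerCentralSeries K F F j) (x : F) :
    ⁅w, x⁆ ∈ lowerCentralSeries K F F (j + 1) := by
  rw [← lie_skew]
  exact neg_mem (lie_mem_lcs hw x)

theorem brSpan_le (j : ℕ) {k : ℕ} (x : Fin k → F) :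
    brSpan K j x ≤ (lowerCentralSeries K F F (j + 1)).toSubmodule := by
  unfold brSpan
  rw [Submodule.span_le]
  rintro _ ⟨i, w, hw, rfl⟩
  exact lie_mem_lcs' hw _

/-- behaves like a left-normed commutator of length `k+1` -/
def Good (K : Type) {F : Type} [Field K] [LieRing F] [LieAlgebra K F] (k : ℕ) (s : F) : Prop :=
  s ∈ lowerCentralSeries K F F k ∧ ∃ x : Fin (k + 1) → F, ∀ j, ∀ y ∈ lowerCentralSeries K F F j,
    ⁅s, y⁆ ∈ brSpan K (k + j) x

theorem good_zero (s : F) : Good K 0 s := by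
  refine ⟨by simp, fun _ => s, fun j y hy => ?_⟩
  rw [← lie_skew]
  refine neg_mem (Submodule.subset_span ⟨0, y, by simpa using hy, rfl⟩)

theorem good_succ {k : ℕ} {s : F} (h : Good K k s) (x' : F) : Good K (k + 1) ⁅s, x'⁆ := by
  obtain ⟨hs, x, hx⟩ := h
  refine ⟨lie_mem_lcs' hs _, Fin.cons x' x, fun j y hy => ?_⟩
  have h1 : ⁅⁅s, x'⁆, y⁆ = ⁅⁅s, y⁆, x'⁆ + ⁅s, ⁅x', y⁆⁆ := by
    have := leibniz_lie s x' y
    rw [this, ← lie_skew x' ⁅s, y⁆]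
    abel
  rw [h1]
  refine add_mem ?_ ?_
  · refine Submodule.subset_span ⟨0, ⁅s, y⁆, ?_, by simp⟩
    have := brSpan_le _ _ (hx j y hy)
    rw [show k + 1 + j = k + j + 1 by ring]
    exact this
  · have := hx (j + 1) _ (lie_mem_lcs hy x')
    rw [show k + 1 + j = k + (j + 1) by ring]
    refine Submodule.span_mono ?_ this
    rintro _ ⟨i, w, hw, rfl⟩
    exact ⟨i.succ, w, hw, by simp⟩

theorem lcs_le_span_good (k : ℕ) :
    (lowerCentralSeries K F F k).toSubmodule ≤ Submodule.span K {s : F | Good K k s} := by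
  induction k with
  | zero => intro s _; exact Submodule.subset_span (good_zero s)
  | succ k ih =>
    rw [lowerCentralSeries_succ, LieSubmodule.lieIdeal_oper_eq_linear_span', Submodule.span_le]
    rintro _ ⟨y, -, w, hw, rfl⟩
    have hw' := ih hw
    rw [SetLike.mem_coe, ← lie_skew]
    refine neg_mem ?_
    clear hw
    induction hw' using Submodule.span_induction with
    | mem s hs => exact Submodule.subset_span (good_succ hs y)
    | zero => simp
    | add a b _ _ ha hb => 
      rw [add_lie]; exact add_mem ha hb
    | smul t a _ ha => rw [smul_lie]; exact Submodule.smul_mem _ _ ha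

end good

section step
variable {K F L L' : Type} [Field K] [LieRing F] [LieAlgebra K F] [LieRing L] [LieAlgebra K L]
  [LieRing L'] [LieAlgebra K L']

def comR (π : F →ₗ⁅K⁆ L) : Submodule K F :=
  (⁅π.ker, (⊤ : LieIdeal K F)⁆ : LieIdeal K F).toSubmodule

/-- `R ∩ F²` as a submodule -/
def capR (π : F →ₗ⁅K⁆ L) : Submodule K F :=
  (π.ker ⊓ lowerCentralSeries K F F 1 : LieIdeal K F).toSubmodule

theorem mem_capR {π : F →ₗ⁅K⁆ L} {x : F} :
    x ∈ capR π ↔ π x = 0 ∧ x ∈ lowerCentralSeries K F F 1 := by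
  unfold capR
  rw [LieSubmodule.mem_toSubmodule, LieSubmodule.mem_inf, LieHom.mem_ker]

theorem lie_mem_comR {π : F →ₗ⁅K⁆ L} {r : F} (hr : π r = 0) (f : F) : ⁅r, f⁆ ∈ comR π :=
  LieSubmodule.lie_mem_lie (LieHom.mem_ker.2 hr) (LieSubmodule.mem_top f)

theorem lie_mem_comR' {π : F →ₗ⁅K⁆ L} {r : F} (hr : π r = 0) (f : F) : ⁅f, r⁆ ∈ comR π := by
  rw [← lie_skew]; exact neg_mem (lie_mem_comR hr f)

theorem comR_le {π : F →ₗ⁅K⁆ L} {W : Submodule K F} (h : ∀ r f, π r = 0 → ⁅r, f⁆ ∈ W) :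
    comR π ≤ W := by
  unfold comR
  rw [LieSubmodule.lieIdeal_oper_eq_linear_span', Submodule.span_le]
  rintro _ ⟨r, hr, f, -, rfl⟩
  exact h r f (LieHom.mem_ker.1 hr)

theorem lcs_one_le {W : Submodule K F} (h : ∀ a b : F, ⁅a, b⁆ ∈ W) :
    (lowerCentralSeries K F F 1).toSubmodule ≤ W := by
  rw [lowerCentralSeries_succ, LieSubmodule.lieIdeal_oper_eq_linear_span', Submodule.span_le]
  rintro _ ⟨r, hr, f, -, rfl⟩
  exact h r f

theorem lie_mem_lcs_one (a b : F) : ⁅a, b⁆ ∈ lowerCentralSeries K F F 1 :=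
  lie_mem_lcs (j := 0) (by simp) a

/-- rank of the multiplier -/
noncomputable def mrk (π : F →ₗ⁅K⁆ L) : Cardinal := rk (comR π) (capR π)

theorem mem_lcs_map {π : F →ₗ⁅K⁆ L} (hπ : Function.Surjective π) {k : ℕ} {y : L} :
    y ∈ lowerCentralSeries K L L k ↔ ∃ x ∈ lowerCentralSeries K F F k, π x = y := by
  have := Function.Surjective.lieModule_lcs_map_eq (R := K) (f := π) (g := (π : F →ₗ[K] L))
    (fun x m => (LieHom.map_lie π x m).symm) hπ hπ k
  rw [← LieSubmodule.mem_toSubmodule, ← this]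
  rfl

/-- lifts of a basis of the abelianization -/
theorem exists_gens [FiniteDimensional K L] {π : F →ₗ⁅K⁆ L} (hπ : Function.Surjective π) :
    ∃ v : Fin (Module.finrank K L - lieDerivedDim K L) → F, ∀ f : F,
      ∃ a ∈ Submodule.span K (Set.range v), ∃ r, π r = 0 ∧
        ∃ b ∈ lowerCentralSeries K F F 1, f = a + r + b := by
  let D : Submodule K L := (lowerCentralSeries K L L 1).toSubmodule
  have hd : Module.finrank K (L ⧸ D) = Module.finrank K L - lieDerivedDim K L := by
    rw [Submodule.finrank_quotient]; rfl
  let bs := Module.finBasisOfFinrankEq K (L ⧸ D) hd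
  let p : F →ₗ[K] (L ⧸ D) := D.mkQ ∘ₗ (π : F →ₗ[K] L)
  have hp : Function.Surjective p := D.mkQ_surjective.comp hπ
  choose v hv using fun i => hp (bs i)
  refine ⟨v, fun f => ?_⟩
  have hmem : p f ∈ Submodule.map p (Submodule.span K (Set.range v)) := by
    rw [Submodule.map_span, ← Set.range_comp]
    have : p ∘ v = bs := funext hv
    rw [this, bs.span_eq]
    trivial
  obtain ⟨a, ha, hpa⟩ := hmem
  have hz : π (f - a) ∈ lowerCentralSeries K L L 1 := by
    have h0 : p (f - a) = 0 := by rw [map_sub, hpa, sub_self]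
    exact (Submodule.Quotient.mk_eq_zero D).1 h0
  obtain ⟨b, hb, hπb⟩ := (mem_lcs_map hπ).1 hz
  refine ⟨a, ha, f - a - b, ?_, b, hb, by abel⟩
  rw [map_sub, hπb, sub_self]

variable {π : F →ₗ⁅K⁆ L} {q : L →ₗ⁅K⁆ L'} {s : F}

theorem decomp (hs : ∀ x : L, q x = 0 ↔ x ∈ Submodule.span K {π s}) {x : F}
    (hx : q (π x) = 0) : ∃ t : K, π (x - t • s) = 0 := by
  obtain ⟨t, ht⟩ := Submodule.mem_span_singleton.1 ((hs _).1 hx)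
  exact ⟨t, by rw [map_sub, map_smul, ht, sub_self]⟩

theorem comR_comp_le (hs : ∀ x : L, q x = 0 ↔ x ∈ Submodule.span K {π s}) {W : Submodule K F}
    (hW : ∀ f, ⁅s, f⁆ ∈ comR π ⊔ W) : comR (q.comp π) ≤ comR π ⊔ W := by
  apply comR_le
  intro x f hx
  obtain ⟨t, ht⟩ := decomp hs hx
  have : ⁅x, f⁆ = ⁅x - t • s, f⁆ + t • ⁅s, f⁆ := by
    rw [sub_lie, smul_lie]; abel
  rw [this]
  exact add_mem (Submodule.mem_sup_left (lie_mem_comR ht f)) (Submodule.smul_mem _ _ (hW f))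

theorem step_eq (hπ : Function.Surjective π)
    (hs : ∀ x : L, q x = 0 ↔ x ∈ Submodule.span K {π s}) (hcen : ∀ x : L, ⁅π s, x⁆ = 0)
    (hs0 : π s ≠ 0) (hs1 : π s ∈ lowerCentralSeries K L L 1) :
    mrk π + 1 = mrk (q.comp π) + rk (comR π) (comR (q.comp π)) := by
  obtain ⟨s', hs', hss⟩ := (mem_lcs_map hπ).1 hs1
  rw [← hss] at hs hcen hs0
  clear hs1 hss
  have h1 : comR π ≤ comR (q.comp π) := by
    apply comR_le
    intro r f hr
    exact lie_mem_comR (by simp [hr]) f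
  have h2 : comR (q.comp π) ≤ capR π := by
    apply comR_le
    intro x f hx
    obtain ⟨t, ht⟩ := Submodule.mem_span_singleton.1 ((hs _).1 hx)
    rw [mem_capR]
    refine ⟨?_, lie_mem_lcs_one _ _⟩
    change t • π s' = π x at ht
    rw [LieHom.map_lie, ← ht, smul_lie, hcen, smul_zero]
  have h3 : capR π ≤ capR (q.comp π) := by
    intro x hx
    rw [mem_capR] at hx ⊢
    exact ⟨by simp [hx.1], hx.2⟩
  have h4 : rk (capR π) (capR (q.comp π)) = 1 := by
    apply rk_eq_one s'
    · rw [mem_capR]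
      exact ⟨(hs _).2 (Submodule.mem_span_singleton_self _), hs'⟩
    · rw [mem_capR]; exact fun h => hs0 h.1
    · intro x hx
      rw [mem_capR] at hx
      obtain ⟨t, ht⟩ := decomp hs hx.1
      have : x = (x - t • s') + t • s' := by abel
      rw [this]
      refine add_mem (Submodule.mem_sup_left ?_) (Submodule.mem_sup_right
        (Submodule.smul_mem _ _ (Submodule.mem_span_singleton_self _)))
      rw [mem_capR]
      exact ⟨ht, sub_mem hx.2 ((lowerCentralSeries K F F 1).smul_mem t hs')⟩
  unfold mrk
  rw [rk_add h1 h2, rk_add h2 h3, h4]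
  ring

theorem rk_le_d [FiniteDimensional K L] (hπ : Function.Surjective π)
    (hs : ∀ x : L, q x = 0 ↔ x ∈ Submodule.span K {π s}) (hcen : ∀ x : L, ⁅π s, x⁆ = 0) :
    rk (comR π) (comR (q.comp π)) ≤ ((Module.finrank K L - lieDerivedDim K L : ℕ) : Cardinal) := by
  obtain ⟨v, hv⟩ := exists_gens (K := K) hπ
  have := rk_le_of_span (A := comR π) (B := comR (q.comp π)) (fun i => ⁅s, v i⁆) (by
    apply comR_comp_le hs
    intro f
    obtain ⟨a, ha, r, hr, b, hb, rfl⟩ := hv f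
    rw [lie_add, lie_add]
    refine add_mem (add_mem (Submodule.mem_sup_right ?_) (Submodule.mem_sup_left ?_))
      (Submodule.mem_sup_left ?_)
    · have := Submodule.mem_map_of_mem (f := (LieAlgebra.ad K F s : F →ₗ[K] F)) ha
      rw [Submodule.map_span, ← Set.range_comp] at this
      exact this
    · exact lie_mem_comR' hr s
    · have hle : (lowerCentralSeries K F F 1).toSubmodule ≤
          (comR π).comap (LieAlgebra.ad K F s : F →ₗ[K] F) := by
        apply lcs_one_le
        intro x y
        change ⁅s, ⁅x, y⁆⁆ ∈ comR π
        rw [leibniz_lie]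
        refine add_mem (lie_mem_comR ?_ _) (lie_mem_comR' ?_ _)
        · rw [LieHom.map_lie, hcen]
        · rw [LieHom.map_lie, hcen]
      exact hle hb)
  simpa using this

theorem rk_le_c (hs : ∀ x : L, q x = 0 ↔ x ∈ Submodule.span K {π s}) {k : ℕ}
    (hgood : Good K k s) (hk : ∀ w ∈ lowerCentralSeries K F F k, q (π w) = 0) :
    rk (comR π) (comR (q.comp π)) ≤ ((k + 1 : ℕ) : Cardinal) := by
  obtain ⟨-, x, hx⟩ := hgood
  have := rk_le_of_span (A := comR π) (B := comR (q.comp π)) (fun i => ⁅s, x i⁆) (by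
    apply comR_comp_le hs
    intro f
    have hf := hx 0 f (by simp)
    refine Submodule.span_le.2 ?_ hf
    rintro _ ⟨i, w, hw, rfl⟩
    obtain ⟨t, ht⟩ := decomp hs (hk w (by simpa using hw))
    have : ⁅w, x i⁆ = ⁅w - t • s, x i⁆ + t • ⁅s, x i⁆ := by
      rw [sub_lie, smul_lie]; abel
    rw [SetLike.mem_coe, this]
    exact add_mem (Submodule.mem_sup_left (lie_mem_comR ht _)) (Submodule.mem_sup_right
      (Submodule.smul_mem _ _ (Submodule.subset_span ⟨i, rfl⟩))))
  simpa using this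

theorem mrk_abelian [FiniteDimensional K L] (hπ : Function.Surjective π)
    (hab : lowerCentralSeries K L L 1 = ⊥) :
    mrk π ≤ ((Module.finrank K L * (Module.finrank K L - 1) / 2 : ℕ) : Cardinal) := by
  have hm : lieDerivedDim K L = 0 := by
    unfold lieDerivedDim
    rw [hab]
    exact finrank_bot K L
  obtain ⟨v, hv⟩ := exists_gens (K := K) hπ
  generalize hd : Module.finrank K L - lieDerivedDim K L = d at v hv
  rw [hm, Nat.sub_zero] at hd
  rw [hd]
  let u : (Σ j : Fin d, Fin j.1) → F := fun p => ⁅v ⟨p.2.1, p.2.2.trans p.1.2⟩, v p.1⁆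
  have hu : ∀ i j : Fin d, i < j → ⁅v i, v j⁆ ∈ Submodule.span K (Set.range u) :=
    fun i j hij => Submodule.subset_span ⟨⟨j, ⟨i.1, hij⟩⟩, rfl⟩
  have hu' : ∀ i j : Fin d, ⁅v i, v j⁆ ∈ Submodule.span K (Set.range u) := by
    intro i j
    rcases lt_trichotomy i j with h | h | h
    · exact hu i j h
    · rw [h, lie_self]; exact zero_mem _
    · rw [← lie_skew]; exact neg_mem (hu j i h)
  have huu : ∀ a ∈ Submodule.span K (Set.range v), ∀ b ∈ Submodule.span K (Set.range v),
      ⁅a, b⁆ ∈ Submodule.span K (Set.range u) := by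
    intro a ha b hb
    induction ha using Submodule.span_induction with
    | zero => rw [zero_lie]; exact zero_mem _
    | add x y _ _ hx hy => rw [add_lie]; exact add_mem hx hy
    | smul t x _ hx => rw [smul_lie]; exact Submodule.smul_mem _ _ hx
    | mem x hx =>
      obtain ⟨i, rfl⟩ := hx
      induction hb using Submodule.span_induction with
      | zero => rw [lie_zero]; exact zero_mem _
      | add x y _ _ hx hy => rw [lie_add]; exact add_mem hx hy
      | smul t x _ hx => rw [lie_smul]; exact Submodule.smul_mem _ _ hx
      | mem x hx => 
        obtain ⟨j, rfl⟩ := hx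
        exact hu' i j
  have hv' : ∀ f : F, ∃ a ∈ Submodule.span K (Set.range v), ∃ r, π r = 0 ∧ f = a + r := by
    intro f
    obtain ⟨a, ha, r, hr, b, hb, hf⟩ := hv f
    refine ⟨a, ha, r + b, ?_, by rw [hf]; abel⟩
    have : π b ∈ lowerCentralSeries K L L 1 := (mem_lcs_map hπ).2 ⟨b, hb, rfl⟩
    rw [hab, LieSubmodule.mem_bot] at this
    rw [map_add, hr, this, add_zero]
  have hmain := rk_le_of_span (A := comR π) (B := capR π) u (by
    intro x hx
    refine lcs_one_le ?_ (mem_capR.1 hx).2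
    intro f g
    obtain ⟨a, ha, r, hr, rfl⟩ := hv' f
    obtain ⟨b, hb, r', hr', rfl⟩ := hv' g
    have : ⁅a + r, b + r'⁆ = ⁅r, b + r'⁆ + ⁅a, r'⁆ + ⁅a, b⁆ := by
      rw [add_lie, lie_add a]; abel
    rw [this]
    exact add_mem (Submodule.mem_sup_left (add_mem (lie_mem_comR hr _) (lie_mem_comR' hr' _)))
      (Submodule.mem_sup_right (huu a ha b hb)))
  have hcard : Fintype.card (Σ j : Fin d, Fin j.1) = d * (d - 1) / 2 := by
    rw [Fintype.card_sigma]
    simp only [Fintype.card_fin]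
    rw [Fin.sum_univ_eq_sum_range (fun i => i), Finset.sum_range_id]
  rw [hcard] at hmain
  exact hmain

end step

theorem raiBound_same {n m c : ℕ} (hn : 1 ≤ n) (hm : 1 ≤ m) (hmn : m ≤ n) :
    raiBound n m c = raiBound (n - 1) (m - 1) c + ((n - m : ℕ) : ℤ) - 1 := by
  obtain ⟨n, rfl⟩ := Nat.exists_eq_add_of_le' hn
  obtain ⟨m, rfl⟩ := Nat.exists_eq_add_of_le' hm
  unfold raiBound
  simp only [Nat.add_sub_cancel, Nat.add_sub_add_right]
  push_cast [Nat.cast_sub (show m ≤ n by omega)]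
  have h1 : ((n : ℤ) + 1 - (m + 1) - 1) * (n + 1 + (m + 1)) =
      ((n : ℤ) - m - 1) * (n + m) + (n - m - 1) * 2 := by ring
  rw [h1, Int.add_mul_ediv_right _ _ (by norm_num)]
  have h2 : ∀ i : ℕ, (n : ℤ) + 1 - (m + 1) - i = n - m - i := fun i => by ring
  simp only [h2]
  ring

theorem raiBound_drop {n m c : ℕ} (hc : 1 ≤ c) :
    raiBound n m (c + 1) = raiBound n m c - ((n - m : ℕ) : ℤ) + ((min (n - m) (c + 1) : ℕ) : ℤ) := by
  unfold raiBound
  by_cases h : c + 1 ≤ n - m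
  · rw [min_eq_right h, min_eq_right (by omega), Finset.sum_Icc_succ_top (by omega)]
    push_cast [Nat.cast_sub (show m ≤ n by omega)]
    ring
  · rw [min_eq_left (by omega), min_eq_left (by omega)]
    ring

section cls
variable {K F L L' : Type} [Field K] [LieRing F] [LieAlgebra K F] [LieRing L] [LieAlgebra K L]
  [LieRing L'] [LieAlgebra K L']

theorem lcs_quot_bot {q : L →ₗ⁅K⁆ L'} (hq : Function.Surjective q) (k : ℕ) :
    lowerCentralSeries K L' L' k = ⊥ ↔ ∀ y ∈ lowerCentralSeries K L L k, q y = 0 := by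
  rw [LieSubmodule.eq_bot_iff]
  constructor
  · intro h y hy
    exact h _ ((mem_lcs_map hq).2 ⟨y, hy, rfl⟩)
  · intro h y hy
    obtain ⟨x, hx, rfl⟩ := (mem_lcs_map hq).1 hy
    exact h x hx

theorem lcs_succ_bot {k : ℕ} (h : ∀ y ∈ lowerCentralSeries K L L k, ∀ x : L, ⁅y, x⁆ = 0) :
    lowerCentralSeries K L L (k + 1) = ⊥ := by
  rw [← LieSubmodule.toSubmodule_inj, lowerCentralSeries_succ,
    LieSubmodule.lieIdeal_oper_eq_linear_span', LieSubmodule.bot_toSubmodule,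
    Submodule.span_eq_bot]
  rintro _ ⟨x, -, y, hy, rfl⟩
  rw [← lie_skew, h y hy, neg_zero]

variable {q : L →ₗ⁅K⁆ L'} {z : L}

theorem class_cases (hq : Function.Surjective q)
    (hz : ∀ x : L, q x = 0 ↔ x ∈ Submodule.span K {z}) (hcen : ∀ x : L, ⁅z, x⁆ = 0)
    {c c' : ℕ} (hc : lieNilpotencyClass K L c) (hc' : lieNilpotencyClass K L' c') :
    c' = c ∨ (c' + 1 = c ∧ ∀ y ∈ lowerCentralSeries K L L c', q y = 0) := by
  have h1 : c' ≤ c := by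
    by_contra h
    push Not at h
    refine hc'.2 c h ((lcs_quot_bot hq c).2 ?_)
    intro y hy
    rw [hc.1, LieSubmodule.mem_bot] at hy
    rw [hy, map_zero]
  have h0 := (lcs_quot_bot hq c').1 hc'.1
  have h2 : c ≤ c' + 1 := by
    by_contra h
    push Not at h
    refine hc.2 _ h (lcs_succ_bot ?_)
    intro y hy x
    obtain ⟨t, rfl⟩ := Submodule.mem_span_singleton.1 ((hz y).1 (h0 y hy))
    rw [smul_lie, hcen, smul_zero]
  rcases Nat.lt_or_ge c' c with h | h
  · exact Or.inr ⟨by omega, h0⟩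
  · exact Or.inl (by omega)

theorem finrank_quot [FiniteDimensional K L] (hq : Function.Surjective q) (hz0 : z ≠ 0)
    (hz : ∀ x : L, q x = 0 ↔ x ∈ Submodule.span K {z}) :
    Module.finrank K L = Module.finrank K L' + 1 := by
  have h := LinearMap.finrank_range_add_finrank_ker (q : L →ₗ[K] L')
  have hk : LinearMap.ker (q : L →ₗ[K] L') = Submodule.span K {z} := by
    ext x; exact hz x
  rw [hk, finrank_span_singleton hz0, LinearMap.range_eq_top.2 hq, finrank_top] at h
  exact h.symm

theorem derived_quot [FiniteDimensional K L] (hq : Function.Surjective q) (hz0 : z ≠ 0)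
    (hz : ∀ x : L, q x = 0 ↔ x ∈ Submodule.span K {z})
    (hz1 : z ∈ lowerCentralSeries K L L 1) :
    lieDerivedDim K L = lieDerivedDim K L' + 1 := by
  unfold lieDerivedDim
  let D : Submodule K L := (lowerCentralSeries K L L 1).toSubmodule
  have h := LinearMap.finrank_range_add_finrank_ker ((q : L →ₗ[K] L').domRestrict D)
  have hk : LinearMap.ker ((q : L →ₗ[K] L').domRestrict D) =
      Submodule.span K {(⟨z, hz1⟩ : ↥D)} := by
    ext x
    rw [Submodule.mem_span_singleton]
    refine (hz x.1).trans ?_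
    rw [Submodule.mem_span_singleton]
    simp only [Subtype.ext_iff]
    rfl
  have hr : LinearMap.range ((q : L →ₗ[K] L').domRestrict D) =
      (lowerCentralSeries K L' L' 1).toSubmodule := by
    ext y
    rw [LieSubmodule.mem_toSubmodule, mem_lcs_map hq]
    constructor
    · rintro ⟨x, rfl⟩; exact ⟨x.1, x.2, rfl⟩
    · rintro ⟨x, hx, rfl⟩; exact ⟨⟨x, hx⟩, rfl⟩
  rw [hk, finrank_span_singleton (by intro h; exact hz0 (congrArg Subtype.val h)), hr] at h
  exact h.symm

theorem step [FiniteDimensional K L] {π : F →ₗ⁅K⁆ L} (hπ : Function.Surjective π)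
    (hq : Function.Surjective q) (hz0 : z ≠ 0)
    (hz : ∀ x : L, q x = 0 ↔ x ∈ Submodule.span K {z}) (hcen : ∀ x : L, ⁅z, x⁆ = 0)
    (hz1 : z ∈ lowerCentralSeries K L L 1) {n m c c' : ℕ}
    (hn : Module.finrank K L = n) (hm : lieDerivedDim K L = m)
    (hc : lieNilpotencyClass K L c) (hc' : lieNilpotencyClass K L' c') :
    ∃ e : Cardinal, ∃ δ : ℕ, mrk π + 1 = mrk (q.comp π) + e ∧ e ≤ (δ : Cardinal) ∧
      raiBound n m c = raiBound (n - 1) (m - 1) c' + δ - 1 := by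
  have hn' := finrank_quot hq hz0 hz
  have hm' := derived_quot hq hz0 hz hz1
  have hmn : m ≤ n := by
    rw [← hm, ← hn]
    exact Submodule.finrank_le _
  obtain ⟨s, rfl⟩ := hπ z
  have hd := rk_le_d (K := K) hπ hz hcen
  rw [hn, hm] at hd
  have he := step_eq hπ hz hcen hz0 hz1
  refine ⟨rk (comR π) (comR (q.comp π)), ?_⟩
  rcases class_cases hq hz hcen hc hc' with h | ⟨h, hk⟩
  · subst h
    refine ⟨n - m, he, hd, ?_⟩
    exact raiBound_same (by omega) (by omega) hmn
  · subst h
    refine ⟨min (n - m) (c' + 1), he, ?_, ?_⟩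
    · suffices hcc : rk (comR π) (comR (q.comp π)) ≤ ((c' + 1 : ℕ) : Cardinal) by
        rcases min_choice (n - m) (c' + 1) with h | h
        · rw [h]; exact hd
        · rw [h]; exact hcc
      have hex : ∃ s' : F, Good K c' s' ∧ π s' ≠ 0 := by
        by_contra hno
        push Not at hno
        apply hc.2 c' (by omega)
        rw [lcs_quot_bot hπ]
        intro y hy
        have := lcs_le_span_good c' hy
        have hle : Submodule.span K {s : F | Good K c' s} ≤ LinearMap.ker (π : F →ₗ[K] L) :=
          Submodule.span_le.2 (fun s hs => hno s hs)
        exact hle this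
      obtain ⟨s', hg, hs0⟩ := hex
      have hq0 : q (π s') = 0 := hk _ ((mem_lcs_map hπ).2 ⟨s', hg.1, rfl⟩)
      obtain ⟨t, ht⟩ := Submodule.mem_span_singleton.1 ((hz _).1 hq0)
      have ht0 : t ≠ 0 := by
        rintro rfl
        rw [zero_smul] at ht
        exact hs0 ht.symm
      refine rk_le_c (s := s') (fun x => ?_) hg ?_
      · rw [hz, ← ht, Submodule.span_singleton_smul_eq (IsUnit.mk0 t ht0)]
      · intro w hw
        exact hk _ ((mem_lcs_map hπ).2 ⟨w, hw, rfl⟩)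
    · have hc1 : 1 ≤ c' := by
        by_contra h
        have h0 : c' = 0 := by omega
        subst h0
        have := hc.1
        rw [zero_add] at this
        rw [this, LieSubmodule.mem_bot] at hz1
        exact hz0 hz1
      rw [raiBound_drop hc1, raiBound_same (by omega) (by omega) hmn]
      ring

/-- the quotient map as a Lie algebra morphism -/
def quo (I : LieIdeal K L) : L →ₗ⁅K⁆ (L ⧸ I) :=
  { (LieSubmodule.Quotient.mk' I : L →ₗ[K] (L ⧸ I)) with
    map_lie' := fun {x y} => LieSubmodule.Quotient.mk_bracket I x y }

theorem quo_surjective (I : LieIdeal K L) : Function.Surjective (quo I) :=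
  LieSubmodule.Quotient.surjective_mk' I

theorem quo_eq_zero (I : LieIdeal K L) (x : L) : quo I x = 0 ↔ x ∈ I :=
  LieSubmodule.Quotient.mk_eq_zero I

end cls

theorem upper {K F : Type} [Field K] [LieRing F] [LieAlgebra K F] (m : ℕ) :
    ∀ (L : Type) [LieRing L] [LieAlgebra K L] [FiniteDimensional K L] (n c : ℕ)
      (π : F →ₗ⁅K⁆ L), Function.Surjective π → Module.finrank K L = n → lieDerivedDim K L = m →
      lieNilpotencyClass K L c → ∃ k : ℕ, mrk π = (k : Cardinal) ∧ (k : ℤ) ≤ raiBound n m c := by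
  induction m with
  | zero =>
    intro L _ _ _ n c π hπ hn hm hc
    have hab : lowerCentralSeries K L L 1 = ⊥ := by
      rw [← LieSubmodule.toSubmodule_inj, LieSubmodule.bot_toSubmodule]
      exact Submodule.finrank_eq_zero.1 hm
    have hc1 : c ≤ 1 := by
      by_contra h
      exact hc.2 1 (by omega) hab
    have h := mrk_abelian hπ hab
    rw [hn] at h
    obtain ⟨k, hk⟩ := Cardinal.lt_aleph0.1 (h.trans_lt (Cardinal.natCast_lt_aleph0))
    refine ⟨k, hk, ?_⟩
    rw [hk, Nat.cast_le] at h
    have h2 : raiBound n 0 c = ((n * (n - 1) / 2 : ℕ) : ℤ) := by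
      unfold raiBound
      rw [Finset.Icc_eq_empty (by omega)]
      rcases n with _ | n
      · simp
      · push_cast [Nat.add_sub_cancel]
        simp only [Finset.sum_empty, sub_zero, add_zero, add_sub_cancel_right]
        rw [mul_comm]
    rw [h2]
    exact_mod_cast h
  | succ m ih =>
    intro L _ _ _ n c π hπ hn hm hc
    have hab : lowerCentralSeries K L L 1 ≠ ⊥ := by
      intro h
      unfold lieDerivedDim at hm
      rw [h] at hm
      have h0 := (finrank_bot K L).symm.trans hm
      omega
    have hc2 : 2 ≤ c := by
      by_contra h
      apply hab
      rw [eq_bot_iff, ← hc.1]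
      exact antitone_lowerCentralSeries K L L (by omega)
    obtain ⟨c, rfl⟩ := Nat.exists_eq_add_of_le' hc2
    have hne := hc.2 (c + 1) (by omega)
    rw [Ne, LieSubmodule.eq_bot_iff] at hne
    push Not at hne
    obtain ⟨z, hzm, hz0⟩ := hne
    have hcen : ∀ x : L, ⁅z, x⁆ = 0 := by
      intro x
      have := lie_mem_lcs' hzm x
      rw [show c + 1 + 1 = c + 2 by ring, hc.1, LieSubmodule.mem_bot] at this
      exact this
    have hz1 : z ∈ lowerCentralSeries K L L 1 :=
      antitone_lowerCentralSeries K L L (show 1 ≤ c + 1 by omega) hzm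
    let I : LieIdeal K L :=
      { Submodule.span K {z} with
        lie_mem := by
          intro x y hy
          obtain ⟨t, rfl⟩ := Submodule.mem_span_singleton.1 hy
          rw [← lie_skew, smul_lie, hcen, smul_zero, neg_zero]
          exact zero_mem (Submodule.span K {z}) }
    have hz : ∀ x : L, quo I x = 0 ↔ x ∈ Submodule.span K {z} := fun x => quo_eq_zero I x
    have hex : ∃ k, lowerCentralSeries K (L ⧸ I) (L ⧸ I) k = ⊥ := by
      refine ⟨c + 2, (lcs_quot_bot (quo_surjective I) _).2 ?_⟩
      intro y hy
      rw [hc.1, LieSubmodule.mem_bot] at hy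
      rw [hy, map_zero]
    obtain ⟨c', hc'⟩ : ∃ c', lieNilpotencyClass K (L ⧸ I) c' := by
      classical
      exact ⟨Nat.find hex, Nat.find_spec hex, fun k hk => Nat.find_min hex hk⟩
    have hn' := finrank_quot (quo_surjective I) hz0 hz
    have hm' := derived_quot (quo_surjective I) hz0 hz hz1
    obtain ⟨k', hk', hb'⟩ := ih (L ⧸ I) (n - 1) c' ((quo I).comp π)
      ((quo_surjective I).comp hπ) (by omega) (by omega) hc'
    obtain ⟨e, δ, he, hδ, hR⟩ := step hπ (quo_surjective I) hz0 hz hcen hz1 hn hm hc hc'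
    obtain ⟨e', rfl⟩ := Cardinal.lt_aleph0.1 (hδ.trans_lt (Cardinal.natCast_lt_aleph0))
    rw [Nat.cast_le] at hδ
    rw [hk'] at he
    have hlt : mrk π < Cardinal.aleph0 := by
      refine lt_of_le_of_lt (self_le_add_right (mrk π) 1) ?_
      rw [he, ← Nat.cast_add]
      exact Cardinal.natCast_lt_aleph0
    obtain ⟨k, hk⟩ := Cardinal.lt_aleph0.1 hlt
    refine ⟨k, hk, ?_⟩
    rw [hk] at he
    have he2 : k + 1 = k' + e' := by exact_mod_cast he
    simp only [Nat.add_sub_cancel] at hR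
    omega

section indep
variable {K F G L : Type} [Field K] [LieRing F] [LieAlgebra K F] [LieRing G] [LieAlgebra K G]
  [LieRing L] [LieAlgebra K L]

theorem comR_map {π : F →ₗ⁅K⁆ L} {ρ : G →ₗ⁅K⁆ L} (φ : F →ₗ⁅K⁆ G) (hφ : ∀ x, ρ (φ x) = π x)
    {x : F} (hx : x ∈ comR π) : φ x ∈ comR ρ := by
  have : comR π ≤ (comR ρ).comap (φ : F →ₗ[K] G) := by
    apply comR_le
    intro r f hr
    change φ ⁅r, f⁆ ∈ comR ρ
    rw [LieHom.map_lie]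
    exact lie_mem_comR (by rw [hφ, hr]) _
  exact this hx

theorem capR_map {π : F →ₗ⁅K⁆ L} {ρ : G →ₗ⁅K⁆ L} (φ : F →ₗ⁅K⁆ G) (hφ : ∀ x, ρ (φ x) = π x)
    {x : F} (hx : x ∈ capR π) : φ x ∈ capR ρ := by
  rw [mem_capR] at hx ⊢
  refine ⟨by rw [hφ, hx.1], ?_⟩
  have : (lowerCentralSeries K F F 1).toSubmodule ≤
      (lowerCentralSeries K G G 1).toSubmodule.comap (φ : F →ₗ[K] G) := by
    apply lcs_one_le
    intro a b
    change φ ⁅a, b⁆ ∈ lowerCentralSeries K G G 1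
    rw [LieHom.map_lie]
    exact lie_mem_lcs_one _ _
  exact this hx.2

theorem sub_mem_comR {π : F →ₗ⁅K⁆ L} (φ : F →ₗ⁅K⁆ F) (hφ : ∀ x, π (φ x) = π x)
    {x : F} (hx : x ∈ lowerCentralSeries K F F 1) : φ x - x ∈ comR π := by
  have : (lowerCentralSeries K F F 1).toSubmodule ≤
      (comR π).comap ((φ : F →ₗ[K] F) - LinearMap.id) := by
    apply lcs_one_le
    intro a b
    change φ ⁅a, b⁆ - ⁅a, b⁆ ∈ comR π
    have h : φ ⁅a, b⁆ - ⁅a, b⁆ = ⁅φ a - a, φ b⁆ + ⁅a, φ b - b⁆ := by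
      rw [LieHom.map_lie, sub_lie, lie_sub]; abel
    rw [h]
    exact add_mem (lie_mem_comR (by rw [map_sub, hφ, sub_self]) _)
      (lie_mem_comR' (by rw [map_sub, hφ, sub_self]) _)
  exact this hx

theorem mrk_le {π : F →ₗ⁅K⁆ L} {ρ : G →ₗ⁅K⁆ L} (φ : F →ₗ⁅K⁆ G) (hφ : ∀ x, ρ (φ x) = π x)
    (ψ : G →ₗ⁅K⁆ F) (hψ : ∀ x, π (ψ x) = ρ x) : mrk π ≤ mrk ρ := by
  unfold mrk rk
  let φ' : ↥(capR π) →ₗ[K] ↥(capR ρ) :=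
    (φ : F →ₗ[K] G).restrict (fun x hx => capR_map φ hφ hx)
  let f := Submodule.mapQ (Submodule.comap (capR π).subtype (comR π))
    (Submodule.comap (capR ρ).subtype (comR ρ)) φ' (fun x hx => comR_map φ hφ hx)
  refine LinearMap.rank_le_of_injective f ?_
  rw [← LinearMap.ker_eq_bot, LinearMap.ker_eq_bot']
  intro x hx
  induction x using Submodule.Quotient.induction_on with
  | H x =>
    change Submodule.Quotient.mk (φ' x) =
      (0 : ↥(capR ρ) ⧸ Submodule.comap (capR ρ).subtype (comR ρ)) at hx
    rw [Submodule.Quotient.mk_eq_zero] at hx ⊢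
    have h1 : φ x.1 ∈ comR ρ := hx
    have h2 : ψ (φ x.1) ∈ comR π := comR_map ψ hψ h1
    have h3 := sub_mem_comR (π := π) (ψ.comp φ) (fun y => by
      rw [LieHom.comp_apply, hψ, hφ]) (mem_capR.1 x.2).2
    have h4 := sub_mem h2 h3
    rw [LieHom.comp_apply, sub_sub_cancel] at h4
    exact h4

theorem exists_lift {X : Type} (π : FreeLieAlgebra K X →ₗ⁅K⁆ L) {ρ : G →ₗ⁅K⁆ L}
    (hρ : Function.Surjective ρ) :
    ∃ φ : FreeLieAlgebra K X →ₗ⁅K⁆ G, ∀ x, ρ (φ x) = π x := by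
  choose g hg using hρ
  let φ := FreeLieAlgebra.lift K (fun x => g (π (FreeLieAlgebra.of K x)))
  have h : ρ.comp φ = π := by
    apply FreeLieAlgebra.hom_ext
    intro x
    rw [LieHom.comp_apply, FreeLieAlgebra.lift_of_apply, hg]
  exact ⟨φ, fun x => by rw [← h]; rfl⟩

theorem mrk_indep {X Y : Type} {π : FreeLieAlgebra K X →ₗ⁅K⁆ L} {ρ : FreeLieAlgebra K Y →ₗ⁅K⁆ L}
    (hπ : Function.Surjective π) (hρ : Function.Surjective ρ) : mrk π = mrk ρ := by
  obtain ⟨φ, hφ⟩ := exists_lift π hρ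
  obtain ⟨ψ, hψ⟩ := exists_lift ρ hπ
  exact le_antisymm (mrk_le φ hφ ψ hψ) (mrk_le ψ hψ φ hφ)

theorem schur_eq {X : Type} (π : FreeLieAlgebra K X →ₗ⁅K⁆ L) :
    lieSchurMultiplierDim K X π = Cardinal.toNat (mrk π) := rfl

end indep

end RaiAux



/-- if `L` is `n`-dimensional nilpotent of class `c ≥ 3` with
`dim L² = m`, `dim M(L)` attains Rai's bound, and `I` is a one-dimensional ideal
contained in `Z(L) ∩ L²`, then `dim M(L/I)` attains the corresponding bound for `L/I`:
`dim M(L/I) = (1/2)(n−m−1)(n+m−2) − Σ_{i=2}^{min(n−m,c')} (n−m−i)` with `c' = cl(L/I)`. -/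
theorem quotient_attains_bound (K L : Type) [Field K] [LieRing L] [LieAlgebra K L]
    [FiniteDimensional K L] (n m c : ℕ) (hc3 : 3 ≤ c)
    (hn : Module.finrank K L = n) (hm : lieDerivedDim K L = m)
    (hc : lieNilpotencyClass K L c)
    (hM : ∃ (X : Type) (π : FreeLieAlgebra K X →ₗ⁅K⁆ L), Function.Surjective π ∧
      (lieSchurMultiplierDim K X π : ℤ) = raiBound n m c)
    (I : LieIdeal K L) (hI1 : Module.finrank K ↥I = 1)
    (hIZ : I ≤ LieAlgebra.center K L)
    (hID : I ≤ LieModule.lowerCentralSeries K L L 1) :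
    ∀ c' : ℕ, lieNilpotencyClass K (L ⧸ I) c' →
      ∀ (Y : Type) (ρ : FreeLieAlgebra K Y →ₗ⁅K⁆ (L ⧸ I)), Function.Surjective ρ →
        (lieSchurMultiplierDim K Y ρ : ℤ) =
          ((n : ℤ) - m - 1) * ((n : ℤ) + m - 2) / 2
            - ∑ i ∈ Finset.Icc 2 (min (n - m) c'), ((n : ℤ) - m - (i : ℤ)) := by

  intro c' hc' Y ρ hρ
  obtain ⟨X, π, hπ, hMd⟩ := hM
  obtain ⟨⟨z, hzI⟩, hz0', hzspan⟩ := finrank_eq_one_iff'.1 hI1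
  have hz0 : z ≠ 0 := fun h => hz0' (Subtype.ext h)
  have hz : ∀ x : L, RaiAux.quo I x = 0 ↔ x ∈ Submodule.span K {z} := by
    intro x
    rw [RaiAux.quo_eq_zero, Submodule.mem_span_singleton]
    constructor
    · intro hx
      obtain ⟨t, ht⟩ := hzspan ⟨x, hx⟩
      exact ⟨t, congrArg Subtype.val ht⟩
    · rintro ⟨t, rfl⟩
      exact I.smul_mem t hzI
  have hcen : ∀ x : L, ⁅z, x⁆ = 0 := by
    intro x
    rw [← lie_skew, (LieModule.mem_maxTrivSubmodule K L L z).1 (hIZ hzI) x, neg_zero]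
  have hz1 := hID hzI
  have hq := RaiAux.quo_surjective I
  have hn' := RaiAux.finrank_quot hq hz0 hz
  have hm' := RaiAux.derived_quot hq hz0 hz hz1
  obtain ⟨k, hk, -⟩ := RaiAux.upper m L n c π hπ hn hm hc
  obtain ⟨k', hk', hb'⟩ := RaiAux.upper (m - 1) (L ⧸ I) (n - 1) c' ((RaiAux.quo I).comp π)
    (hq.comp hπ) (by omega) (by omega) hc'
  obtain ⟨e, δ, he, hδ, hR⟩ := RaiAux.step hπ hq hz0 hz hcen hz1 hn hm hc hc'
  obtain ⟨e', rfl⟩ := Cardinal.lt_aleph0.1 (hδ.trans_lt (Cardinal.natCast_lt_aleph0))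
  rw [Nat.cast_le] at hδ
  rw [hk, hk'] at he
  have he2 : k + 1 = k' + e' := by exact_mod_cast he
  rw [RaiAux.schur_eq, hk, Cardinal.toNat_natCast] at hMd
  rw [RaiAux.schur_eq, ← RaiAux.mrk_indep (π := (RaiAux.quo I).comp π) (hq.comp hπ) hρ, hk', Cardinal.toNat_natCast]
  have hfin : raiBound (n - 1) (m - 1) c' = ((n : ℤ) - m - 1) * ((n : ℤ) + m - 2) / 2
            - ∑ i ∈ Finset.Icc 2 (min (n - m) c'), ((n : ℤ) - m - (i : ℤ)) := by
    obtain ⟨a, rfl⟩ := Nat.exists_eq_add_of_le' (show 1 ≤ n by omega)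
    obtain ⟨b, rfl⟩ := Nat.exists_eq_add_of_le' (show 1 ≤ m by omega)
    unfold raiBound
    simp only [Nat.add_sub_cancel, Nat.add_sub_add_right]
    push_cast
    have h1 : ((a : ℤ) + 1 - (b + 1) - 1) * (a + 1 + (b + 1) - 2) = (a - b - 1) * (a + b) := by
      ring
    have h2 : ∀ i : ℕ, (a : ℤ) + 1 - (b + 1) - i = a - b - i := fun i => by ring
    simp only [h1, h2]
  rw [← hfin]
  omega
end
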